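/- (Infinitesimal rigidity of polytope frameworks; Alexandrov, Whiteley) Let P be a polytope of dimension d ≥ 3 in ℝ^d with vertex set V(P), fix for each 2-dimensional face of P a triangulation using only its vertices, and let E be the set of edges of P together with the diagonals of these triangulations. If w : V(P) → ℝ^d satisfies ⟨w(u) − w(v), u − v⟩ = 0 for every {u,v} ∈ E, then there exist a skew-symmetric linear map S : ℝ^d → ℝ^d and a vector b ∈ ℝ^d such that w(v) = S(v) + b for every vertex v of P. -/

import Mathlib

open Classical Polynomial

section PolytopeDefs

variable {V : Type*} [AddCommGroup V] [Module ℝ V]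

/-- A polytope: the convex hull of finitely many points. -/
def IsPolytope (P : Set V) : Prop := ∃ S : Finset V, P = convexHull ℝ (S : Set V)

/-- Faces of a polytope (or of a cone): the set itself, the empty face, and the
sets of maximizers of linear functionals (equivalently, intersections with
supporting hyperplanes). -/
def IsFace (P F : Set V) : Prop :=
  F = P ∨ F = ∅ ∨ ∃ l : V →ₗ[ℝ] ℝ, F = {x | x ∈ P ∧ ∀ y ∈ P, l y ≤ l x}

/-- Dimension of a polytope: the dimension of its affine span, with the
convention `pdim ∅ = -1`. -/
noncomputable def pdim (P : Set V) : ℤ :=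
  if P = ∅ then -1 else (Module.finrank ℝ (affineSpan ℝ P).direction : ℤ)

/-- The `g`-truncation: from the toric `h`-polynomial of a `d`-dimensional
polytope to its toric `g`-polynomial, via `g_k = h_k - h_{k-1}` for
`0 ≤ k ≤ d/2`, with `h_{-1} = 0`. -/
noncomputable def truncG (d : ℤ) (h : Polynomial ℚ) : Polynomial ℚ :=
  ∑ k ∈ Finset.range (d.toNat / 2 + 1),
    Polynomial.C (h.coeff k - if k = 0 then 0 else h.coeff (k - 1)) * Polynomial.X ^ k

/-- Fuelled recursion computing the toric `h`-polynomial of the interval `[F,G]`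
of a face lattice (with `F` playing the role of the empty face):
`h([F,G],t) = ∑_{F ≤ G' < G} g([F,G'],t) · (t-1)^{dim G - dim G' - 1}`. -/
noncomputable def relHAux : ℕ → Set V → Set V → Polynomial ℚ
  | 0, _, _ => 1
  | n + 1, F, G =>
      if G = F then 1
      else ∑ᶠ G' ∈ {G' : Set V | IsFace G G' ∧ F ⊆ G' ∧ G' ≠ G},
        truncG (pdim G' - pdim F - 1) (relHAux n F G') *
          (Polynomial.X - 1) ^ (pdim G - pdim G' - 1).toNat

/-- The toric `h`-polynomial of the interval `[F,G]` in a face lattice. -/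
noncomputable def relH (F G : Set V) : Polynomial ℚ := relHAux (pdim G + 1).toNat F G

/-- The toric `g`-polynomial of the interval `[F,G]` in a face lattice;
`relG F P` is the polynomial `g(P/F, t)`. -/
noncomputable def relG (F G : Set V) : Polynomial ℚ :=
  truncG (pdim G - pdim F - 1) (relH F G)

/-- The toric `h`-polynomial `h(P,t)` of a polytope `P`. -/
noncomputable def toricH (P : Set V) : Polynomial ℚ := relH ∅ P

/-- The toric `g`-polynomial `g(P,t)` of a polytope `P`. -/
noncomputable def toricG (P : Set V) : Polynomial ℚ := relG ∅ P

end PolytopeDefs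
section FrameworkDefs

variable {d : ℕ}

/-- A triangulation of a 2-dimensional face `G` using only its vertices: a
finite collection of affinely independent triples of vertices of `G` whose
triangles cover `G` and such that any two triangles meet in the convex hull of
their common vertices. -/
def IsTriangulation (G : Set (Fin d → ℝ)) (T : Finset (Finset (Fin d → ℝ))) : Prop :=
  (∀ t ∈ T, t.card = 3 ∧ (∀ v ∈ t, IsFace G {v}) ∧
    AffineIndependent ℝ (fun x : (t : Set (Fin d → ℝ)) => (x : Fin d → ℝ))) ∧
  (⋃ t ∈ T, convexHull ℝ (t : Set (Fin d → ℝ))) = G ∧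
  (∀ t ∈ T, ∀ t' ∈ T,
    convexHull ℝ (t : Set (Fin d → ℝ)) ∩ convexHull ℝ (t' : Set (Fin d → ℝ)) =
      convexHull ℝ ((t ∩ t' : Finset (Fin d → ℝ)) : Set (Fin d → ℝ)))

/-- `{u,v}` is an edge of the framework associated to the polytope `P` and the
chosen triangulations `T` of its 2-faces: an edge of `P`, or an edge/diagonal
of the triangulation of a 2-dimensional face of `P`. -/
def FrameEdge (P : Set (Fin d → ℝ)) (T : Set (Fin d → ℝ) → Finset (Finset (Fin d → ℝ)))
    (u v : Fin d → ℝ) : Prop :=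
  u ≠ v ∧ (IsFace P (segment ℝ u v) ∨
    ∃ G : Set (Fin d → ℝ), IsFace P G ∧ pdim G = 2 ∧ ∃ t ∈ T G, u ∈ t ∧ v ∈ t)

end FrameworkDefs


/-! graph lemma -/
section GraphLemma
variable {ι : Type*}

noncomputable def Lam (V : Finset ι) (c : ι → ι → ℝ) (l g : ι → ℝ) (u : ι) : ℝ :=
  ∑ x ∈ V, c u x * (g x - g u * l x / l u)

lemma Lam_symm (V : Finset ι) (c : ι → ι → ℝ) (hc : ∀ u x, c u x = c x u) (l g h : ι → ℝ) :
    ∑ u ∈ V, Lam V c l g u * h u = ∑ u ∈ V, Lam V c l h u * g u := by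
  have e1 : ∀ g h : ι → ℝ, ∑ u ∈ V, Lam V c l g u * h u
      = ∑ u ∈ V, ∑ x ∈ V, c u x * (g x * h u) - ∑ u ∈ V, ∑ x ∈ V, c u x * (g u * h u * l x / l u) := by
    intro g h
    rw [← Finset.sum_sub_distrib]
    refine Finset.sum_congr rfl fun u _ => ?_
    rw [Lam, Finset.sum_mul, ← Finset.sum_sub_distrib]
    refine Finset.sum_congr rfl fun x _ => ?_
    ring
  rw [e1 g h, e1 h g, Finset.sum_comm (f := fun u x => c u x * (g x * h u))]
  congr 1
  · refine Finset.sum_congr rfl fun u _ => Finset.sum_congr rfl fun x _ => ?_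
    rw [hc]; ring
  · refine Finset.sum_congr rfl fun u _ => Finset.sum_congr rfl fun x _ => ?_
    ring

lemma Lam_neg (V : Finset ι) (c : ι → ι → ℝ) (hc : ∀ u x, c u x = c x u)
    (hc0 : ∀ u x, 0 ≤ c u x) (l g : ι → ℝ) (hl : ∀ u x, c u x ≠ 0 → l u ≠ 0)
    (hg : ∀ u x, c u x ≠ 0 → l u * l x < 0 → g u * l x = g x * l u) :
    ∑ u ∈ V, Lam V c l g u * g u ≤ 0 ∧
      (∑ u ∈ V, Lam V c l g u * g u = 0 → ∀ u ∈ V, Lam V c l g u = 0) := by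
  have e1 : ∑ u ∈ V, Lam V c l g u * g u =
      ∑ u ∈ V, ∑ x ∈ V, c u x * (g x - g u * l x / l u) * g u := by
    refine Finset.sum_congr rfl fun u _ => ?_
    rw [Lam, Finset.sum_mul]
  have e2 : 2 * ∑ u ∈ V, Lam V c l g u * g u =
      ∑ u ∈ V, ∑ x ∈ V, (c u x * (g x - g u * l x / l u) * g u
        + c x u * (g u - g x * l u / l x) * g x) := by
    simp_rw [Finset.sum_add_distrib]
    rw [two_mul, e1]
    congr 1
    exact Finset.sum_comm
  have e3 : ∀ u x, c u x ≠ 0 → (c u x * (g x - g u * l x / l u) * g u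
        + c x u * (g u - g x * l u / l x) * g x) =
        - (c u x * (g u * l x - g x * l u) ^ 2 / (l u * l x)) := by
    intro u x h
    have h1 := hl u x h
    have h2 := hl x u (by rwa [hc])
    rw [← hc u x]
    field_simp
    ring
  have e4 : ∀ u x, (c u x * (g x - g u * l x / l u) * g u
        + c x u * (g u - g x * l u / l x) * g x) ≤ 0 := by
    intro u x
    by_cases h : c u x = 0
    · rw [← hc u x, h]; simp
    · rw [e3 u x h]
      have h1 := hl u x h
      have h2 := hl x u (by rwa [hc])
      rcases lt_or_gt_of_ne (mul_ne_zero h1 h2) with h3 | h3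
      · rw [hg u x h h3]; simp
      · have := hc0 u x
        have : 0 ≤ c u x * (g u * l x - g x * l u) ^ 2 / (l u * l x) := by positivity
        linarith
  have e5 : ∑ u ∈ V, Lam V c l g u * g u ≤ 0 := by
    have : ∑ u ∈ V, ∑ x ∈ V, (c u x * (g x - g u * l x / l u) * g u
        + c x u * (g u - g x * l u / l x) * g x) ≤ 0 :=
      Finset.sum_nonpos fun u _ => Finset.sum_nonpos fun x _ => e4 u x
    linarith
  refine ⟨e5, fun h0 u hu => ?_⟩
  rw [h0, mul_zero] at e2
  have e6 := (Finset.sum_eq_zero_iff_of_nonpos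
    (fun u _ => Finset.sum_nonpos fun x _ => e4 u x)).1 e2.symm u hu
  have e7 := (Finset.sum_eq_zero_iff_of_nonpos (fun x _ => e4 u x)).1 e6
  refine Finset.sum_eq_zero fun x hx => ?_
  by_cases h : c u x = 0
  · simp [h]
  · have h1 := hl u x h
    have h2 := hl x u (by rwa [hc])
    have := e7 x hx
    rw [e3 u x h] at this
    have h3 : g u * l x - g x * l u = 0 := by
      have h4 := mul_ne_zero h1 h2
      field_simp at this
      simpa [h] using this
    have : g x - g u * l x / l u = 0 := by
      field_simp; linarith
    rw [this, mul_zero]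

end GraphLemma


/-! three-dimensional vector algebra -/
abbrev E3 := Fin 3 → ℝ
def dt (a b : E3) : ℝ := a 0 * b 0 + a 1 * b 1 + a 2 * b 2
def cr (a b : E3) : E3 :=
  ![a 1 * b 2 - a 2 * b 1, a 2 * b 0 - a 0 * b 2, a 0 * b 1 - a 1 * b 0]
def dd (a b c : E3) : ℝ := dt a (cr b c)

@[simp] lemma cr_0 (a b : E3) : cr a b 0 = a 1 * b 2 - a 2 * b 1 := rfl
@[simp] lemma cr_1 (a b : E3) : cr a b 1 = a 2 * b 0 - a 0 * b 2 := rfl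
@[simp] lemma cr_2 (a b : E3) : cr a b 2 = a 0 * b 1 - a 1 * b 0 := rfl

lemma ext3 {a b : E3} (h0 : a 0 = b 0) (h1 : a 1 = b 1) (h2 : a 2 = b 2) : a = b := by
  funext i; fin_cases i <;> assumption

lemma dt_add_r (a b c : E3) : dt a (b + c) = dt a b + dt a c := by simp [dt]; ring
lemma dt_sub_r (a b c : E3) : dt a (b - c) = dt a b - dt a c := by simp [dt]; ring
lemma dt_smul_r (r : ℝ) (a b : E3) : dt a (r • b) = r * dt a b := by simp [dt]; ring
lemma dt_add_l (a b c : E3) : dt (a + b) c = dt a c + dt b c := by simp [dt]; ring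
lemma dt_sub_l (a b c : E3) : dt (a - b) c = dt a c - dt b c := by simp [dt]; ring
lemma dt_smul_l (r : ℝ) (a b : E3) : dt (r • a) b = r * dt a b := by simp [dt]; ring
lemma dt_zero_r (a : E3) : dt a 0 = 0 := by simp [dt]
lemma dt_zero_l (a : E3) : dt 0 a = 0 := by simp [dt]
lemma dt_comm (a b : E3) : dt a b = dt b a := by simp [dt]; ring
lemma dt_neg_r (a b : E3) : dt a (-b) = - dt a b := by simp [dt]; ring
lemma dt_sum_r (a : E3) {ι : Type*} (s : Finset ι) (f : ι → E3) :
    dt a (∑ i ∈ s, f i) = ∑ i ∈ s, dt a (f i) := by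
  induction s using Finset.induction_on with
  | empty => simp [dt_zero_r]
  | insert i s hi ih => rw [Finset.sum_insert hi, Finset.sum_insert hi, dt_add_r, ih]

lemma dt_self_pos {a : E3} (h : a ≠ 0) : 0 < dt a a := by
  by_contra hc
  apply h
  simp only [dt] at hc
  have h0 := mul_self_nonneg (a 0)
  have h1 := mul_self_nonneg (a 1)
  have h2 := mul_self_nonneg (a 2)
  apply ext3 <;> exact mul_self_eq_zero.1 (by linarith)

lemma cramer3 (u v x y : E3) :
    dd u v x • y = dd y v x • u + dd u y x • v + dd u v y • x := by
  apply ext3 <;> simp [dd, dt] <;> ring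

lemma cramer3' {v u x : E3} (hd : dd v u x ≠ 0) (y : E3) :
    y = (dd y u x / dd v u x) • v + (dd v y x / dd v u x) • u + (dd v u y / dd v u x) • x :=
  calc y = (dd v u x)⁻¹ • (dd v u x • y) := by rw [smul_smul, inv_mul_cancel₀ hd, one_smul]
    _ = (dd v u x)⁻¹ • (dd y u x • v + dd v y x • u + dd v u y • x) := by rw [cramer3]
    _ = _ := by simp only [smul_add, smul_smul, div_eq_inv_mul]

lemma dd_eq_zero_dep {u v x : E3} (h : dd u v x = 0) :
    ∃ a b c : ℝ, (a ≠ 0 ∨ b ≠ 0 ∨ c ≠ 0) ∧ a • u + b • v + c • x = 0 := by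
  have hM : (Matrix.of ![u, v, x]).det = 0 := by
    rw [Matrix.det_fin_three]; simp [dd, dt] at h ⊢; linarith
  obtain ⟨k, hk, hk0⟩ := Matrix.exists_vecMul_eq_zero_iff.2 hM
  refine ⟨k 0, k 1, k 2, ?_, ?_⟩
  · by_contra hc
    push Not at hc
    exact hk (ext3 hc.1 hc.2.1 hc.2.2)
  · have := fun j => congrFun hk0 j
    simp [Matrix.vecMul, dotProduct, Fin.sum_univ_three] at this
    apply ext3 <;> simp [this]

lemma dd_lin (u v x : E3) (a b c : ℝ) (p q : E3) :
    dd p q (a • u + b • v + c • x) = a * dd p q u + b * dd p q v + c * dd p q x := by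
  simp [dd, dt]; ring

lemma dd_self1 (u v : E3) : dd u v u = 0 := by simp [dd, dt]; ring
lemma dd_self2 (u v : E3) : dd u v v = 0 := by simp [dd, dt]; ring
lemma dd_self3 (u v : E3) : dd u u v = 0 := by simp [dd, dt]; ring
lemma dd_swap12 (u v x : E3) : dd v u x = - dd u v x := by simp [dd, dt]; ring
lemma dd_swap23 (u v x : E3) : dd u x v = - dd u v x := by simp [dd, dt]; ring
lemma dd_eq (u v x : E3) : dt (cr u v) x = dd u v x := by simp [dd, dt]; ring

lemma indep3 {u v x : E3} (h : dd u v x ≠ 0) {a b c a' b' c' : ℝ}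
    (e : a • u + b • v + c • x = a' • u + b' • v + c' • x) : a = a' ∧ b = b' ∧ c = c' := by
  have h1 : dd v x (a • u + b • v + c • x) = dd v x (a' • u + b' • v + c' • x) := by rw [e]
  have h2 : dd u x (a • u + b • v + c • x) = dd u x (a' • u + b' • v + c' • x) := by rw [e]
  have h3 : dd u v (a • u + b • v + c • x) = dd u v (a' • u + b' • v + c' • x) := by rw [e]
  simp only [dd_lin, dd_self1, dd_self2, mul_zero, add_zero, zero_add] at h1 h2 h3
  have e1 : dd v x u = dd u v x := by simp [dd, dt]; ring
  rw [e1] at h1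
  rw [dd_swap23] at h2
  refine ⟨mul_right_cancel₀ h h1, ?_, mul_right_cancel₀ h h3⟩
  apply mul_right_cancel₀ h; linarith

/-! fans -/
structure Fan3 (V : Finset E3) (T : Finset (Finset E3)) : Prop where
  sub : ∀ t ∈ T, t ⊆ V
  card : ∀ t ∈ T, t.card = 3
  inj : ∀ t ∈ T, ∀ t' ∈ T, ∀ α β : E3 → ℝ, (∀ x, 0 ≤ α x) → (∀ x, 0 ≤ β x) →
    (∀ x, x ∉ t → α x = 0) → (∀ x, x ∉ t' → β x = 0) →
    ∑ x ∈ V, α x • x = ∑ x ∈ V, β x • x → α = β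
  cov : ∀ y : E3, ∃ t ∈ T, ∃ α : E3 → ℝ, (∀ x, 0 ≤ α x) ∧ (∀ x, x ∉ t → α x = 0) ∧
    ∑ x ∈ V, α x • x = y
  nrm : ∀ t ∈ T, ∃ n : E3, (∀ x ∈ t, dt n x = 1) ∧ ∀ x ∈ V, dt n x ≤ 1
  vtx : ∀ v ∈ V, ∃ e : E3, dt e v = 1 ∧ ∀ u ∈ V, u ≠ v → dt e u < 1

namespace Fan3
variable {V : Finset E3} {T : Finset (Finset E3)}

lemma tri_ne {v u x : E3} (h : ({v, u, x} : Finset E3).card = 3) : v ≠ u ∧ v ≠ x ∧ u ≠ x := by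
  refine ⟨?_, ?_, ?_⟩ <;> rintro rfl
  · have : ({v, v, x} : Finset E3) = {v, x} := by simp
    rw [this] at h; have := Finset.card_le_two (a := v) (b := x); omega
  · have : ({v, u, v} : Finset E3) = {v, u} := by ext; simp; tauto
    rw [this] at h; have := Finset.card_le_two (a := v) (b := u); omega
  · have : ({v, u, u} : Finset E3) = {v, u} := by simp
    rw [this] at h; have := Finset.card_le_two (a := v) (b := u); omega

lemma ne (h : Fan3 V T) {v u x : E3} (ht : {v, u, x} ∈ T) : v ≠ u ∧ v ≠ x ∧ u ≠ x :=
  tri_ne (h.card _ ht)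

lemma supp_sum (h : Fan3 V T) {v u x : E3} (ht : {v, u, x} ∈ T) (α : E3 → ℝ)
    (hα : ∀ y, y ∉ ({v, u, x} : Finset E3) → α y = 0) :
    ∑ y ∈ V, α y • y = α v • v + α u • u + α x • x := by
  obtain ⟨h1, h2, h3⟩ := h.ne ht
  rw [← Finset.sum_subset (h.sub _ ht)]
  · rw [Finset.sum_insert (by simp [h1, h2]), Finset.sum_insert (by simp [h3]),
      Finset.sum_singleton, add_assoc]
  · intro y _ hy
    rw [hα y hy, zero_smul]

noncomputable def tf (v u x : E3) (a b c : ℝ) : E3 → ℝ :=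
  fun y => if y = v then a else if y = u then b else if y = x then c else 0

lemma key' (h : Fan3 V T) {v u x v' u' x' : E3} (ht : {v, u, x} ∈ T) (ht' : {v', u', x'} ∈ T)
    {a b c a' b' c' : ℝ} (ha : 0 ≤ a) (hb : 0 ≤ b) (hc : 0 ≤ c)
    (ha' : 0 ≤ a') (hb' : 0 ≤ b') (hc' : 0 ≤ c')
    (e : a • v + b • u + c • x = a' • v' + b' • u' + c' • x') :
    tf v u x a b c = tf v' u' x' a' b' c' := by
  have nn : ∀ (v u x : E3) (a b c : ℝ), 0 ≤ a → 0 ≤ b → 0 ≤ c → ∀ y, 0 ≤ tf v u x a b c y := by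
    intro v u x a b c ha hb hc y; unfold tf; split_ifs <;> simp [*]
  have sp : ∀ (v u x : E3) (a b c : ℝ), ∀ y, y ∉ ({v, u, x} : Finset E3) →
      tf v u x a b c y = 0 := by
    intro v u x a b c y hy; simp at hy; simp [tf, hy]
  apply h.inj _ ht _ ht' _ _ (nn _ _ _ _ _ _ ha hb hc) (nn _ _ _ _ _ _ ha' hb' hc')
    (sp _ _ _ _ _ _) (sp _ _ _ _ _ _)
  rw [h.supp_sum ht _ (sp _ _ _ _ _ _), h.supp_sum ht' _ (sp _ _ _ _ _ _)]
  obtain ⟨h1, h2, h3⟩ := h.ne ht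
  obtain ⟨h1', h2', h3'⟩ := h.ne ht'
  simpa [tf, h1.symm, h2.symm, h3.symm, h1'.symm, h2'.symm, h3'.symm] using e

lemma key (h : Fan3 V T) {v u x v' u' x' : E3} (ht : {v, u, x} ∈ T) (ht' : {v', u', x'} ∈ T)
    {a b c a' b' c' : ℝ} (ha : 0 ≤ a) (hb : 0 ≤ b) (hc : 0 ≤ c)
    (ha' : 0 ≤ a') (hb' : 0 ≤ b') (hc' : 0 ≤ c')
    (e : a • v + b • u + c • x = a' • v' + b' • u' + c' • x') :
    (0 < a → v ∈ ({v', u', x'} : Finset E3)) ∧ (0 < b → u ∈ ({v', u', x'} : Finset E3)) ∧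
      (0 < c → x ∈ ({v', u', x'} : Finset E3)) := by
  have hk := h.key' ht ht' ha hb hc ha' hb' hc' e
  obtain ⟨h1, h2, h3⟩ := h.ne ht
  have sp : ∀ y, y ∉ ({v', u', x'} : Finset E3) → tf v u x a b c y = 0 := by
    intro y hy; rw [hk]; simp at hy; simp [tf, hy]
  refine ⟨fun h0 => ?_, fun h0 => ?_, fun h0 => ?_⟩ <;> by_contra hn <;> have := sp _ hn <;>
    simp [tf, h1.symm, h2.symm, h3.symm] at this <;> linarith

lemma dd_ne (h : Fan3 V T) {v u x : E3} (ht : {v, u, x} ∈ T) : dd v u x ≠ 0 := by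
  intro h0
  obtain ⟨a, b, c, hne, e⟩ := dd_eq_zero_dep h0
  obtain ⟨h1, h2, h3⟩ := h.ne ht
  have hk := h.key' ht ht (le_max_right a 0) (le_max_right b 0) (le_max_right c 0)
    (le_max_right (-a) 0) (le_max_right (-b) 0) (le_max_right (-c) 0) (by
      have hm : ∀ r : ℝ, max r 0 = r + max (-r) 0 := by
        intro r; rcases le_total r 0 with hr | hr <;> simp [hr]
      rw [hm a, hm b, hm c]
      simp only [add_smul]
      have : ∀ p q r p' q' r' : E3, p + q + r = 0 →
        p + p' + (q + q') + (r + r') = p' + q' + r' := by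
          intro p q r p' q' r' h
          calc _ = (p + q + r) + (p' + q' + r') := by abel
            _ = _ := by rw [h, zero_add]
      exact this _ _ _ _ _ _ e)
  have q : ∀ r : ℝ, max r 0 = max (-r) 0 → r = 0 := by
    intro r hr
    rcases le_total r 0 with h | h
    · rw [max_eq_right h, max_eq_left (by linarith)] at hr; linarith
    · rw [max_eq_left h, max_eq_right (by linarith)] at hr; linarith
  have k1 := congrFun hk v
  have k2 := congrFun hk u
  have k3 := congrFun hk x
  simp only [tf, h1.symm, h2.symm, h3.symm, if_true, if_false] at k1 k2 k3
  have := q _ k1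
  have := q _ k2
  have := q _ k3
  tauto

lemma cov3 (h : Fan3 V T) (y : E3) : ∃ t ∈ T, ∀ v u x : E3, t = {v, u, x} →
    ∃ a b c : ℝ, 0 ≤ a ∧ 0 ≤ b ∧ 0 ≤ c ∧ a • v + b • u + c • x = y := by
  obtain ⟨t, ht, α, h0, h1, h2⟩ := h.cov y
  refine ⟨t, ht, ?_⟩
  rintro v u x rfl
  refine ⟨α v, α u, α x, h0 _, h0 _, h0 _, ?_⟩
  rw [← h2, h.supp_sum ht _ h1]

lemma lim_nonneg {p q : ℝ} {S : Set ℕ} (hS : S.Infinite)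
    (h : ∀ n ∈ S, 0 ≤ p + (1 / ((n : ℝ) + 1)) * q) : 0 ≤ p := by
  by_contra hp
  push Not at hp
  obtain ⟨N, hN⟩ := exists_nat_gt (|q| / (-p))
  obtain ⟨n, hn, hnN⟩ := hS.exists_gt N
  have h1 := h n hn
  have hn' : (N : ℝ) < n := by exact_mod_cast hnN
  have hnp : (0 : ℝ) < (n : ℝ) + 1 := by positivity
  have h2 : |q| < (n + 1 : ℝ) * (-p) := by
    rw [div_lt_iff₀ (by linarith)] at hN
    nlinarith
  have h3 := le_abs_self q
  have h4 : 0 ≤ (p + (1 / ((n : ℝ) + 1)) * q) * ((n : ℝ) + 1) := mul_nonneg h1 hnp.le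
  have h5 : (p + (1 / ((n : ℝ) + 1)) * q) * ((n : ℝ) + 1) = p * (n + 1) + q := by
    field_simp
  linarith

lemma germ (h : Fan3 V T) (y z : E3) : ∃ t ∈ T, ∀ v u x : E3, t = {v, u, x} →
    (∃ a b c : ℝ, 0 ≤ a ∧ 0 ≤ b ∧ 0 ≤ c ∧ a • v + b • u + c • x = y) ∧
    ∃ ε : ℝ, 0 < ε ∧
    ∃ a b c : ℝ, 0 ≤ a ∧ 0 ≤ b ∧ 0 ≤ c ∧ a • v + b • u + c • x = y + ε • z := by
  choose f hfT hf using fun n : ℕ => h.cov3 (y + (1 / ((n : ℝ) + 1)) • z)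
  let F : ℕ → T := fun n => ⟨f n, hfT n⟩
  obtain ⟨⟨t, ht⟩, hinf⟩ := Finite.exists_infinite_fiber F
  have hinf' : (F ⁻¹' {⟨t, ht⟩}).Infinite := Set.infinite_coe_iff.1 hinf
  have hF : ∀ n ∈ F ⁻¹' {⟨t, ht⟩}, f n = t := by
    intro n hn
    simpa [F] using hn
  refine ⟨t, ht, ?_⟩
  rintro v u x rfl
  have hd := h.dd_ne ht
  have hy : ∀ y : E3, y = (dd y u x / dd v u x) • v + (dd v y x / dd v u x) • u +
      (dd v u y / dd v u x) • x := by
    exact fun y => cramer3' hd y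
  have hall : ∀ n ∈ F ⁻¹' {⟨{v, u, x}, ht⟩},
      0 ≤ (dd y u x / dd v u x) + (1 / ((n : ℝ) + 1)) * (dd z u x / dd v u x) ∧
      0 ≤ (dd v y x / dd v u x) + (1 / ((n : ℝ) + 1)) * (dd v z x / dd v u x) ∧
      0 ≤ (dd v u y / dd v u x) + (1 / ((n : ℝ) + 1)) * (dd v u z / dd v u x) := by
    intro n hn
    obtain ⟨a, b, c, ha, hb, hc, e⟩ := hf n v u x (hF n hn)
    have e2 : a • v + b • u + c • x =
      ((dd y u x / dd v u x) + (1 / ((n : ℝ) + 1)) * (dd z u x / dd v u x)) • v +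
      ((dd v y x / dd v u x) + (1 / ((n : ℝ) + 1)) * (dd v z x / dd v u x)) • u +
      ((dd v u y / dd v u x) + (1 / ((n : ℝ) + 1)) * (dd v u z / dd v u x)) • x := by
      rw [e]
      nth_rewrite 1 [hy y]
      nth_rewrite 1 [hy z]
      module
    obtain ⟨e3, e4, e5⟩ := indep3 hd e2
    rw [← e3, ← e4, ← e5]
    exact ⟨ha, hb, hc⟩
  constructor
  · refine ⟨_, _, _, ?_, ?_, ?_, (hy y).symm⟩
    · exact lim_nonneg hinf' fun n hn => (hall n hn).1
    · exact lim_nonneg hinf' fun n hn => (hall n hn).2.1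
    · exact lim_nonneg hinf' fun n hn => (hall n hn).2.2
  · obtain ⟨n, hn⟩ := hinf'.nonempty
    refine ⟨1 / ((n : ℝ) + 1), by positivity, ?_⟩
    exact hf n v u x (hF n hn)

end Fan3


namespace Fan3
variable {V : Finset E3} {T : Finset (Finset E3)}

lemma rep1 (h : Fan3 V T) {t : Finset E3} (ht : t ∈ T) {v : E3} (hv : v ∈ t) :
    ∃ u x, t = {v, u, x} := by
  have h1 : (t.erase v).card = 2 := by rw [Finset.card_erase_of_mem hv, h.card t ht]
  obtain ⟨u, x, _, hux⟩ := Finset.card_eq_two.1 h1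
  exact ⟨u, x, by rw [← Finset.insert_erase hv, hux]⟩

lemma rep2 (h : Fan3 V T) {t : Finset E3} (ht : t ∈ T) {v u : E3} (hv : v ∈ t) (hu : u ∈ t)
    (hvu : v ≠ u) : ∃ x, t = {v, u, x} := by
  have hu' : u ∈ t.erase v := Finset.mem_erase.2 ⟨hvu.symm, hu⟩
  have h1 : ((t.erase v).erase u).card = 1 := by
    rw [Finset.card_erase_of_mem hu', Finset.card_erase_of_mem hv, h.card t ht]
  obtain ⟨x, hx⟩ := Finset.card_eq_one.1 h1
  exact ⟨x, by rw [← Finset.insert_erase hv, ← Finset.insert_erase hu', hx]⟩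

lemma rep0 (h : Fan3 V T) {t : Finset E3} (ht : t ∈ T) : ∃ v u x, t = {v, u, x} := by
  obtain ⟨v, u, x, -, -, -, e⟩ := Finset.card_eq_three.1 (h.card t ht)
  exact ⟨v, u, x, e⟩

lemma uniq (h : Fan3 V T) {v u x v' u' x' : E3} (ht : {v, u, x} ∈ T) (ht' : {v', u', x'} ∈ T)
    {a b c a' b' c' : ℝ} (ha : 0 < a) (hb : 0 < b) (hc : 0 < c)
    (ha' : 0 ≤ a') (hb' : 0 ≤ b') (hc' : 0 ≤ c')
    (e : a • v + b • u + c • x = a' • v' + b' • u' + c' • x') :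
    ({v, u, x} : Finset E3) = {v', u', x'} := by
  obtain ⟨k1, k2, k3⟩ := h.key ht ht' ha.le hb.le hc.le ha' hb' hc' e
  apply Finset.eq_of_subset_of_card_le
  · intro y hy
    simp only [Finset.mem_insert, Finset.mem_singleton] at hy
    rcases hy with rfl | rfl | rfl
    exacts [k1 ha, k2 hb, k3 hc]
  · rw [h.card _ ht, h.card _ ht']

lemma other_side (h : Fan3 V T) {v u x : E3} (ht : {v, u, x} ∈ T) :
    ∃ x', {v, u, x'} ∈ T ∧ dd v u x * dd v u x' < 0 := by
  obtain ⟨t', ht', hg⟩ := h.germ (v + u) (-x)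
  obtain ⟨h1, h2, h3⟩ := h.ne ht
  have hvu : v ∈ t' ∧ u ∈ t' := by
    obtain ⟨p, q, r, rfl⟩ := h.rep0 ht'
    obtain ⟨⟨a, b, c, ha, hb, hc, e⟩, -⟩ := hg p q r rfl
    have := h.key ht ht' (a := 1) (b := 1) (c := 0) (by norm_num) (by norm_num) le_rfl ha hb hc
      (by rw [e]; simp)
    exact ⟨this.1 one_pos, this.2.1 one_pos⟩
  obtain ⟨x', rfl⟩ := h.rep2 ht' hvu.1 hvu.2 h1
  refine ⟨x', ht', ?_⟩
  obtain ⟨-, ε, hε, a, b, c, ha, hb, hc, e⟩ := hg v u x' rfl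
  have e1 : dd v u (a • v + b • u + c • x') = dd v u (1 • v + 1 • u + (-ε) • x) := by
    rw [e]; congr 1; module
  have := dd_lin v u x 1 1 (-ε) v u
  simp only [one_smul] at e1 this
  rw [this, dd_lin] at e1
  simp only [dd_self1, dd_self2, mul_zero, zero_add] at e1
  have hd := h.dd_ne ht
  have hd' := h.dd_ne ht'
  by_contra hcon
  push Not at hcon
  have : c * (dd v u x * dd v u x') = - ε * (dd v u x) ^ 2 := by
    linear_combination dd v u x * e1
  have h4 : 0 < ε * (dd v u x) ^ 2 := by positivity
  have := mul_nonneg hc hcon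
  linarith

lemma same_side (h : Fan3 V T) {v u x y : E3} (ht : {v, u, x} ∈ T) (ht' : {v, u, y} ∈ T)
    (hp : 0 < dd v u x * dd v u y) : x = y := by
  have hd' := h.dd_ne ht'
  have e := cramer3' hd' x
  set α := dd x u y / dd v u y
  set β := dd v x y / dd v u y
  have hγ : 0 < dd v u x / dd v u y := by
    have : dd v u x / dd v u y = (dd v u x * dd v u y) / (dd v u y) ^ 2 := by
      field_simp
    rw [this]; positivity
  have hE := h.uniq ht ht' (a := 1 + |α| + |β|) (b := 1 + |α| + |β|) (c := 1)
    (a' := 1 + |α| + |β| + α) (b' := 1 + |α| + |β| + β) (c' := dd v u x / dd v u y)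
    (by positivity) (by positivity) one_pos
    (by have := neg_abs_le α; have := abs_nonneg β; linarith)
    (by have := neg_abs_le β; have := abs_nonneg α; linarith) hγ.le (by
      nth_rewrite 1 [e]
      module)
  have hx : x ∈ ({v, u, y} : Finset E3) := by rw [← hE]; simp
  simp only [Finset.mem_insert, Finset.mem_singleton] at hx
  obtain ⟨h1, h2, h3⟩ := h.ne ht
  rcases hx with hx | hx | hx
  · exact absurd hx.symm h2
  · exact absurd hx.symm h3
  · exact hx

noncomputable def nb (V : Finset E3) (T : Finset (Finset E3)) (v u : E3) : Finset E3 :=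
  V.filter fun x => {v, u, x} ∈ T

lemma mem_nb (h : Fan3 V T) {v u x : E3} : x ∈ nb V T v u ↔ {v, u, x} ∈ T := by
  simp only [nb, Finset.mem_filter, and_iff_right_iff_imp]
  intro ht
  exact h.sub _ ht (by simp)

lemma nb_pair (h : Fan3 V T) (v u : E3) : nb V T v u = ∅ ∨
    ∃ x x', x ≠ x' ∧ {v, u, x} ∈ T ∧ {v, u, x'} ∈ T ∧ 0 < dd v u x ∧ dd v u x' < 0 ∧
      nb V T v u = {x, x'} := by
  rcases Finset.eq_empty_or_nonempty (nb V T v u) with h0 | ⟨x, hx⟩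
  · exact Or.inl h0
  right
  rw [h.mem_nb] at hx
  have main : ∃ x x', {v, u, x} ∈ T ∧ {v, u, x'} ∈ T ∧ 0 < dd v u x ∧ dd v u x' < 0 := by
    obtain ⟨x', hx', hs⟩ := h.other_side hx
    rcases mul_neg_iff.1 hs with h1 | h1
    · exact ⟨x, x', hx, hx', h1.1, h1.2⟩
    · exact ⟨x', x, hx', hx, h1.2, h1.1⟩
  obtain ⟨x, x', hx, hx', h1, h2⟩ := main
  refine ⟨x, x', ?_, hx, hx', h1, h2, ?_⟩
  · rintro rfl; linarith
  · ext y
    rw [h.mem_nb, Finset.mem_insert, Finset.mem_singleton]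
    constructor
    · intro hy
      rcases lt_or_gt_of_ne (h.dd_ne hy) with h3 | h3
      · right; exact h.same_side hy hx' (mul_pos_of_neg_of_neg h3 h2)
      · left; exact h.same_side hy hx (mul_pos h3 h1)
    · rintro (rfl | rfl) <;> assumption

noncomputable def JJ (V : Finset E3) (T : Finset (Finset E3)) (f : Finset E3 → E3) (v u : E3) : E3 :=
  ∑ x ∈ V, if {v, u, x} ∈ T then Real.sign (dd v u x) • f {v, u, x} else 0

lemma JJ_symm (f : Finset E3 → E3) (v u : E3) : JJ V T f u v = - JJ V T f v u := by
  unfold JJ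
  rw [← Finset.sum_neg_distrib]
  refine Finset.sum_congr rfl fun x _ => ?_
  rw [Finset.insert_comm u v, dd_swap12, Real.sign_neg]
  split_ifs <;> simp

lemma JJ_sum (f : Finset E3 → E3) (v : E3) : ∑ u ∈ V, JJ V T f v u = 0 := by
  have h1 : ∑ u ∈ V, JJ V T f v u = - ∑ u ∈ V, JJ V T f v u := by
    unfold JJ
    nth_rewrite 1 [Finset.sum_comm]
    rw [← Finset.sum_neg_distrib]
    refine Finset.sum_congr rfl fun u _ => ?_
    rw [← Finset.sum_neg_distrib]
    refine Finset.sum_congr rfl fun x _ => ?_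
    have : ({v, x, u} : Finset E3) = {v, u, x} := by ext; simp; tauto
    rw [this, dd_swap23, Real.sign_neg]
    split_ifs <;> simp
  have h2 : (2 : ℝ) • ∑ u ∈ V, JJ V T f v u = 0 := by
    rw [two_smul]
    nth_rewrite 1 [h1]
    exact neg_add_cancel _
  exact (smul_eq_zero.1 h2).resolve_left two_ne_zero

lemma JJ_eq (f : Finset E3 → E3) (v u : E3) : JJ V T f v u =
    ∑ x ∈ nb V T v u, Real.sign (dd v u x) • f {v, u, x} := by
  rw [JJ, nb, Finset.sum_filter]

lemma JJ_empty (f : Finset E3 → E3) {v u : E3} (h : nb V T v u = ∅) : JJ V T f v u = 0 := by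
  rw [JJ_eq, h, Finset.sum_empty]

lemma JJ_pair (f : Finset E3 → E3) {v u x x' : E3} (hne : x ≠ x') (h1 : 0 < dd v u x)
    (h2 : dd v u x' < 0) (h : nb V T v u = {x, x'}) :
    JJ V T f v u = f {v, u, x} - f {v, u, x'} := by
  rw [JJ_eq, h, Finset.sum_pair hne, Real.sign_of_pos h1, Real.sign_of_neg h2]
  simp [sub_eq_add_neg]

lemma zero_of_dt {v u x z : E3} (hd : dd v u x ≠ 0) (h1 : dt z v = 0) (h2 : dt z u = 0)
    (h3 : dt z x = 0) : z = 0 := by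
  by_contra hz
  have := dt_self_pos hz
  have e := congrArg (dt z) (cramer3' hd z)
  rw [dt_add_r, dt_add_r, dt_smul_r, dt_smul_r, dt_smul_r, h1, h2, h3] at e
  linarith

lemma cr_par {d z : E3} (hz : z ≠ 0) (h : cr d z = 0) : ∃ r : ℝ, d = r • z := by
  have hp := dt_self_pos hz
  refine ⟨dt d z / dt z z, ?_⟩
  have h0 := congrFun h 0
  have h1 := congrFun h 1
  have h2 := congrFun h 2
  simp at h0 h1 h2
  have : dt z z • d = dt d z • z := by
    apply ext3 <;> simp [dt]
    · linear_combination z 2 * (-h1) + z 1 * h2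
    · linear_combination z 2 * (h0) + z 0 * (-h2)
    · linear_combination z 0 * (h1) + z 1 * (-h0)
  rw [div_eq_inv_mul, mul_smul, ← this, smul_smul, inv_mul_cancel₀ hp.ne', one_smul]

lemma flex_lam (h : Fan3 V T) (w : E3 → E3) (om b : Finset E3 → E3)
    (hr : ∀ t ∈ T, ∀ y ∈ t, w y = cr (om t) y + b t) (v u : E3) :
    ∃ r : ℝ, JJ V T om v u = r • (u - v) ∧ JJ V T b v u = r • cr v u ∧
      (nb V T v u = ∅ → r = 0) := by
  rcases h.nb_pair v u with h0 | ⟨x, x', hne, ht, ht', h1, h2, hnb⟩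
  · exact ⟨0, by simp [JJ_empty om h0], by simp [JJ_empty b h0], fun _ => rfl⟩
  · rw [JJ_pair om hne h1 h2 hnb, JJ_pair b hne h1 h2 hnb]
    have hvu := (h.ne ht).1
    have a1 := hr _ ht v (by simp)
    have a2 := hr _ ht u (by simp)
    have a3 := hr _ ht' v (by simp)
    have a4 := hr _ ht' u (by simp)
    set d := om {v, u, x}
    set d' := om {v, u, x'}
    set e := b {v, u, x}
    set e' := b {v, u, x'}
    have k1 : cr d v + e = cr d' v + e' := by rw [← a1, ← a3]
    have k2 : cr d u + e = cr d' u + e' := by rw [← a2, ← a4]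
    have p0 := congrFun k1 0
    have p1 := congrFun k1 1
    have p2 := congrFun k1 2
    have q0 := congrFun k2 0
    have q1 := congrFun k2 1
    have q2 := congrFun k2 2
    simp at p0 p1 p2 q0 q1 q2
    obtain ⟨r, hr⟩ := cr_par (d := d - d') (z := u - v) (sub_ne_zero.2 hvu.symm) (by
      apply ext3 <;> simp
      · linear_combination q0 - p0
      · linear_combination q1 - p1
      · linear_combination q2 - p2)
    refine ⟨r, hr, ?_, ?_⟩
    · have r0 := congrFun hr 0
      have r1 := congrFun hr 1
      have r2 := congrFun hr 2
      simp at r0 r1 r2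
      apply ext3 <;> simp
      · linear_combination p0 - v 2 * r1 + v 1 * r2
      · linear_combination p1 - v 0 * r2 + v 2 * r0
      · linear_combination p2 - v 1 * r0 + v 0 * r1
    · intro h0
      rw [hnb] at h0
      exact absurd h0 (Finset.insert_ne_empty _ _)

noncomputable def cc (T : Finset (Finset E3)) (v u x : E3) : ℝ :=
  if {v, u, x} ∈ T then 1 / |dd v u x| else 0

lemma lam_formula (h : Fan3 V T) {v : E3} {l : E3} (hl : dt l v = 0) {g : E3 → ℝ}
    {b : Finset E3 → E3} (hb : ∀ t ∈ T, v ∈ t → ∀ y ∈ t, dt (b t) y = g y) (hg : g v = 0)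
    {u : E3} (hlu : nb V T v u ≠ ∅ → dt l u ≠ 0) {r : ℝ} (hJ : JJ V T b v u = r • cr v u)
    (h0 : nb V T v u = ∅ → r = 0) : r = Lam V (cc T v) (dt l) g u := by
  have hL : Lam V (cc T v) (dt l) g u =
      ∑ x ∈ nb V T v u, (1 / |dd v u x|) * (g x - g u * dt l x / dt l u) := by
    rw [Lam, nb, Finset.sum_filter]
    refine Finset.sum_congr rfl fun x _ => ?_
    unfold cc
    split_ifs <;> simp
  rcases h.nb_pair v u with he | ⟨x, x', hne, ht, ht', h1, h2, hnb⟩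
  · rw [hL, he, Finset.sum_empty, h0 he]
  · rw [hL, hnb, Finset.sum_pair hne, abs_of_pos h1, abs_of_neg h2]
    have hlu' := hlu (by rw [hnb]; exact Finset.insert_ne_empty _ _)
    rw [JJ_pair b hne h1 h2 hnb] at hJ
    have form : ∀ y, {v, u, y} ∈ T → b {v, u, y} =
        (g u / dt l u) • l + ((g y - g u * dt l y / dt l u) / dd v u y) • cr v u := by
      intro y hy
      have hd := h.dd_ne hy
      rw [← sub_eq_zero]
      apply zero_of_dt hd
      · rw [dt_sub_l, hb _ hy (by simp) v (by simp), dt_add_l, dt_smul_l, dt_smul_l, hl, hg,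
          dd_eq, dd_self1]; ring
      · rw [dt_sub_l, hb _ hy (by simp) u (by simp), dt_add_l, dt_smul_l, dt_smul_l,
          dd_eq, dd_self2]; field_simp; ring
      · rw [dt_sub_l, hb _ hy (by simp) y (by simp), dt_add_l, dt_smul_l, dt_smul_l,
          dd_eq]; field_simp; ring
    rw [form x ht, form x' ht'] at hJ
    have hJ2 := congrArg (fun z => dt z x) hJ
    simp only [dt_sub_l, dt_add_l, dt_smul_l, dd_eq] at hJ2
    apply mul_right_cancel₀ h1.ne'
    rw [← hJ2]
    field_simp
    ring

end Fan3


namespace Fan3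
variable {V : Finset E3} {T : Finset (Finset E3)}

lemma vmem (h : Fan3 V T) {v : E3} (hv : v ∈ V) {p q r : E3} (ht : {p, q, r} ∈ T)
    {a b c : ℝ} (ha : 0 ≤ a) (hb : 0 ≤ b) (hc : 0 ≤ c) (e : a • p + b • q + c • r = v) :
    v ∈ ({p, q, r} : Finset E3) := by
  by_contra hn
  simp only [Finset.mem_insert, Finset.mem_singleton, not_or] at hn
  obtain ⟨m, hm1, hm⟩ := h.vtx v hv
  obtain ⟨n, hn1, hn2⟩ := h.nrm _ ht
  have sp := hm p (h.sub _ ht (by simp)) (Ne.symm hn.1)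
  have sq := hm q (h.sub _ ht (by simp)) (Ne.symm hn.2.1)
  have sr := hm r (h.sub _ ht (by simp)) (Ne.symm hn.2.2)
  have e1 := congrArg (dt m) e
  have e2 := congrArg (dt n) e
  simp only [dt_add_r, dt_smul_r, hm1] at e1 e2
  rw [hn1 p (by simp), hn1 q (by simp), hn1 r (by simp)] at e2
  have := hn2 v hv
  have t1 : a * (1 - dt m p) ≥ 0 := mul_nonneg ha (by linarith)
  have t2 : b * (1 - dt m q) ≥ 0 := mul_nonneg hb (by linarith)
  have t3 : c * (1 - dt m r) ≥ 0 := mul_nonneg hc (by linarith)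
  have z1 : a * (1 - dt m p) = 0 := by nlinarith
  have z2 : b * (1 - dt m q) = 0 := by nlinarith
  have z3 : c * (1 - dt m r) = 0 := by nlinarith
  have y1 := (mul_eq_zero.1 z1).resolve_right (by linarith)
  have y2 := (mul_eq_zero.1 z2).resolve_right (by linarith)
  have y3 := (mul_eq_zero.1 z3).resolve_right (by linarith)
  rw [y1, y2, y3] at e1
  linarith

lemma star_rep (h : Fan3 V T) {v : E3} (hv : v ∈ V) (a : E3) :
    ∃ u x, {v, u, x} ∈ T ∧ ∃ γ α β : ℝ, 0 ≤ α ∧ 0 ≤ β ∧ a = γ • v + α • u + β • x := by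
  obtain ⟨t, ht, hg⟩ := h.germ v a
  have hvt : v ∈ t := by
    obtain ⟨p, q, r, rfl⟩ := h.rep0 ht
    obtain ⟨⟨a, b, c, ha, hb, hc, e⟩, -⟩ := hg p q r rfl
    exact h.vmem hv ht ha hb hc e
  obtain ⟨u, x, rfl⟩ := h.rep1 ht hvt
  obtain ⟨-, ε, hε, a', b', c', ha, hb, hc, e⟩ := hg v u x rfl
  refine ⟨u, x, ht, (a' - 1) / ε, b' / ε, c' / ε, by positivity, by positivity, ?_⟩
  have : a = ε⁻¹ • (a' • v + b' • u + c' • x - v) := by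
    rw [e, add_sub_cancel_left, smul_smul, inv_mul_cancel₀ hε.ne', one_smul]
  rw [this]
  simp only [div_eq_inv_mul]
  module

lemma exists_dt_ne (F : Finset E3) (hF : ∀ x ∈ F, x ≠ 0) : ∃ m : E3, ∀ x ∈ F, dt m x ≠ 0 := by
  obtain ⟨f, hf⟩ := Module.exists_dual_forall_apply_ne_zero (K := ℝ) (M := E3)
    (ι := F) (v := fun x => x.1) (fun x => hF x.1 x.2)
  refine ⟨fun i => f (Pi.single i 1), fun x hx => ?_⟩
  have := hf ⟨x, hx⟩
  have e : f x = dt (fun i => f (Pi.single i 1)) x := by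
    conv_lhs => rw [← Finset.univ_sum_single x]
    rw [map_sum, Fin.sum_univ_three, dt]
    have : ∀ i, f (Pi.single i (x i)) = f (Pi.single i 1) * x i := by
      intro i
      have : (Pi.single i (x i) : E3) = x i • Pi.single i 1 := by
        ext j; by_cases hj : j = i
        · subst hj; simp
        · simp [hj]
      rw [this, map_smul, smul_eq_mul, mul_comm]
    rw [this, this, this]
  rwa [← e]

lemma set_pair {v u x u' x' : E3} (hvu : v ≠ u) (hvx : v ≠ x) (hux : u ≠ x)
    (e : ({v, u, x} : Finset E3) = {v, u', x'}) : (u = u' ∧ x = x') ∨ (u = x' ∧ x = u') := by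
  have h1 : u ∈ ({v, u', x'} : Finset E3) := by rw [← e]; simp
  have h2 : x ∈ ({v, u', x'} : Finset E3) := by rw [← e]; simp
  simp only [Finset.mem_insert, Finset.mem_singleton] at h1 h2
  rcases h1 with h1 | h1 | h1 <;> rcases h2 with h2 | h2 | h2 <;> simp_all

lemma crossing (h : Fan3 V T) {v : E3} (hv : v ∈ V) : ∃ l a uA xA uB xB : E3,
    ∃ γA αA βA γB αB βB : ℝ,
    dt l v = 0 ∧ (∀ u, nb V T v u ≠ ∅ → dt l u ≠ 0) ∧ a ≠ 0 ∧ dt a v = 0 ∧ dt l a = 0 ∧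
    {v, uA, xA} ∈ T ∧ {v, uB, xB} ∈ T ∧ 0 ≤ αA ∧ 0 ≤ βA ∧ 0 ≤ αB ∧ 0 ≤ βB ∧
    a = γA • v + αA • uA + βA • xA ∧ -a = γB • v + αB • uB + βB • xB ∧
    ∀ u x, {v, u, x} ∈ T → dt l u * dt l x < 0 →
      ((u = uA ∧ x = xA) ∨ (u = xA ∧ x = uA)) ∨ ((u = uB ∧ x = xB) ∨ (u = xB ∧ x = uB)) := by
  obtain ⟨m, hm⟩ := exists_dt_ne ((V.filter fun u => nb V T v u ≠ ∅).image (cr v)) (by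
    intro y hy
    obtain ⟨u, hu, rfl⟩ := Finset.mem_image.1 hy
    obtain ⟨x, hx⟩ := Finset.nonempty_iff_ne_empty.2 (Finset.mem_filter.1 hu).2
    rw [h.mem_nb] at hx
    intro h0
    apply h.dd_ne hx
    rw [← dd_eq, h0, dt_zero_l])
  set l := cr m v with hl
  have hlu : ∀ u, nb V T v u ≠ ∅ → dt l u ≠ 0 := by
    intro u hu
    have huV : u ∈ V := by
      obtain ⟨x, hx⟩ := Finset.nonempty_iff_ne_empty.2 hu
      rw [h.mem_nb] at hx
      exact h.sub _ hx (by simp)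
    have := hm (cr v u) (Finset.mem_image_of_mem _ (Finset.mem_filter.2 ⟨huV, hu⟩))
    rwa [hl, dd_eq]
  have hlv : dt l v = 0 := by rw [hl, dd_eq, dd_self2]
  obtain ⟨u0, x0, ht0, -⟩ := h.star_rep hv 0
  have hl0 : l ≠ 0 := by
    intro h0
    have := hlu u0 (by
      apply Finset.nonempty_iff_ne_empty.1
      exact ⟨x0, (h.mem_nb).2 ht0⟩)
    rw [h0, dt_zero_l] at this
    exact this rfl
  have hv0 : v ≠ 0 := by
    rintro rfl
    obtain ⟨e, he, -⟩ := h.vtx 0 hv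
    rw [dt_zero_r] at he
    linarith
  set a := cr l v with ha
  have hd : dd v a l ≠ 0 := by
    have : dd v a l = dt l l * dt v v - dt l v ^ 2 := by
      simp [ha, dd, dt]; ring
    rw [this, hlv]
    have := dt_self_pos hl0
    have := dt_self_pos hv0
    nlinarith [mul_pos (dt_self_pos hl0) (dt_self_pos hv0)]
  have ha0 : a ≠ 0 := by
    intro h0; rw [h0] at hd; apply hd; simp [dd, dt]
  have hav : dt a v = 0 := by rw [ha, dd_eq, dd_self2]
  have hla : dt l a = 0 := by rw [ha, dt_comm, dd_eq, dd_self1]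
  obtain ⟨uA, xA, htA, γA, αA, βA, hαA, hβA, eA⟩ := h.star_rep hv a
  obtain ⟨uB, xB, htB, γB, αB, βB, hαB, hβB, eB⟩ := h.star_rep hv (-a)
  refine ⟨l, a, uA, xA, uB, xB, γA, αA, βA, γB, αB, βB, hlv, hlu, ha0, hav, hla, htA, htB,
    hαA, hβA, hαB, hβB, eA, eB, ?_⟩
  intro u x ht hs
  have hq0 : dt l (|dt l x| • u + |dt l u| • x) = 0 := by
    rw [dt_add_r, dt_smul_r, dt_smul_r]
    rcases mul_neg_iff.1 hs with ⟨h1, h2⟩ | ⟨h1, h2⟩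
    · rw [abs_of_pos h1, abs_of_neg h2]; ring
    · rw [abs_of_neg h1, abs_of_pos h2]; ring
  have hu0 : dt l u ≠ 0 := by intro h0; rw [h0] at hs; simp at hs
  have hx0 : dt l x ≠ 0 := by intro h0; rw [h0] at hs; simp at hs
  have e := cramer3' hd (|dt l x| • u + |dt l u| • x)
  set q := |dt l x| • u + |dt l u| • x with hq
  set ρ := dd q a l / dd v a l
  set κ := dd v q l / dd v a l
  set c3 := dd v a q / dd v a l
  have hc3 : c3 = 0 := by
    have := congrArg (dt l) e
    simp only [dt_add_r, dt_smul_r, hlv, hla, hq0] at this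
    have h2 := dt_self_pos hl0
    have : c3 * dt l l = 0 := by linarith
    exact (mul_eq_zero.1 this).resolve_right h2.ne'
  rw [hc3, zero_smul, add_zero] at e
  obtain ⟨n1, n2, n3⟩ := h.ne ht
  rcases lt_trichotomy κ 0 with hκ | hκ | hκ
  · right
    apply set_pair n1 n2 n3
    refine h.uniq ht htB (a := 1 + |-κ * γB + ρ|) (b := |dt l x|) (c := |dt l u|)
      (a' := 1 + |-κ * γB + ρ| + (-κ * γB + ρ)) (b' := -κ * αB) (c' := -κ * βB)
      (by positivity) (by positivity) (by positivity)
      (by have := neg_abs_le (-κ * γB + ρ); linarith)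
      (mul_nonneg (by linarith) hαB) (mul_nonneg (by linarith) hβB) ?_
    rw [add_assoc, ← hq, e]
    have : κ • a = (-κ) • (-a) := by module
    rw [this, eB]; module
  · exfalso
    rw [hκ, zero_smul, add_zero] at e
    have := indep3 (h.dd_ne ht) (a := 0) (b := |dt l x|) (c := |dt l u|) (a' := ρ) (b' := 0) (c' := 0)
      (by rw [zero_smul, zero_add, zero_smul, add_zero, zero_smul, add_zero, ← hq, e])
    exact hx0 (abs_eq_zero.1 this.2.1)
  · left
    apply set_pair n1 n2 n3
    refine h.uniq ht htA (a := 1 + |κ * γA + ρ|) (b := |dt l x|) (c := |dt l u|)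
      (a' := 1 + |κ * γA + ρ| + (κ * γA + ρ)) (b' := κ * αA) (c' := κ * βA)
      (by positivity) (by positivity) (by positivity)
      (by have := neg_abs_le (κ * γA + ρ); linarith)
      (mul_nonneg (by linarith) hαA) (mul_nonneg (by linarith) hβA) ?_
    rw [add_assoc, ← hq, e, eA]; module

end Fan3


lemma Lam_lin {ι : Type*} (V : Finset ι) (c : ι → ι → ℝ) (l X p r : ι → ℝ) (t : ℝ) (u : ι) :
    Lam V c l (fun y => X y + t * p y - r y) u = Lam V c l X u + t * Lam V c l p u - Lam V c l r u := by
  simp only [Lam]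
  rw [Finset.mul_sum, ← Finset.sum_add_distrib, ← Finset.sum_sub_distrib]
  refine Finset.sum_congr rfl fun x _ => ?_
  ring

namespace Fan3
variable {V : Finset E3} {T : Finset (Finset E3)}

lemma JJ_const (h : Fan3 V T) (f : Finset E3 → E3) (c : E3) (v u : E3) :
    JJ V T (fun t => f t - c) v u = JJ V T f v u := by
  rcases h.nb_pair v u with h0 | ⟨x, x', hne, ht, ht', h1, h2, hnb⟩
  · rw [JJ_empty _ h0, JJ_empty _ h0]
  · rw [JJ_pair _ hne h1 h2 hnb, JJ_pair _ hne h1 h2 hnb]; abel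

lemma det_zero {α β g1 g2 l1 l2 : ℝ} (h : α ≠ 0 ∨ β ≠ 0) (h1 : α * g1 + β * g2 = 0)
    (h2 : α * l1 + β * l2 = 0) : g1 * l2 = g2 * l1 := by
  rcases h with h | h
  · apply mul_left_cancel₀ h
    linear_combination l2 * h1 - g2 * h2
  · apply mul_left_cancel₀ h
    linear_combination -l1 * h1 + g1 * h2

lemma exists_mu (h : Fan3 V T) (n : Finset E3 → E3)
    (hn1 : ∀ t ∈ T, ∀ x ∈ t, dt (n t) x = 1) (hn2 : ∀ t ∈ T, ∀ x ∈ V, dt (n t) x ≤ 1) (v u : E3) :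
    ∃ r : ℝ, 0 ≤ r ∧ JJ V T n v u = r • cr v u ∧ (nb V T v u = ∅ → r = 0) := by
  rcases h.nb_pair v u with h0 | ⟨x, x', hne, ht, ht', h1, h2, hnb⟩
  · exact ⟨0, le_rfl, by rw [JJ_empty _ h0, zero_smul], fun _ => rfl⟩
  · refine ⟨(1 - dt (n {v, u, x'}) x) / dd v u x, ?_, ?_, ?_⟩
    · have := hn2 _ ht' x (h.sub _ ht (by simp))
      exact div_nonneg (by linarith) h1.le
    · rw [JJ_pair _ hne h1 h2 hnb, ← sub_eq_zero]
      apply zero_of_dt h1.ne'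
      · rw [dt_sub_l, dt_sub_l, hn1 _ ht v (by simp), hn1 _ ht' v (by simp), dt_smul_l, dd_eq, dd_self1]
        ring
      · rw [dt_sub_l, dt_sub_l, hn1 _ ht u (by simp), hn1 _ ht' u (by simp), dt_smul_l, dd_eq, dd_self2]
        ring
      · rw [dt_sub_l, dt_sub_l, hn1 _ ht x (by simp), dt_smul_l, dd_eq]
        field_simp; ring
    · intro h0
      rw [hnb] at h0
      exact absurd h0 (Finset.insert_ne_empty _ _)

lemma local_thm (h : Fan3 V T) {v : E3} (hv : v ∈ V) (s : E3 → ℝ) (b : Finset E3 → E3)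
    (hb : ∀ t ∈ T, ∀ y ∈ t, dt (b t) y = s y) (lam : E3 → ℝ)
    (hlam : ∀ u, JJ V T b v u = lam u • cr v u) (hlam0 : ∀ u, nb V T v u = ∅ → lam u = 0)
    (heq : ∑ u ∈ V, lam u • (u - v) = 0) :
    ∑ u ∈ V, lam u * (s u - s v) ≤ 0 ∧
      (∑ u ∈ V, lam u * (s u - s v) = 0 → ∀ u ∈ V, lam u = 0) := by
  obtain ⟨l, a, uA, xA, uB, xB, γA, αA, βA, γB, αB, βB, hlv, hlu, ha0, hav, hla, htA, htB,
    hαA, hβA, hαB, hβB, eA, eB, hcross⟩ := h.crossing hv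
  obtain ⟨e, hev, he⟩ := h.vtx v hv
  have hnrm : ∀ t, ∃ n : E3, t ∈ T → (∀ x ∈ t, dt n x = 1) ∧ ∀ x ∈ V, dt n x ≤ 1 := by
    intro t
    by_cases ht : t ∈ T
    · obtain ⟨n, hn⟩ := h.nrm t ht
      exact ⟨n, fun _ => hn⟩
    · exact ⟨0, fun h => absurd h ht⟩
  choose n hn using hnrm
  choose mu hmu0 hmu hmue using h.exists_mu n (fun t ht => (hn t ht).1) (fun t ht => (hn t ht).2) v
  set X : E3 → ℝ := fun u => s u - s v * dt e u with hX
  set p : E3 → ℝ := fun u => 1 - dt e u with hp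
  have hcs : ∀ u x, cc T v u x = cc T v x u := by
    intro u x
    unfold cc
    have : ({v, x, u} : Finset E3) = {v, u, x} := by ext; simp; tauto
    rw [this, dd_swap23, abs_neg]
  have hc0 : ∀ u x, 0 ≤ cc T v u x := by
    intro u x; unfold cc; split_ifs <;> positivity
  have hcT : ∀ u x, cc T v u x ≠ 0 → {v, u, x} ∈ T := by
    intro u x hc
    by_contra hn
    exact hc (by unfold cc; rw [if_neg hn])
  have LX : ∀ u, lam u = Lam V (cc T v) (dt l) X u := by
    intro u
    refine h.lam_formula hlv (b := fun t => b t - s v • e) ?_ ?_ (hlu u) ?_ (hlam0 u)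
    · intro t ht _ y hy
      rw [dt_sub_l, dt_smul_l, hb t ht y hy]
    · simp [hX, hev]
    · rw [h.JJ_const, hlam]
  have Lp : ∀ u, mu u = Lam V (cc T v) (dt l) p u := by
    intro u
    refine h.lam_formula hlv (b := fun t => n t - e) ?_ ?_ (hlu u) ?_ (hmue u)
    · intro t ht _ y hy
      rw [dt_sub_l, (hn t ht).1 y hy]
    · simp [hp, hev]
    · rw [h.JJ_const, hmu]
  have La : ∀ τ : ℝ, ∀ u, 0 = Lam V (cc T v) (dt l) (fun y => τ * dt a y) u := by
    intro τ u
    refine h.lam_formula hlv (b := fun t => 0 - (- τ) • a) ?_ ?_ (hlu u) ?_ (fun _ => rfl)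
    · intro t ht _ y hy
      rw [dt_sub_l, dt_smul_l, dt_zero_l]; ring
    · simp [hav]
    · rw [h.JJ_const (fun _ => 0)]
      unfold JJ; simp
  have hppos : ∀ u ∈ V, u ≠ v → 0 < p u := by
    intro u hu huv
    have := he u hu huv
    simp only [hp]; linarith
  have hAne : αA ≠ 0 ∨ βA ≠ 0 := by
    by_contra hcon
    push Not at hcon
    rw [hcon.1, hcon.2, zero_smul, zero_smul, add_zero, add_zero] at eA
    have := dt_self_pos ha0
    nth_rewrite 2 [eA] at this
    rw [dt_smul_r, hav] at this
    simp at this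
  have hBne : αB ≠ 0 ∨ βB ≠ 0 := by
    by_contra hcon
    push Not at hcon
    rw [hcon.1, hcon.2, zero_smul, zero_smul, add_zero, add_zero] at eB
    have := dt_self_pos ha0
    have h2 := congrArg (dt a) eB
    rw [dt_smul_r, hav, dt_neg_r] at h2
    linarith
  have ppos : ∀ u x α β, {v, u, x} ∈ T → 0 ≤ α → 0 ≤ β → (α ≠ 0 ∨ β ≠ 0) →
      0 < α * p u + β * p x := by
    intro u x α β ht hα hβ hne
    obtain ⟨n1, n2, n3⟩ := h.ne ht
    have q1 := hppos u (h.sub _ ht (by simp)) n1.symm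
    have q2 := hppos x (h.sub _ ht (by simp)) n2.symm
    rcases hne with hne | hne
    · have := lt_of_le_of_ne hα hne.symm
      positivity
    · have := lt_of_le_of_ne hβ hne.symm
      positivity
  have pA := ppos uA xA αA βA htA hαA hβA hAne
  have pB := ppos uB xB αB βB htB hαB hβB hBne
  obtain ⟨t, ht⟩ : ∃ t : ℝ, t * ((αA * p uA + βA * p xA) + (αB * p uB + βB * p xB)) =
      - ((αA * X uA + βA * X xA) + (αB * X uB + βB * X xB)) :=
    ⟨- ((αA * X uA + βA * X xA) + (αB * X uB + βB * X xB)) /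
      ((αA * p uA + βA * p xA) + (αB * p uB + βB * p xB)), by
      rw [div_mul_cancel₀]; positivity⟩
  obtain ⟨τ, hτ⟩ : ∃ τ : ℝ, τ * dt a a =
      (αA * X uA + βA * X xA) + t * (αA * p uA + βA * p xA) :=
    ⟨_, div_mul_cancel₀ _ (dt_self_pos ha0).ne'⟩
  have aA : αA * dt a uA + βA * dt a xA = dt a a := by
    have := congrArg (dt a) eA
    simp only [dt_add_r, dt_smul_r, hav] at this
    linarith
  have aB : αB * dt a uB + βB * dt a xB = - dt a a := by
    have := congrArg (dt a) eB
    simp only [dt_add_r, dt_smul_r, dt_neg_r, hav] at this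
    linarith
  have lA : αA * dt l uA + βA * dt l xA = 0 := by
    have := congrArg (dt l) eA
    simp only [dt_add_r, dt_smul_r, hlv, hla] at this
    linarith
  have lB : αB * dt l uB + βB * dt l xB = 0 := by
    have := congrArg (dt l) eB
    simp only [dt_add_r, dt_smul_r, dt_neg_r, hlv, hla] at this
    linarith
  set g : E3 → ℝ := fun y => X y + t * p y - τ * dt a y with hg
  have gA : g uA * dt l xA = g xA * dt l uA := by
    apply det_zero hAne _ lA
    simp only [hg]
    linear_combination - hτ - τ * aA
  have gB : g uB * dt l xB = g xB * dt l uB := by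
    apply det_zero hBne _ lB
    simp only [hg]
    linear_combination hτ + ht - τ * aB
  have Lg : ∀ u, Lam V (cc T v) (dt l) g u = lam u + t * mu u := by
    intro u
    rw [hg, Lam_lin, ← LX, ← Lp, ← La]; ring
  have hneg := Lam_neg V (cc T v) hcs hc0 (dt l) g (by
    intro u x hc
    apply hlu u
    apply Finset.nonempty_iff_ne_empty.1
    exact ⟨x, (h.mem_nb).2 (hcT u x hc)⟩) (by
    intro u x hc hs
    rcases hcross u x (hcT u x hc) hs with (⟨rfl, rfl⟩ | ⟨rfl, rfl⟩) | (⟨rfl, rfl⟩ | ⟨rfl, rfl⟩)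
    · exact gA
    · exact gA.symm
    · exact gB
    · exact gB.symm)
  have s1 : ∑ u ∈ V, lam u * p u = 0 := by
    have := congrArg (dt e) heq
    rw [dt_sum_r, dt_zero_r] at this
    rw [← neg_eq_zero, ← this, ← Finset.sum_neg_distrib]
    refine Finset.sum_congr rfl fun u _ => ?_
    rw [dt_smul_r, dt_sub_r, hev]; simp only [hp]; ring
  have s2 : ∑ u ∈ V, mu u * X u = 0 := by
    rw [← s1]
    simp_rw [LX, Lp]
    exact Lam_symm V (cc T v) hcs (dt l) p X
  have s3 : ∑ u ∈ V, lam u * X u = ∑ u ∈ V, lam u * (s u - s v) := by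
    have : ∑ u ∈ V, lam u * X u = ∑ u ∈ V, lam u * (s u - s v) + s v * ∑ u ∈ V, lam u * p u := by
      rw [Finset.mul_sum, ← Finset.sum_add_distrib]
      refine Finset.sum_congr rfl fun u _ => ?_
      simp only [hX, hp]; ring
    rw [this, s1]; ring
  have s4 : ∑ u ∈ V, (lam u + t * mu u) * (τ * dt a u) = 0 := by
    simp_rw [← Lg]
    rw [Lam_symm V (cc T v) hcs]
    apply Finset.sum_eq_zero
    intro u _
    rw [← La]; ring
  have tot : ∑ u ∈ V, Lam V (cc T v) (dt l) g u * g u =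
      ∑ u ∈ V, lam u * (s u - s v) + t ^ 2 * ∑ u ∈ V, mu u * p u := by
    have : ∑ u ∈ V, Lam V (cc T v) (dt l) g u * g u =
      ∑ u ∈ V, lam u * X u + t * ∑ u ∈ V, lam u * p u + t * ∑ u ∈ V, mu u * X u
        + t ^ 2 * ∑ u ∈ V, mu u * p u - ∑ u ∈ V, (lam u + t * mu u) * (τ * dt a u) := by
      simp_rw [Finset.mul_sum, ← Finset.sum_add_distrib, ← Finset.sum_sub_distrib]
      refine Finset.sum_congr rfl fun u _ => ?_
      rw [Lg]; simp only [hg]; ring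
    rw [this, s1, s2, s4, s3]; ring
  have hnbv : nb V T v v = ∅ := by
    by_contra hcon
    obtain ⟨x, hx⟩ := Finset.nonempty_iff_ne_empty.2 hcon
    rw [h.mem_nb] at hx
    exact (h.ne hx).1 rfl
  have mup : ∀ u ∈ V, 0 ≤ mu u * p u := by
    intro u hu
    by_cases huv : u = v
    · rw [huv, hmue v hnbv]; simp
    · exact mul_nonneg (hmu0 u) (hppos u hu huv).le
  have hsum := Finset.sum_nonneg mup
  have hsq : 0 ≤ t ^ 2 * ∑ u ∈ V, mu u * p u := by positivity
  rw [tot] at hneg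
  refine ⟨by linarith [hneg.1], fun hC u hu => ?_⟩
  rw [hC] at hneg
  have z : t ^ 2 * ∑ u ∈ V, mu u * p u = 0 := by linarith [hneg.1]
  have zz := hneg.2 (by rw [z, add_zero]) u hu
  rw [Lg] at zz
  rcases mul_eq_zero.1 z with z | z
  · have : t = 0 := by simpa using z
    rw [this] at zz; linarith
  · have := (Finset.sum_eq_zero_iff_of_nonneg mup).1 z u hu
    by_cases huv : u = v
    · rw [huv, hlam0 v hnbv]
    · have := (mul_eq_zero.1 this).resolve_right (hppos u hu huv).ne'
      rw [this] at zz; linarith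

end Fan3


lemma rigid_tri {v u x : E3} (hd : dd v u x ≠ 0) (w : E3 → E3)
    (h1 : dt (w u - w v) (u - v) = 0) (h2 : dt (w x - w v) (x - v) = 0)
    (h3 : dt (w x - w u) (x - u) = 0) :
    ∃ om b : E3, w v = cr om v + b ∧ w u = cr om u + b ∧ w x = cr om x + b := by
  have idn : ∀ z a c : E3, dt (cr a c) (cr a c) • z = dt z (cr a c) • cr a c +
      dt z a • cr c (cr a c) + dt z c • cr (cr a c) a := by
    intro z a c
    apply ext3 <;> simp [dt] <;> ring
  set a := u - v with ha
  set c := x - v with hc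
  set N := cr a c with hN
  have hN0 : N ≠ 0 := by
    intro h0
    apply hd
    have : dd v u x = dt v N := by
      simp [hN, ha, hc, dd, dt]; ring
    rw [this, h0, dt_zero_r]
  have hD := (dt_self_pos hN0).ne'
  set z1 := w u - w v with hz1
  set z2 := w x - w v with hz2
  have h4 : dt z2 a = - dt z1 c := by
    have : w x - w u = z2 - z1 := by rw [hz1, hz2]; abel
    rw [this] at h3
    have : x - u = c - a := by rw [ha, hc]; abel
    rw [this] at h3
    simp only [dt_sub_l, dt_sub_r] at h3
    linarith
  set om : E3 := (dt N N)⁻¹ • (dt z2 N • a - dt z1 N • c + dt z1 c • N) with hom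
  have k1 : cr om a = z1 := by
    have : cr om a = (dt N N)⁻¹ • (dt N N • z1) := by
      rw [idn z1 a c, h1, ← hN]
      have : cr om a = (dt N N)⁻¹ • (dt z1 N • N + dt z1 c • cr N a) := by
        rw [hom]
        generalize (dt N N)⁻¹ = q
        generalize dt z1 N = q1
        generalize dt z2 N = q2
        generalize dt z1 c = q3
        rw [hN]
        apply ext3 <;> simp <;> ring
      rw [this]; module
    rw [this, smul_smul, inv_mul_cancel₀ hD, one_smul]
  have k2 : cr om c = z2 := by
    have : cr om c = (dt N N)⁻¹ • (dt N N • z2) := by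
      rw [idn z2 a c, h2, ← hN, h4]
      have : cr om c = (dt N N)⁻¹ • (dt z2 N • N + (- dt z1 c) • cr c N) := by
        rw [hom]
        generalize (dt N N)⁻¹ = q
        generalize dt z1 N = q1
        generalize dt z2 N = q2
        generalize dt z1 c = q3
        rw [hN]
        apply ext3 <;> simp <;> ring
      rw [this]; module
    rw [this, smul_smul, inv_mul_cancel₀ hD, one_smul]
  have cs : ∀ p q : E3, cr om (p - q) = cr om p - cr om q := by
    intro p q; apply ext3 <;> simp <;> ring
  refine ⟨om, w v - cr om v, by abel, ?_, ?_⟩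
  · rw [ha, cs, hz1] at k1
    have : w u = (w u - w v) + w v := by abel
    rw [this, ← k1]; abel
  · rw [hc, cs, hz2] at k2
    have : w x = (w x - w v) + w v := by abel
    rw [this, ← k2]; abel

namespace Fan3
variable {V : Finset E3} {T : Finset (Finset E3)}

lemma all_lam (h : Fan3 V T) (w : E3 → E3) (om b : Finset E3 → E3)
    (hr : ∀ t ∈ T, ∀ y ∈ t, w y = cr (om t) y + b t) {v u x x' : E3} (ht : {v, u, x} ∈ T)
    (ht' : {v, u, x'} ∈ T) : om {v, u, x} = om {v, u, x'} ∧ b {v, u, x} = b {v, u, x'} := by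
  choose lam l1 l2 l3 using h.flex_lam w om b hr
  have hb : ∀ t ∈ T, ∀ y ∈ t, dt (b t) y = dt (w y) y := by
    intro t ht y hy
    rw [hr t ht y hy, dt_add_l, dd_eq, dd_self2, zero_add]
  have loc := fun v (hv : v ∈ V) => h.local_thm hv (fun y => dt (w y) y) b hb (lam v) (l2 v) (l3 v) (by
    rw [← JJ_sum (V := V) (T := T) om v]
    exact Finset.sum_congr rfl fun u _ => (l1 v u).symm)
  have hsym : ∀ v u, lam u v = lam v u := by
    intro v u
    by_cases hvu : u = v
    · rw [hvu]
    have := JJ_symm (V := V) (T := T) om v u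
    rw [l1, l1] at this
    have h2 : (lam v u - lam u v) • (u - v) = 0 := by
      have e : lam u v • (v - u) = - (lam u v • (u - v)) := by module
      rw [e] at this
      rw [sub_smul, ← neg_inj.1 this, sub_self]
    have := (smul_eq_zero.1 h2).resolve_right (sub_ne_zero.2 hvu)
    linarith
  have tot : ∑ v ∈ V, ∑ u ∈ V, lam v u * (dt (w u) u - dt (w v) v) = 0 := by
    have : ∑ v ∈ V, ∑ u ∈ V, lam v u * (dt (w u) u - dt (w v) v) =
        - ∑ v ∈ V, ∑ u ∈ V, lam v u * (dt (w u) u - dt (w v) v) := by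
      nth_rewrite 1 [Finset.sum_comm]
      rw [← Finset.sum_neg_distrib]
      refine Finset.sum_congr rfl fun v _ => ?_
      rw [← Finset.sum_neg_distrib]
      refine Finset.sum_congr rfl fun u _ => ?_
      rw [hsym v u]; ring
    linarith
  have hz := (Finset.sum_eq_zero_iff_of_nonpos fun v hv => (loc v hv).1).1 tot
  have hlam : ∀ v ∈ V, ∀ u ∈ V, lam v u = 0 := fun v hv => (loc v hv).2 (hz v hv)
  have hl0 := hlam v (h.sub _ ht (by simp)) u (h.sub _ ht (by simp))
  have m1 := l1 v u
  have m2 := l2 v u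
  rw [hl0, zero_smul] at m1 m2
  rcases h.nb_pair v u with h0 | ⟨y, y', hne, hy, hy', h1, h2, hnb⟩
  · have := (h.mem_nb).2 ht
    rw [h0] at this
    exact absurd this (Finset.notMem_empty _)
  · rw [JJ_pair _ hne h1 h2 hnb, sub_eq_zero] at m1 m2
    have i1 := (h.mem_nb).2 ht
    have i2 := (h.mem_nb).2 ht'
    rw [hnb] at i1 i2
    simp only [Finset.mem_insert, Finset.mem_singleton] at i1 i2
    rcases i1 with rfl | rfl <;> rcases i2 with rfl | rfl <;> simp [m1, m2]

def cone (t : Finset E3) : Set E3 :=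
  {y | ∀ p q r, t = {p, q, r} → 0 ≤ dd y q r / dd p q r}

lemma cone_closed (t : Finset E3) : IsClosed (cone t) := by
  have : cone t = ⋂ p, ⋂ q, ⋂ r, ⋂ (_ : t = {p, q, r}), {y | 0 ≤ dd y q r / dd p q r} := by
    ext y; simp [cone]
  rw [this]
  refine isClosed_iInter fun p => isClosed_iInter fun q => isClosed_iInter fun r =>
    isClosed_iInter fun _ => ?_
  apply isClosed_le continuous_const
  apply Continuous.div_const
  unfold dd dt
  fun_prop

lemma cone_rep (h : Fan3 V T) {p q r y : E3} (ht : {p, q, r} ∈ T) (hy : y ∈ cone {p, q, r}) :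
    ∃ a b c : ℝ, 0 ≤ a ∧ 0 ≤ b ∧ 0 ≤ c ∧ a • p + b • q + c • r = y := by
  have hd := h.dd_ne ht
  refine ⟨_, _, _, hy p q r rfl, ?_, ?_, (cramer3' hd y).symm⟩
  · have := hy q p r (Finset.insert_comm _ _ _)
    rw [dd_swap12 p y r, dd_swap12 p q r, neg_div_neg_eq] at this
    exact this
  · have := hy r p q (by ext; simp; tauto)
    have e : ∀ z, dd z p q = dd p q z := by intro z; simp [dd, dt]; ring
    rwa [e, e] at this

lemma rep_cone (h : Fan3 V T) {t : Finset E3} (ht : t ∈ T) {y : E3}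
    (hr : ∀ v u x : E3, t = {v, u, x} →
      ∃ a b c : ℝ, 0 ≤ a ∧ 0 ≤ b ∧ 0 ≤ c ∧ a • v + b • u + c • x = y) : y ∈ cone t := by
  intro p q r e
  obtain ⟨a, b, c, ha, hb, hc, rfl⟩ := hr p q r e
  have hd : dd p q r ≠ 0 := h.dd_ne (e ▸ ht)
  have : dd (a • p + b • q + c • r) q r = a * dd p q r := by
    simp [dd, dt]; ring
  rw [this, mul_div_assoc, div_self hd, mul_one]
  exact ha

lemma perm_rep {p q r v u x y : E3} (hc : ({p, q, r} : Finset E3).card = 3)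
    (e : ({p, q, r} : Finset E3) = {v, u, x})
    (hr : ∃ a b c : ℝ, 0 ≤ a ∧ 0 ≤ b ∧ 0 ≤ c ∧ a • p + b • q + c • r = y) :
    ∃ a b c : ℝ, 0 ≤ a ∧ 0 ≤ b ∧ 0 ≤ c ∧ a • v + b • u + c • x = y := by
  obtain ⟨n1, n2, n3⟩ := tri_ne hc
  obtain ⟨m1, m2, m3⟩ := tri_ne (e ▸ hc)
  obtain ⟨a, b, c, ha, hb, hc, rfl⟩ := hr
  have h1 : p ∈ ({v, u, x} : Finset E3) := by rw [← e]; simp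
  have h2 : q ∈ ({v, u, x} : Finset E3) := by rw [← e]; simp
  have h3 : r ∈ ({v, u, x} : Finset E3) := by rw [← e]; simp
  simp only [Finset.mem_insert, Finset.mem_singleton] at h1 h2 h3
  rcases h1 with h1 | h1 | h1 <;> rcases h2 with h2 | h2 | h2 <;> rcases h3 with h3 | h3 | h3 <;>
    first
    | exact absurd (h1.trans h2.symm) n1
    | exact absurd (h1.trans h3.symm) n2
    | exact absurd (h2.trans h3.symm) n3
    | (rw [h1, h2, h3]
       first
       | exact ⟨a, b, c, ha, hb, hc, by module⟩
       | exact ⟨a, c, b, ha, hc, hb, by module⟩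
       | exact ⟨b, a, c, hb, ha, hc, by module⟩
       | exact ⟨c, a, b, hc, ha, hb, by module⟩
       | exact ⟨b, c, a, hb, hc, ha, by module⟩
       | exact ⟨c, b, a, hc, hb, ha, by module⟩)

lemma conn (h : Fan3 V T) {D : Type*} (f : Finset E3 → D)
    (hf : ∀ v u x x', {v, u, x} ∈ T → {v, u, x'} ∈ T → f {v, u, x} = f {v, u, x'})
    {t0 t1 : Finset E3} (h0 : t0 ∈ T) (h1 : t1 ∈ T) : f t0 = f t1 := by
  by_contra hne
  obtain ⟨p0, q0, r0, e0⟩ := h.rep0 h0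
  obtain ⟨p, q, r, e1⟩ := h.rep0 h1
  subst e0 e1
  have hd := h.dd_ne h1
  have hd0 := h.dd_ne h0
  set y0 := p0 + q0 + r0 with hy0
  have hy00 : y0 ≠ 0 := by
    intro hz
    apply hd0
    have : dd p0 q0 r0 = dd y0 q0 r0 := by simp [hy0, dd, dt]; ring
    rw [this, hz]; simp [dd, dt]
  set NN := (V.image (cr y0)).filter (fun z => z ≠ 0)
  obtain ⟨m, hm⟩ := exists_dt_ne NN (fun x hx => (Finset.mem_filter.1 hx).2)
  have em := cramer3' hd m
  set a := dd m q r / dd p q r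
  set b := dd p m r / dd p q r
  set c := dd p q m / dd p q r
  obtain ⟨M, hM, hMn⟩ := (Set.Ioi_infinite (|a| + |b| + |c|)).exists_notMem_finset
    (NN.image fun N => - dt m N / dt N (p + q + r))
  have hM : |a| + |b| + |c| < M := hM
  set y1 := M • (p + q + r) + m with hy1
  have hgen : ∀ v ∈ V, cr y0 v ≠ 0 → dd y0 v y1 ≠ 0 := by
    intro v hv hc hz
    have hN : cr y0 v ∈ NN := Finset.mem_filter.2 ⟨Finset.mem_image_of_mem _ hv, hc⟩
    have hmN := hm _ hN
    rw [← dd_eq, hy1, dt_add_r, dt_smul_r] at hz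
    apply hMn
    refine Finset.mem_image.2 ⟨_, hN, ?_⟩
    have : dt (cr y0 v) (p + q + r) ≠ 0 := by
      intro h0; rw [h0, dt_comm] at hz; apply hmN; linarith
    rw [div_eq_iff this, dt_comm m]
    linarith
  have hpar : cr y0 y1 ≠ 0 := by
    intro hz
    have : ∀ v ∈ V, cr y0 v = 0 := by
      intro v hv
      by_contra hc
      apply hgen v hv hc
      have : dd y0 v y1 = - dt (cr y0 y1) v := by simp [dd, dt]; ring
      rw [this, hz, dt_zero_l, neg_zero]
    apply hd0
    obtain ⟨c1, e1⟩ := cr_par hy00 (d := p0) (by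
      have := this p0 (h.sub _ h0 (by simp))
      have e : cr p0 y0 = - cr y0 p0 := by apply ext3 <;> simp <;> ring
      rw [e, this, neg_zero])
    obtain ⟨c2, e2⟩ := cr_par hy00 (d := q0) (by
      have := this q0 (h.sub _ h0 (by simp))
      have e : cr q0 y0 = - cr y0 q0 := by apply ext3 <;> simp <;> ring
      rw [e, this, neg_zero])
    rw [e1, e2]
    simp [dd, dt]; ring
  -- points of the segment are not on rays
  have hnoray : ∀ y ∈ segment ℝ y0 y1, ∀ v ∈ V, ∀ k : ℝ, 0 ≤ k → y ≠ k • v := by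
    rintro y ⟨α, β, hα, hβ, hαβ, rfl⟩ v hv k hk hy
    by_cases hc : cr y0 v = 0
    · have e : cr y0 (α • y0 + β • y1) = β • cr y0 y1 := by
        apply ext3 <;> simp <;> ring
      have e2 : cr y0 (k • v) = k • cr y0 v := by
        apply ext3 <;> simp <;> ring
      rw [hy, e2, hc, smul_zero] at e
      have hb0 : β = 0 := (smul_eq_zero.1 e.symm).resolve_right hpar
      have ha1 : α = 1 := by linarith
      rw [hb0, ha1, one_smul, zero_smul, add_zero] at hy
      have hkp : 0 < k := by
        rcases hk.lt_or_eq with h | h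
        · exact h
        · rw [← h, zero_smul] at hy; exact absurd hy hy00
      have hv' : k⁻¹ • p0 + k⁻¹ • q0 + k⁻¹ • r0 = v := by
        rw [← smul_add, ← smul_add, ← hy0, hy, smul_smul, inv_mul_cancel₀ hkp.ne', one_smul]
      have hvm := h.vmem hv h0 (by positivity) (by positivity) (by positivity) hv'
      have hki : k⁻¹ ≠ 0 := by positivity
      simp only [Finset.mem_insert, Finset.mem_singleton] at hvm
      rcases hvm with rfl | rfl | rfl
      · have := indep3 hd0 (a' := 1) (b' := 0) (c' := 0) (by rw [hv']; simp)
        exact hki this.2.1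
      · have := indep3 hd0 (a' := 0) (b' := 1) (c' := 0) (by rw [hv']; simp)
        exact hki this.1
      · have := indep3 hd0 (a' := 0) (b' := 0) (c' := 1) (by rw [hv']; simp)
        exact hki this.1
    · have e : dd y0 (α • y0 + β • y1) y1 = 0 := by simp [dd, dt]; ring
      have e2 : dd y0 (k • v) y1 = k * dd y0 v y1 := by simp [dd, dt]; ring
      rw [hy, e2] at e
      have hk0 := (mul_eq_zero.1 e).resolve_right (hgen v hv hc)
      rw [hk0, zero_smul] at hy
      have e : cr y0 (α • y0 + β • y1) = β • cr y0 y1 := by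
        apply ext3 <;> simp <;> ring
      have e3 : cr y0 0 = 0 := by apply ext3 <;> simp
      rw [hy, e3] at e
      have hb0 : β = 0 := (smul_eq_zero.1 e.symm).resolve_right hpar
      have ha1 : α = 1 := by linarith
      rw [hb0, ha1, one_smul, zero_smul, add_zero] at hy
      exact hy00 hy
  have hpc : IsPreconnected (segment ℝ y0 y1) := (convex_segment y0 y1).isPreconnected
  rw [isPreconnected_closed_iff] at hpc
  have cl : ∀ S : Finset (Finset E3), IsClosed (⋃ t ∈ S, cone t) := fun S =>
    S.finite_toSet.isClosed_biUnion fun t _ => cone_closed t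
  obtain ⟨y, hy, hyA, hyB⟩ := hpc (⋃ t ∈ T.filter (fun t => f t = f {p0, q0, r0}), cone t)
    (⋃ t ∈ T.filter (fun t => f t ≠ f {p0, q0, r0}), cone t) (cl _) (cl _)
    (by
      intro y _
      obtain ⟨t, ht, hr⟩ := h.cov3 y
      have hyc := h.rep_cone ht hr
      by_cases hft : f t = f {p0, q0, r0}
      · left; simp only [Set.mem_iUnion]
        exact ⟨t, Finset.mem_filter.2 ⟨ht, hft⟩, hyc⟩
      · right; simp only [Set.mem_iUnion]
        exact ⟨t, Finset.mem_filter.2 ⟨ht, hft⟩, hyc⟩)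
    ⟨y0, left_mem_segment _ _ _, by
      simp only [Set.mem_iUnion]
      refine ⟨_, Finset.mem_filter.2 ⟨h0, rfl⟩, h.rep_cone h0 ?_⟩
      intro v u x e
      exact perm_rep (h.card _ h0) e ⟨1, 1, 1, by norm_num, by norm_num, by norm_num, by simp [hy0]⟩⟩
    ⟨y1, right_mem_segment _ _ _, by
      simp only [Set.mem_iUnion]
      refine ⟨_, Finset.mem_filter.2 ⟨h1, Ne.symm hne⟩, h.rep_cone h1 ?_⟩
      intro v u x e
      have := neg_abs_le a
      have := neg_abs_le b
      have := neg_abs_le c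
      have := abs_nonneg a
      have := abs_nonneg b
      have := abs_nonneg c
      refine perm_rep (h.card _ h1) e ⟨M + a, M + b, M + c, by linarith, by linarith, by linarith, ?_⟩
      rw [hy1]
      refine Eq.trans ?_ (congrArg (fun z => M • (p + q + r) + z) em.symm)
      module⟩
  simp only [Set.mem_iUnion] at hyA hyB
  obtain ⟨t, ht, hyt⟩ := hyA
  obtain ⟨t', ht', hyt'⟩ := hyB
  obtain ⟨htT, hft⟩ := Finset.mem_filter.1 ht
  obtain ⟨htT', hft'⟩ := Finset.mem_filter.1 ht'
  apply hft'
  rw [← hft]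
  have two : ∀ v u, v ≠ u → v ∈ t → u ∈ t → v ∈ t' → u ∈ t' → f t' = f t := by
    intro v u hvu h1 h2 h3 h4
    obtain ⟨x, rfl⟩ := h.rep2 htT h1 h2 hvu
    obtain ⟨x', rfl⟩ := h.rep2 htT' h3 h4 hvu
    exact hf _ _ _ _ htT' htT
  obtain ⟨v, u, x, rfl⟩ := h.rep0 htT
  obtain ⟨v', u', x', rfl⟩ := h.rep0 htT'
  obtain ⟨a1, a2, a3, g1, g2, g3, ea⟩ := h.cone_rep htT hyt
  obtain ⟨b1, b2, b3, k1, k2, k3, eb⟩ := h.cone_rep htT' hyt'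
  obtain ⟨i1, i2, i3⟩ := h.key htT htT' g1 g2 g3 k1 k2 k3 (ea.trans eb.symm)
  obtain ⟨n1, n2, n3⟩ := h.ne htT
  have sv := h.sub _ htT (show v ∈ _ by simp)
  have su := h.sub _ htT (show u ∈ _ by simp)
  have sx := h.sub _ htT (show x ∈ _ by simp)
  rcases g1.lt_or_eq with g1' | g1'
  · rcases g2.lt_or_eq with g2' | g2'
    · exact two v u n1 (by simp) (by simp) (i1 g1') (i2 g2')
    · rcases g3.lt_or_eq with g3' | g3'
      · exact two v x n2 (by simp) (by simp) (i1 g1') (i3 g3')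
      · exact absurd (by rw [← ea, ← g2', ← g3']; simp) (hnoray y hy v sv a1 g1)
  · rcases g2.lt_or_eq with g2' | g2'
    · rcases g3.lt_or_eq with g3' | g3'
      · exact two u x n3 (by simp) (by simp) (i2 g2') (i3 g3')
      · exact absurd (by rw [← ea, ← g1', ← g3']; simp) (hnoray y hy u su a2 g2)
    · exact absurd (by rw [← ea, ← g1', ← g2']; simp) (hnoray y hy x sx a3 g3)

theorem base (h : Fan3 V T) (w : E3 → E3)
    (hw : ∀ t ∈ T, ∀ u ∈ t, ∀ v ∈ t, dt (w u - w v) (u - v) = 0) :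
    ∀ u ∈ V, ∀ v ∈ V, dt (w u - w v) (u - v) = 0 := by
  have ex : ∀ t, ∃ D : E3 × E3, t ∈ T → ∀ y ∈ t, w y = cr D.1 y + D.2 := by
    intro t
    by_cases ht : t ∈ T
    · obtain ⟨v, u, x, rfl⟩ := h.rep0 ht
      have g := hw _ ht
      obtain ⟨om, b, h1, h2, h3⟩ := rigid_tri (h.dd_ne ht) w (g u (by simp) v (by simp))
        (g x (by simp) v (by simp)) (g x (by simp) u (by simp))
      refine ⟨(om, b), fun _ y hy => ?_⟩
      simp only [Finset.mem_insert, Finset.mem_singleton] at hy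
      rcases hy with rfl | rfl | rfl <;> assumption
    · exact ⟨0, fun h => absurd h ht⟩
  choose D hD using ex
  intro u hu v hv
  obtain ⟨u1, u2, htu, -⟩ := h.star_rep hu 0
  obtain ⟨v1, v2, htv, -⟩ := h.star_rep hv 0
  have hDD : D {u, u1, u2} = D {v, v1, v2} := by
    refine h.conn D ?_ htu htv
    intro p q x x' h1 h2
    have := h.all_lam w (fun t => (D t).1) (fun t => (D t).2) hD h1 h2
    exact Prod.ext this.1 this.2
  rw [hD _ htu u (by simp), hD _ htv v (by simp), hDD]
  simp [dt]; ring

end Fan3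


section ExtSec
variable {E : Type*} [NormedAddCommGroup E] [NormedSpace ℝ E] [FiniteDimensional ℝ E]
  {J : Type*} [Fintype J]

/-- initial functional -/
lemma ext_init (q : J → E) (hq : ∀ y : E, ∃ α : J → ℝ, (∀ j, 0 ≤ α j) ∧ ∑ j, α j • q j = y) (y : E) :
    ∃ k : E →ₗ[ℝ] ℝ, (∀ j, k (q j) ≤ 1) ∧
      ∃ α : J → ℝ, (∀ j, 0 ≤ α j) ∧ (∀ j, k (q j) ≠ 1 → α j = 0) ∧ ∑ j, α j • q j = y := by
  by_cases hy : y = 0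
  · exact ⟨0, fun j => by simp, 0, fun j => le_rfl, fun _ _ => rfl, by simp [hy]⟩
  obtain ⟨α0, hα0, e0⟩ := hq y
  let S : Set (J → ℝ) := {α | (∀ j, 0 ≤ α j) ∧ ∑ j, α j ≤ ∑ j, α0 j ∧ ∑ j, α j • q j = y}
  have hS : IsCompact S := by
    apply (isCompact_Icc (a := (0 : J → ℝ)) (b := fun _ => ∑ j, α0 j)).of_isClosed_subset
    · apply IsClosed.inter
      · have : {α : J → ℝ | ∀ j, 0 ≤ α j} = ⋂ j, {α | 0 ≤ α j} := by ext; simp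
        change IsClosed {α : J → ℝ | ∀ j, 0 ≤ α j}
        rw [this]
        exact isClosed_iInter fun j => isClosed_le continuous_const (continuous_apply j)
      · apply IsClosed.inter
        · exact isClosed_le (continuous_finsetSum _ fun j _ => continuous_apply j) continuous_const
        · exact isClosed_eq (continuous_finsetSum _ fun j _ =>
            (continuous_apply j).smul continuous_const) continuous_const
    · rintro α ⟨h1, h2, h3⟩
      refine ⟨h1, fun j => le_trans ?_ h2⟩
      exact Finset.single_le_sum (fun i _ => h1 i) (Finset.mem_univ j)
  obtain ⟨α, ⟨a1, a2, a3⟩, hmin⟩ := hS.exists_isMinOn ⟨α0, hα0, le_rfl, e0⟩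
    (f := fun α : J → ℝ => ∑ j, α j)
    (continuous_finsetSum _ fun j _ => continuous_apply j).continuousOn
  have hmin : ∀ β : J → ℝ, (∀ j, 0 ≤ β j) → ∑ j, β j • q j = y → ∑ j, α j ≤ ∑ j, β j := by
    intro β b1 b2
    by_cases hb : ∑ j, β j ≤ ∑ j, α0 j
    · exact hmin (show β ∈ S from ⟨b1, hb, b2⟩)
    · push Not at hb; linarith
  set m := ∑ j, α j with hm
  have hm0 : 0 < m := by
    rcases (Finset.sum_nonneg fun j _ => a1 j : 0 ≤ m).lt_or_eq with h | h
    · exact h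
    · exfalso
      have := (Finset.sum_eq_zero_iff_of_nonneg fun j _ => a1 j).1 h.symm
      apply hy
      rw [← a3]
      exact Finset.sum_eq_zero fun j hj => by rw [this j hj, zero_smul]
  let Φ : (J → ℝ) →ₗ[ℝ] E := ∑ j, (LinearMap.proj j : (J → ℝ) →ₗ[ℝ] ℝ).smulRight (q j)
  have hΦ : ∀ β : J → ℝ, Φ β = ∑ j, β j • q j := by
    intro β; simp [Φ]
  have hsurj : Function.Surjective Φ := by
    intro z
    obtain ⟨β, -, h⟩ := hq z
    exact ⟨β, by rw [hΦ, h]⟩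
  let O : Set (J → ℝ) := {β | (∀ j, 0 < β j) ∧ ∑ j, β j < m}
  have hO : IsOpen O := by
    apply IsOpen.inter
    · have : {α : J → ℝ | ∀ j, 0 < α j} = ⋂ j, {α | 0 < α j} := by ext; simp
      change IsOpen {α : J → ℝ | ∀ j, 0 < α j}
      rw [this]
      exact isOpen_iInter_of_finite fun j => isOpen_lt continuous_const (continuous_apply j)
    · exact isOpen_lt (continuous_finsetSum _ fun j _ => continuous_apply j) continuous_const
  have hOc : Convex ℝ O := by
    rintro x ⟨x1, x2⟩ z ⟨z1, z2⟩ a b ha hb hab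
    constructor
    · intro j
      have h1 := x1 j
      have h2 := z1 j
      simp only [Pi.add_apply, Pi.smul_apply, smul_eq_mul]
      rcases ha.lt_or_eq with h | h
      · positivity
      · have : b = 1 := by linarith
        rw [← h, this]; linarith
    · simp only [Pi.add_apply, Pi.smul_apply, smul_eq_mul, Finset.sum_add_distrib, ← Finset.mul_sum]
      rcases ha.lt_or_eq with h | h
      · nlinarith
      · have : b = 1 := by linarith
        rw [← h, this]; linarith
  have hA : IsOpen (Φ '' O) := (LinearMap.isOpenMap_of_finiteDimensional Φ hsurj) O hO
  have hyA : y ∉ Φ '' O := by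
    rintro ⟨β, ⟨b1, b2⟩, h⟩
    have := hmin β (fun j => (b1 j).le) (by rw [← hΦ, h])
    linarith
  obtain ⟨f, hf⟩ := geometric_hahn_banach_open_point (hOc.linear_image Φ) hA hyA
  have hlim : ∀ j, m * f (q j) ≤ f y := by
    intro j
    set K := f (q j) * (Fintype.card J + 1) - ∑ i, f (q i)
    have hc : Filter.Tendsto (fun ε : ℝ => m * f (q j) - ε * K) (nhdsWithin 0 (Set.Ioi 0))
        (nhds (m * f (q j) - 0 * K)) := by
      apply Filter.Tendsto.mono_left _ nhdsWithin_le_nhds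
      apply Continuous.tendsto
      fun_prop
    have := le_of_tendsto (b := f y) hc (by
      have h1 : (0 : ℝ) < m / (Fintype.card J + 1) := by positivity
      filter_upwards [Ioo_mem_nhdsGT h1] with ε hε
      have hε1 := hε.1
      have hε2 : ε * (Fintype.card J + 1) < m := by
        have := hε.2
        rwa [lt_div_iff₀ (by positivity)] at this
      have := hf (Φ (Pi.single j (m - ε * (Fintype.card J + 1)) + fun _ => ε)) ⟨_, ⟨?_, ?_⟩, rfl⟩
      · rw [hΦ] at this
        simp only [Pi.add_apply, add_smul, Finset.sum_add_distrib, map_add] at this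
        rw [Finset.sum_eq_single j (by intro i _ hi; rw [Pi.single_eq_of_ne hi, zero_smul])
          (by intro h; exact absurd (Finset.mem_univ j) h)] at this
        rw [Pi.single_eq_same, ← Finset.smul_sum] at this
        simp only [map_smul, map_sum, smul_eq_mul] at this
        simp only [K]
        linarith
      · intro i
        simp only [Pi.add_apply]
        by_cases hi : i = j
        · subst hi; rw [Pi.single_eq_same]; linarith
        · rw [Pi.single_eq_of_ne hi]; linarith
      · simp only [Pi.add_apply, Finset.sum_add_distrib, Finset.sum_const, Finset.card_univ,
          nsmul_eq_mul]
        rw [Finset.sum_pi_single']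
        simp only [Finset.mem_univ, if_true]
        linarith)
    linarith
  have hfy : 0 < f y := by
    by_contra hneg
    push Not at hneg
    have hj : ∀ j, f (q j) ≤ 0 := by
      intro j
      have := hlim j
      nlinarith
    have hle : ∀ z, f z ≤ 0 := by
      intro z
      obtain ⟨β, b1, rfl⟩ := hq z
      rw [map_sum]
      apply Finset.sum_nonpos
      intro j _
      rw [map_smul, smul_eq_mul]
      exact mul_nonpos_of_nonneg_of_nonpos (b1 j) (hj j)
    have hz : ∀ z, f z = 0 := by
      intro z
      have h1 := hle z
      have h2 := hle (-z)
      rw [map_neg] at h2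
      linarith
    have := hf (Φ fun _ => m / (Fintype.card J + 1)) ⟨_, ⟨fun _ => by positivity, by
      simp only [Finset.sum_const, Finset.card_univ, nsmul_eq_mul]
      rw [← mul_div_assoc, div_lt_iff₀ (by positivity)]
      nlinarith⟩, rfl⟩
    rw [hz, hz] at this
    exact lt_irrefl _ this
  have hk : ∀ j, (m / f y) * f (q j) ≤ 1 := by
    intro j
    rw [div_mul_eq_mul_div, div_le_one hfy]
    exact hlim j
  refine ⟨(m / f y) • (f : E →ₗ[ℝ] ℝ), ?_, α, a1, ?_, a3⟩
  · intro j; simpa using hk j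
  · have hs : ∑ j, α j * (1 - (m / f y) * f (q j)) = 0 := by
      have h1 : f y = ∑ j, α j * f (q j) := by
        rw [← a3, map_sum]; simp
      have : ∑ j, α j * (1 - (m / f y) * f (q j)) = m - (m / f y) * ∑ j, α j * f (q j) := by
        rw [hm, Finset.mul_sum, ← Finset.sum_sub_distrib]
        refine Finset.sum_congr rfl fun j _ => ?_
        ring
      rw [this, ← h1, div_mul_cancel₀ _ hfy.ne', sub_self]
    have hz := (Finset.sum_eq_zero_iff_of_nonneg fun j _ =>
      mul_nonneg (a1 j) (sub_nonneg.2 (hk j))).1 hs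
    intro j hj
    refine (mul_eq_zero.1 (hz j (Finset.mem_univ j))).resolve_right ?_
    intro h0
    apply hj
    simp only [LinearMap.smul_apply, smul_eq_mul, ContinuousLinearMap.coe_coe]
    linarith

lemma ext_lem (q : J → E) (hq : ∀ y : E, ∃ α : J → ℝ, (∀ j, 0 ≤ α j) ∧ ∑ j, α j • q j = y) (y : E) :
    ∃ k : E →ₗ[ℝ] ℝ, (∀ j, k (q j) ≤ 1) ∧ Submodule.span ℝ (q '' {j | k (q j) = 1}) = ⊤ ∧
      ∃ α : J → ℝ, (∀ j, 0 ≤ α j) ∧ (∀ j, k (q j) ≠ 1 → α j = 0) ∧ ∑ j, α j • q j = y := by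
  let Pk : ℕ → Prop := fun N => ∃ k : E →ₗ[ℝ] ℝ, (∀ j, k (q j) ≤ 1) ∧
    (∃ α : J → ℝ, (∀ j, 0 ≤ α j) ∧ (∀ j, k (q j) ≠ 1 → α j = 0) ∧ ∑ j, α j • q j = y) ∧
    (Finset.univ.filter fun j => k (q j) = 1).card = N
  have hbd : ∀ N, Pk N → N ≤ Fintype.card J := by
    rintro N ⟨k, -, -, rfl⟩
    exact Finset.card_le_univ _
  have hex : ∃ N, Pk N := by
    obtain ⟨k, h1, h2⟩ := ext_init q hq y
    exact ⟨_, k, h1, h2, rfl⟩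
  obtain ⟨N0, hN0⟩ := hex
  have hg := Nat.findGreatest_spec (P := Pk) (hbd N0 hN0) hN0
  have hmax : ∀ N, Pk N → N ≤ Nat.findGreatest Pk (Fintype.card J) :=
    fun N hN => Nat.le_findGreatest (hbd N hN) hN
  obtain ⟨k, h1, ⟨α, a1, a2, a3⟩, hcard⟩ := hg
  refine ⟨k, h1, ?_, α, a1, a2, a3⟩
  by_contra hsp
  obtain ⟨δ, hδ0, hδ⟩ := Submodule.exists_le_ker_of_lt_top _ (lt_top_iff_ne_top.2 hsp)
  have hδt : ∀ j, k (q j) = 1 → δ (q j) = 0 := fun j hj =>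
    LinearMap.mem_ker.1 (hδ (Submodule.subset_span ⟨j, hj, rfl⟩))
  have hpos : ∃ j, 0 < δ (q j) := by
    by_contra hcon
    push Not at hcon
    apply hδ0
    have hle : ∀ z, δ z ≤ 0 := by
      intro z
      obtain ⟨β, b1, rfl⟩ := hq z
      rw [map_sum]
      apply Finset.sum_nonpos
      intro j _
      rw [map_smul, smul_eq_mul]
      exact mul_nonpos_of_nonneg_of_nonpos (b1 j) (hcon j)
    ext z
    have h1 := hle z
    have h2 := hle (-z)
    rw [map_neg] at h2
    simp only [LinearMap.zero_apply]
    linarith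
  obtain ⟨j0, hj0⟩ := hpos
  obtain ⟨j1, hj1, hmin⟩ := Finset.exists_min_image (Finset.univ.filter fun j => 0 < δ (q j))
    (fun j => (1 - k (q j)) / δ (q j)) ⟨j0, Finset.mem_filter.2 ⟨Finset.mem_univ _, hj0⟩⟩
  have hj1p := (Finset.mem_filter.1 hj1).2
  set s := (1 - k (q j1)) / δ (q j1) with hs
  have hs0 : 0 ≤ s := div_nonneg (sub_nonneg.2 (h1 j1)) hj1p.le
  have hnew : Pk (Finset.univ.filter fun j => (k + s • δ) (q j) = 1).card := by
    refine ⟨k + s • δ, ?_, ⟨α, a1, ?_, a3⟩, rfl⟩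
    · intro j
      simp only [LinearMap.add_apply, LinearMap.smul_apply, smul_eq_mul]
      by_cases hj : 0 < δ (q j)
      · have := hmin j (Finset.mem_filter.2 ⟨Finset.mem_univ _, hj⟩)
        rw [le_div_iff₀ hj] at this
        linarith
      · push Not at hj
        have := h1 j
        nlinarith
    · intro j hj
      apply a2
      intro hk
      apply hj
      simp [hk, hδt j hk]
  have := hmax _ hnew
  rw [← hcard] at this
  refine absurd this (not_le.2 (Finset.card_lt_card ?_))
  refine ⟨?_, ?_⟩
  · intro j hj
    have hk := (Finset.mem_filter.1 hj).2
    refine Finset.mem_filter.2 ⟨Finset.mem_univ _, ?_⟩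
    simp [hk, hδt j hk]
  · intro hsub
    have : j1 ∈ Finset.univ.filter fun j => k (q j) = 1 := by
      apply hsub
      refine Finset.mem_filter.2 ⟨Finset.mem_univ _, ?_⟩
      simp only [LinearMap.add_apply, LinearMap.smul_apply, smul_eq_mul, hs]
      rw [div_mul_cancel₀ _ hj1p.ne']; ring
    have := hδt j1 (Finset.mem_filter.1 this).2
    linarith

end ExtSec


section FanISec
variable {J : Type*} [Fintype J]

structure FanI (F : Finset J) (p : J → E3) (T : Finset (Finset J)) : Prop where
  sub : ∀ t ∈ T, t ⊆ F
  card : ∀ t ∈ T, t.card = 3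
  inj : ∀ t ∈ T, ∀ t' ∈ T, ∀ α β : J → ℝ, (∀ x, 0 ≤ α x) → (∀ x, 0 ≤ β x) →
    (∀ x, x ∉ t → α x = 0) → (∀ x, x ∉ t' → β x = 0) →
    ∑ x, α x • p x = ∑ x, β x • p x → α = β
  cov : ∀ y : E3, ∃ t ∈ T, ∃ α : J → ℝ, (∀ x, 0 ≤ α x) ∧ (∀ x, x ∉ t → α x = 0) ∧
    ∑ x, α x • p x = y
  nrm : ∀ t ∈ T, ∃ n : E3, (∀ x ∈ t, dt n (p x) = 1) ∧ ∀ x ∈ F, dt n (p x) ≤ 1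
  vtx : ∀ v ∈ F, ∃ e : E3, dt e (p v) = 1 ∧ ∀ u ∈ F, u ≠ v → dt e (p u) < 1

lemma FanI.injOn {F : Finset J} {p : J → E3} {T : Finset (Finset J)} (h : FanI F p T) :
    Set.InjOn p F := by
  intro i hi j hj e
  by_contra hne
  obtain ⟨m, h1, h2⟩ := h.vtx i hi
  have := h2 j hj (Ne.symm hne)
  rw [← e, h1] at this
  exact lt_irrefl _ this

lemma sum_push {F : Finset J} {p : J → E3} (hp : Set.InjOn p F) (α : J → ℝ) (β : E3 → ℝ)
    (h0 : ∀ x, x ∉ F → α x = 0) (h1 : ∀ x ∈ F, α x = β (p x)) :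
    ∑ x ∈ F.image p, β x • x = ∑ x, α x • p x := by
  rw [Finset.sum_image (fun x hx y hy e => hp hx hy e)]
  rw [← Finset.sum_subset (Finset.subset_univ F) (f := fun x => α x • p x)]
  · exact Finset.sum_congr rfl fun x hx => by rw [h1 x hx]
  · intro x _ hx; rw [h0 x hx, zero_smul]

lemma FanI.fan {F : Finset J} {p : J → E3} {T : Finset (Finset J)} (h : FanI F p T) :
    Fan3 (F.image p) (T.image (Finset.image p)) := by
  have hp := h.injOn
  refine ⟨?_, ?_, ?_, ?_, ?_, ?_⟩
  · intro t' ht'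
    obtain ⟨t, ht, rfl⟩ := Finset.mem_image.1 ht'
    exact Finset.image_subset_image (h.sub t ht)
  · intro t' ht'
    obtain ⟨t, ht, rfl⟩ := Finset.mem_image.1 ht'
    rw [Finset.card_image_of_injOn (hp.mono (by exact_mod_cast h.sub t ht)), h.card t ht]
  · intro s hs s' hs' α β a1 b1 a2 b2 e
    obtain ⟨t, ht, rfl⟩ := Finset.mem_image.1 hs
    obtain ⟨t', ht', rfl⟩ := Finset.mem_image.1 hs'
    have key : ∀ (t : Finset J), t ⊆ F → ∀ γ : E3 → ℝ, (∀ x, x ∉ t.image p → γ x = 0) →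
        ∀ x ∈ F, (if x ∈ t then γ (p x) else 0) = γ (p x) := by
      intro t ht γ hγ x hx
      split_ifs with h
      · rfl
      · symm; apply hγ
        intro hm
        obtain ⟨y, hy, e⟩ := Finset.mem_image.1 hm
        exact h (hp (ht hy) hx e ▸ hy)
    have := h.inj t ht t' ht' (fun x => if x ∈ t then α (p x) else 0)
      (fun x => if x ∈ t' then β (p x) else 0)
      (fun x => by split_ifs <;> simp [a1]) (fun x => by split_ifs <;> simp [b1])
      (fun x hx => if_neg hx) (fun x hx => if_neg hx) (by
        rw [← sum_push hp _ α (fun x hx => if_neg fun h' => hx (h.sub t ht h'))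
          (key t (h.sub t ht) α a2)]
        rw [e]
        exact sum_push hp _ β (fun x hx => if_neg fun h' => hx (h.sub t' ht' h'))
          (key t' (h.sub t' ht') β b2))
    ext x
    by_cases hx : x ∈ F.image p
    · obtain ⟨i, hi, rfl⟩ := Finset.mem_image.1 hx
      rw [← key t (h.sub t ht) α a2 i hi, ← key t' (h.sub t' ht') β b2 i hi]
      exact congrFun this i
    · rw [a2 x (fun h' => hx (Finset.image_subset_image (h.sub t ht) h')),
        b2 x (fun h' => hx (Finset.image_subset_image (h.sub t' ht') h'))]
  · intro y
    obtain ⟨t, ht, α, a1, a2, rfl⟩ := h.cov y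
    refine ⟨_, Finset.mem_image_of_mem _ ht, fun x => ∑ i ∈ t, if p i = x then α i else 0, ?_, ?_, ?_⟩
    · intro x
      apply Finset.sum_nonneg
      intro i _
      split_ifs <;> simp [a1]
    · intro x hx
      apply Finset.sum_eq_zero
      intro i hi
      rw [if_neg]
      rintro rfl
      exact hx (Finset.mem_image_of_mem _ hi)
    · refine sum_push hp α _ (fun x hx => a2 x fun h' => hx (h.sub t ht h')) ?_
      intro x hx
      by_cases hxt : x ∈ t
      · rw [Finset.sum_eq_single x]
        · simp
        · intro i hi hne
          rw [if_neg]
          intro e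
          exact hne (hp (h.sub t ht hi) hx e)
        · intro h'; exact absurd hxt h'
      · rw [a2 x hxt]
        symm
        apply Finset.sum_eq_zero
        intro i hi
        rw [if_neg]
        intro e
        exact hxt (hp (h.sub t ht hi) hx e ▸ hi)
  · intro s hs
    obtain ⟨t, ht, rfl⟩ := Finset.mem_image.1 hs
    obtain ⟨n, h1, h2⟩ := h.nrm t ht
    refine ⟨n, ?_, ?_⟩
    · intro x hx
      obtain ⟨i, hi, rfl⟩ := Finset.mem_image.1 hx
      exact h1 i hi
    · intro x hx
      obtain ⟨i, hi, rfl⟩ := Finset.mem_image.1 hx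
      exact h2 i hi
  · intro v hv
    obtain ⟨i, hi, rfl⟩ := Finset.mem_image.1 hv
    obtain ⟨e, h1, h2⟩ := h.vtx i hi
    refine ⟨e, h1, ?_⟩
    intro u hu hne
    obtain ⟨j, hj, rfl⟩ := Finset.mem_image.1 hu
    exact h2 j hj (fun h => hne (by rw [h]))

theorem FanI.base {F : Finset J} {p : J → E3} {T : Finset (Finset J)} (h : FanI F p T)
    (w : J → E3) (hw : ∀ t ∈ T, ∀ u ∈ t, ∀ v ∈ t, dt (w u - w v) (p u - p v) = 0) :
    ∀ u ∈ F, ∀ v ∈ F, dt (w u - w v) (p u - p v) = 0 := by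
  have hp := h.injOn
  let w' : E3 → E3 := fun x => ∑ i ∈ F, if p i = x then w i else 0
  have hw' : ∀ i ∈ F, w' (p i) = w i := by
    intro i hi
    simp only [w']
    rw [Finset.sum_eq_single i]
    · simp
    · intro j hj hne
      rw [if_neg]
      intro e
      exact hne (hp hj hi e)
    · intro h'; exact absurd hi h'
  have := h.fan.base w' (by
    intro s hs x hx y hy
    obtain ⟨t, ht, rfl⟩ := Finset.mem_image.1 hs
    obtain ⟨i, hi, rfl⟩ := Finset.mem_image.1 hx
    obtain ⟨j, hj, rfl⟩ := Finset.mem_image.1 hy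
    rw [hw' i (h.sub t ht hi), hw' j (h.sub t ht hj)]
    exact hw t ht i hi j hj)
  intro u hu v hv
  rw [← hw' u hu, ← hw' v hv]
  exact this _ (Finset.mem_image_of_mem _ hu) _ (Finset.mem_image_of_mem _ hv)

end FanISec


lemma exists_dt3 {x y z : E3} (hd : dd x y z ≠ 0) (a b c : ℝ) :
    ∃ n : E3, dt n x = a ∧ dt n y = b ∧ dt n z = c := by
  refine ⟨(a / dd x y z) • cr y z + (b / dd x y z) • cr z x + (c / dd x y z) • cr x y, ?_, ?_, ?_⟩
  · have : dt ((a / dd x y z) • cr y z + (b / dd x y z) • cr z x + (c / dd x y z) • cr x y) x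
      = a / dd x y z * dd x y z := by
      rw [dt_add_l, dt_add_l, dt_smul_l, dt_smul_l, dt_smul_l]
      simp only [dt, dd, cr_0, cr_1, cr_2]; ring
    rw [this, div_mul_cancel₀ _ hd]
  · have : dt ((a / dd x y z) • cr y z + (b / dd x y z) • cr z x + (c / dd x y z) • cr x y) y
      = b / dd x y z * dd x y z := by
      rw [dt_add_l, dt_add_l, dt_smul_l, dt_smul_l, dt_smul_l]
      simp only [dt, dd, cr_0, cr_1, cr_2]; ring
    rw [this, div_mul_cancel₀ _ hd]
  · have : dt ((a / dd x y z) • cr y z + (b / dd x y z) • cr z x + (c / dd x y z) • cr x y) z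
      = c / dd x y z * dd x y z := by
      rw [dt_add_l, dt_add_l, dt_smul_l, dt_smul_l, dt_smul_l]
      simp only [dt, dd, cr_0, cr_1, cr_2]; ring
    rw [this, div_mul_cancel₀ _ hd]

lemma dd_cyc (x y z : E3) : dd y z x = dd x y z := by simp only [dt, dd, cr_0, cr_1, cr_2]; ring

def dtL (n : E3) : E3 →ₗ[ℝ] ℝ where
  toFun := dt n
  map_add' := dt_add_r n
  map_smul' := fun r x => dt_smul_r r n x

lemma exists_dtL (k : E3 →ₗ[ℝ] ℝ) : ∃ n : E3, ∀ x, k x = dt n x := by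
  refine ⟨fun i => k (Pi.single i 1), fun x => ?_⟩
  rw [LinearMap.pi_apply_eq_sum_univ k x, Fin.sum_univ_three]
  have : ∀ i : Fin 3, (fun j => if i = j then (1:ℝ) else 0) = Pi.single i 1 := by
    intro i; ext j; rw [Pi.single_apply]; simp [eq_comm]
  simp only [this, dt, smul_eq_mul]; ring

lemma span_dd {G : Set E3} (h : Submodule.span ℝ G = ⊤) :
    ∃ x ∈ G, ∃ y ∈ G, ∃ z ∈ G, dd x y z ≠ 0 := by
  by_contra hc
  push Not at hc
  have key : ∀ n : E3, (∀ x ∈ G, dt n x = 0) → ∀ x, dt n x = 0 := by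
    intro n hn x
    have : x ∈ Submodule.span ℝ G := by rw [h]; trivial
    have h2 : Submodule.span ℝ G ≤ LinearMap.ker (dtL n) := Submodule.span_le.2 fun x hx => hn x hx
    exact h2 this
  have s1 : ∀ x ∈ G, ∀ y ∈ G, ∀ z, dd x y z = 0 := by
    intro x hx y hy z
    rw [← dd_eq]
    exact key _ (fun z hz => by rw [dd_eq]; exact hc x hx y hy z hz) z
  have s2 : ∀ x ∈ G, ∀ y z, dd x y z = 0 := by
    intro x hx y z
    rw [← dd_cyc, ← dd_cyc, ← dd_eq]
    exact key _ (fun y hy => by rw [dd_eq, dd_cyc, dd_cyc]; exact s1 x hx y hy z) y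
  have s3 : ∀ x y z, dd x y z = 0 := by
    intro x y z
    rw [← dd_cyc, ← dd_eq]
    exact key _ (fun x hx => by rw [dd_eq, dd_cyc]; exact s2 x hx y z) x
  have := s3 ![1,0,0] ![0,1,0] ![0,0,1]
  simp [dd, dt] at this

section TriSec
variable {J : Type*} [Fintype J]

noncomputable def LL (p : J → E3) (q : J × J × J × J) : Module.Dual ℝ (J → ℝ) :=
  LinearMap.proj q.2.2.2
    - (dd (p q.2.2.2) (p q.2.1) (p q.2.2.1) / dd (p q.1) (p q.2.1) (p q.2.2.1)) • LinearMap.proj q.1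
    - (dd (p q.1) (p q.2.2.2) (p q.2.2.1) / dd (p q.1) (p q.2.1) (p q.2.2.1)) • LinearMap.proj q.2.1
    - (dd (p q.1) (p q.2.1) (p q.2.2.2) / dd (p q.1) (p q.2.1) (p q.2.2.1)) • LinearMap.proj q.2.2.1

lemma LL_eq (p : J → E3) {x y z : J} (hd : dd (p x) (p y) (p z) ≠ 0) (u : J) (h : J → ℝ) (n : E3)
    (hx : dt n (p x) = h x) (hy : dt n (p y) = h y) (hz : dt n (p z) = h z) :
    LL p (x, y, z, u) h = h u - dt n (p u) := by
  conv_rhs => rw [cramer3' hd (p u)]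
  rw [dt_add_r, dt_add_r, dt_smul_r, dt_smul_r, dt_smul_r, hx, hy, hz]
  simp only [LL, LinearMap.sub_apply, LinearMap.smul_apply, LinearMap.proj_apply, smul_eq_mul]
  ring

lemma LL_generic (p : J → E3) : ∃ g : J → ℝ, ∀ x y z u, u ≠ x → u ≠ y → u ≠ z →
    LL p (x, y, z, u) g ≠ 0 := by
  obtain ⟨g, hg⟩ := Module.Dual.exists_forall_ne_zero_of_forall_exists
    (fun q : {q : J × J × J × J // q.2.2.2 ≠ q.1 ∧ q.2.2.2 ≠ q.2.1 ∧ q.2.2.2 ≠ q.2.2.1} =>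
      LL p q.1) (by
    rintro ⟨⟨x, y, z, u⟩, h1, h2, h3⟩
    refine ⟨Pi.single u 1, ?_⟩
    dsimp only at h1 h2 h3
    simp [LL, Pi.single_apply, h1.symm, h2.symm, h3.symm])
  exact ⟨g, fun x y z u h1 h2 h3 => hg ⟨(x, y, z, u), h1, h2, h3⟩⟩

lemma exists_height (p : J → E3) : ∃ h : J → ℝ, (∀ j, 0 < h j) ∧
    (∀ x y z u, u ≠ x → u ≠ y → u ≠ z → LL p (x, y, z, u) h ≠ 0) ∧
    (∀ q, 0 < LL p q h → 0 ≤ LL p q (fun _ => 1)) := by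
  obtain ⟨g, hg⟩ := LL_generic p
  have c1 : ∀ a b : ℝ, 0 < a → ∀ᶠ e in nhdsWithin (0:ℝ) (Set.Ioi 0), 0 < a + e * b := by
    intro a b ha
    have : Filter.Tendsto (fun e : ℝ => a + e * b) (nhdsWithin 0 (Set.Ioi 0)) (nhds (a + 0 * b)) :=
      (Continuous.tendsto (by fun_prop) 0).mono_left nhdsWithin_le_nhds
    exact this.eventually (lt_mem_nhds (by simpa using ha))
  have e1 : ∀ᶠ e in nhdsWithin (0:ℝ) (Set.Ioi 0), ∀ j, 0 < 1 + e * g j :=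
    Filter.eventually_all.2 fun j => c1 _ _ one_pos
  have e2 : ∀ᶠ e in nhdsWithin (0:ℝ) (Set.Ioi 0), ∀ q : J × J × J × J,
      LL p q (fun _ => 1) < 0 → LL p q (fun _ => 1) + e * LL p q g < 0 :=
    Filter.eventually_all.2 fun q => by
      by_cases h : LL p q (fun _ => 1) < 0
      · filter_upwards [c1 (- LL p q (fun _ => 1)) (- LL p q g) (by linarith)] with e he _
        linarith
      · exact Filter.Eventually.of_forall fun e h' => absurd h' h
  have e3 : ∀ᶠ e in nhdsWithin (0:ℝ) (Set.Ioi 0), ∀ q : J × J × J × J,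
      LL p q g ≠ 0 → LL p q (fun _ => 1) + e * LL p q g ≠ 0 :=
    Filter.eventually_all.2 fun q => by
      rcases lt_trichotomy (LL p q (fun _ => 1)) 0 with h | h | h
      · filter_upwards [c1 (- LL p q (fun _ => 1)) (- LL p q g) (by linarith)] with e he _
        intro h0; linarith
      · filter_upwards [self_mem_nhdsWithin] with e he h0
        rw [h, zero_add]
        exact mul_ne_zero (ne_of_gt he) h0
      · filter_upwards [c1 (LL p q (fun _ => 1)) (LL p q g) h] with e he _
        exact ne_of_gt he
  obtain ⟨e, ⟨h1, h2⟩, h3⟩ := ((e1.and e2).and e3).exists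
  have key : ∀ q, LL p q (fun j => 1 + e * g j) = LL p q (fun _ => 1) + e * LL p q g := by
    intro q
    have : (fun j => 1 + e * g j) = (fun _ : J => (1:ℝ)) + e • g := rfl
    rw [this, map_add, map_smul, smul_eq_mul]
  refine ⟨fun j => 1 + e * g j, h1, ?_, ?_⟩
  · intro x y z u a b c
    rw [key]; exact h3 _ (hg x y z u a b c)
  · intro q hq
    rw [key] at hq
    by_contra hc
    push Not at hc
    linarith [h2 q hc]

lemma indep_sum (p : J → E3) {x y z : J} (hd : dd (p x) (p y) (p z) ≠ 0)
    (α β : J → ℝ) (h1 : ∀ u, u ∉ ({x, y, z} : Finset J) → α u = 0)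
    (h2 : ∀ u, u ∉ ({x, y, z} : Finset J) → β u = 0)
    (e : ∑ u, α u • p u = ∑ u, β u • p u) : α = β := by
  have hxy : x ≠ y := by rintro rfl; exact hd (dd_self3 _ _)
  have hxz : x ≠ z := by rintro rfl; exact hd (dd_self1 _ _)
  have hyz : y ≠ z := by rintro rfl; exact hd (dd_self2 _ _)
  have key : ∀ γ : J → ℝ, (∀ u, u ∉ ({x, y, z} : Finset J) → γ u = 0) →
      ∑ u, γ u • p u = γ x • p x + γ y • p y + γ z • p z := by
    intro γ hγ
    rw [← Finset.sum_subset (Finset.subset_univ ({x, y, z} : Finset J))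
      (fun u _ hu => by rw [hγ u hu, zero_smul])]
    rw [Finset.sum_insert (by simp [hxy, hxz]), Finset.sum_insert (by simp [hyz]),
      Finset.sum_singleton, add_assoc]
  rw [key α h1, key β h2] at e
  obtain ⟨a, b, c⟩ := indep3 hd e
  ext u
  by_cases hu : u ∈ ({x, y, z} : Finset J)
  · simp only [Finset.mem_insert, Finset.mem_singleton] at hu
    rcases hu with rfl | rfl | rfl <;> assumption
  · rw [h1 u hu, h2 u hu]

theorem tri_lem (p : J → E3) (hc : ∀ y : E3, ∃ α : J → ℝ, (∀ j, 0 ≤ α j) ∧ ∑ j, α j • p j = y)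
    (hv : ∀ v, ∃ e : E3, dt e (p v) = 1 ∧ ∀ u, u ≠ v → dt e (p u) < 1) :
    ∃ T, FanI Finset.univ p T := by
  obtain ⟨h, hpos, hgen, hsm⟩ := exists_height p
  set T : Finset (Finset J) := Finset.univ.filter fun t => ∃ x y z, t = {x, y, z} ∧
    dd (p x) (p y) (p z) ≠ 0 ∧ ∀ u, u ∉ t → 0 < LL p (x, y, z, u) h with hT
  have mT : ∀ t ∈ T, ∃ x y z, t = {x, y, z} ∧
    dd (p x) (p y) (p z) ≠ 0 ∧ ∀ u, u ∉ t → 0 < LL p (x, y, z, u) h := by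
    intro t ht
    exact (Finset.mem_filter.1 ht).2
  have mk : ∀ t ∈ T, ∃ k : E3, (∀ u ∈ t, dt k (p u) = h u) ∧ ∀ u, u ∉ t → dt k (p u) < h u := by
    intro t ht
    obtain ⟨x, y, z, rfl, hd, hu⟩ := mT t ht
    obtain ⟨k, k1, k2, k3⟩ := exists_dt3 hd (h x) (h y) (h z)
    refine ⟨k, ?_, ?_⟩
    · intro u hu
      simp only [Finset.mem_insert, Finset.mem_singleton] at hu
      rcases hu with rfl | rfl | rfl <;> assumption
    · intro u hu'
      have := hu u hu'
      rw [LL_eq p hd u h k k1 k2 k3] at this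
      linarith
  have dts : ∀ (k : E3) (α : J → ℝ), dt k (∑ x, α x • p x) = ∑ x, α x * dt k (p x) := by
    intro k α
    rw [dt_sum_r]
    exact Finset.sum_congr rfl fun x _ => dt_smul_r _ _ _
  refine ⟨T, ⟨fun t _ => Finset.subset_univ t, ?_, ?_, ?_, ?_, ?_⟩⟩
  · intro t ht
    obtain ⟨x, y, z, rfl, hd, hu⟩ := mT t ht
    have hxy : x ≠ y := by rintro rfl; exact hd (dd_self3 _ _)
    have hxz : x ≠ z := by rintro rfl; exact hd (dd_self1 _ _)
    have hyz : y ≠ z := by rintro rfl; exact hd (dd_self2 _ _)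
    exact Finset.card_eq_three.2 ⟨x, y, z, hxy, hxz, hyz, rfl⟩
  · intro t ht t' ht' α β a1 b1 a2 b2 e
    have half : ∀ t ∈ T, ∀ α β : J → ℝ, (∀ x, 0 ≤ β x) → (∀ x, x ∉ t → α x = 0) →
        ∑ x, α x • p x = ∑ x, β x • p x → ∑ x, α x * h x ≤ ∑ x, β x * h x ∧
        (∑ x, α x * h x = ∑ x, β x * h x → ∀ x, x ∉ t → β x = 0) := by
      intro t ht α β b1 a2 e
      obtain ⟨k, k1, k2⟩ := mk t ht
      have kle : ∀ u, dt k (p u) ≤ h u := fun u => by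
        by_cases hu : u ∈ t
        · exact (k1 u hu).le
        · exact (k2 u hu).le
      have e1 : ∑ x, α x * h x = ∑ x, β x * dt k (p x) := by
        rw [← dts, ← e, dts]
        refine Finset.sum_congr rfl fun x _ => ?_
        by_cases hx : x ∈ t
        · rw [k1 x hx]
        · rw [a2 x hx]; simp
      have le : ∀ x ∈ Finset.univ, β x * dt k (p x) ≤ β x * h x := fun x _ =>
        mul_le_mul_of_nonneg_left (kle x) (b1 x)
      refine ⟨e1 ▸ Finset.sum_le_sum le, fun h0 x hx => ?_⟩
      rw [e1] at h0
      have := (Finset.sum_eq_sum_iff_of_le le).1 h0 x (Finset.mem_univ x)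
      have hlt := k2 x hx
      by_contra hb
      exact absurd (mul_left_cancel₀ hb this) (ne_of_lt hlt)
    have i1 := half t ht α β b1 a2 e
    have i2 := half t' ht' β α a1 b2 e.symm
    have b3 := i1.2 (le_antisymm i1.1 i2.1)
    obtain ⟨x, y, z, rfl, hd, hu⟩ := mT t ht
    exact indep_sum p hd α β a2 b3 e
  · intro y
    obtain ⟨k, k1, k2, α, a0, a1, a2⟩ := ext_lem (fun j => (h j)⁻¹ • p j) (by
      intro y
      obtain ⟨α, a0, a1⟩ := hc y
      refine ⟨fun j => α j * h j, fun j => mul_nonneg (a0 j) (hpos j).le, ?_⟩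
      rw [← a1]
      refine Finset.sum_congr rfl fun j _ => ?_
      rw [smul_smul, mul_assoc, mul_inv_cancel₀ (hpos j).ne', mul_one]) y
    obtain ⟨n, hn⟩ := exists_dtL k
    have hk : ∀ j, k ((h j)⁻¹ • p j) = (h j)⁻¹ * dt n (p j) := by
      intro j; rw [map_smul, hn, smul_eq_mul]
    have le : ∀ j, dt n (p j) ≤ h j := by
      intro j
      have := k1 j
      rw [hk, inv_mul_le_iff₀ (hpos j), mul_one] at this
      exact this
    have eqv : ∀ j, k ((h j)⁻¹ • p j) = 1 ↔ dt n (p j) = h j := by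
      intro j
      rw [hk, inv_mul_eq_iff_eq_mul₀ (hpos j).ne', mul_one]
    obtain ⟨x', ⟨x, hx, rfl⟩, y', ⟨y, hy, rfl⟩, z', ⟨z, hz, rfl⟩, hd⟩ := span_dd k2
    have hd' : dd (p x) (p y) (p z) ≠ 0 := by
      intro h0
      apply hd
      have : dd ((h x)⁻¹ • p x) ((h y)⁻¹ • p y) ((h z)⁻¹ • p z) =
        (h x)⁻¹ * (h y)⁻¹ * (h z)⁻¹ * dd (p x) (p y) (p z) := by
        simp [dd, dt]; ring
      rw [this, h0, mul_zero]
    have hx' := (eqv x).1 hx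
    have hy' := (eqv y).1 hy
    have hz' := (eqv z).1 hz
    have hlt : ∀ u, u ∉ ({x, y, z} : Finset J) → 0 < LL p (x, y, z, u) h := by
      intro u hu
      simp only [Finset.mem_insert, Finset.mem_singleton, not_or] at hu
      have h1 := hgen x y z u hu.1 hu.2.1 hu.2.2
      have h2 := LL_eq p hd' u h n hx' hy' hz'
      have h3 := le u
      exact lt_of_le_of_ne (by rw [h2]; linarith) h1.symm
    refine ⟨{x, y, z}, Finset.mem_filter.2 ⟨Finset.mem_univ _, x, y, z, rfl, hd', hlt⟩,
      fun j => α j * (h j)⁻¹, fun j => mul_nonneg (a0 j) (inv_nonneg.2 (hpos j).le), ?_, ?_⟩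
    · intro u hu
      have := hlt u hu
      rw [LL_eq p hd' u h n hx' hy' hz'] at this
      have h0 : α u = 0 := a1 u (by rw [Ne, eqv]; intro h0; linarith)
      simp [h0]
    · rw [← a2]
      refine Finset.sum_congr rfl fun j _ => ?_
      rw [smul_smul]
  · intro t ht
    obtain ⟨x, y, z, rfl, hd, hu⟩ := mT t ht
    obtain ⟨k, k1, k2, k3⟩ := exists_dt3 hd 1 1 1
    have c : ∀ u ∈ ({x, y, z} : Finset J), dt k (p u) = 1 := by
      intro u hu
      simp only [Finset.mem_insert, Finset.mem_singleton] at hu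
      rcases hu with rfl | rfl | rfl <;> assumption
    refine ⟨k, c, ?_⟩
    intro u _
    by_cases hu' : u ∈ ({x, y, z} : Finset J)
    · exact (c u hu').le
    · have := hsm _ (hu u hu')
      rw [LL_eq p hd u (fun _ => 1) k k1 k2 k3] at this
      linarith
  · intro v _
    obtain ⟨e, e1, e2⟩ := hv v
    exact ⟨e, e1, fun u _ => e2 u⟩

lemma vtx_norm (p : J → E3) (F : Finset J)
    (hc : ∀ y : E3, ∃ α : J → ℝ, (∀ j, 0 ≤ α j) ∧ (∀ j, j ∉ F → α j = 0) ∧ ∑ j, α j • p j = y)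
    (v : J) (f : E3) (hf : ∀ u ∈ F, u ≠ v → dt f (p u) < dt f (p v)) :
    ∃ e : E3, dt e (p v) = 1 ∧ ∀ u ∈ F, u ≠ v → dt e (p u) < 1 := by
  have main : ∀ g : E3, (∀ u ∈ F, dt g (p u) ≤ 0) → g = 0 := by
    intro g hg
    obtain ⟨α, a0, a1, a2⟩ := hc g
    by_contra hne
    have h1 := dt_self_pos hne
    have h2 : dt g g = ∑ j, α j * dt g (p j) := by
      conv_lhs => rw [← a2]
      rw [← a2, dt_sum_r]
      refine Finset.sum_congr rfl fun x _ => ?_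
      rw [dt_smul_r, a2]
    have h3 : ∑ j, α j * dt g (p j) ≤ 0 := Finset.sum_nonpos fun j _ => by
      by_cases hj : j ∈ F
      · exact mul_nonpos_of_nonneg_of_nonpos (a0 j) (hg j hj)
      · rw [a1 j hj, zero_mul]
    linarith
  have hpos : 0 < dt f (p v) := by
    by_contra hneg
    push Not at hneg
    have f0 := main f (fun u hu => by
      by_cases h : u = v
      · rw [h]; exact hneg
      · exact (hf u hu h).le.trans hneg)
    have hall : ∀ u ∈ F, u = v := by
      intro u hu
      by_contra h
      have := hf u hu h
      rw [f0, dt_zero_l, dt_zero_l] at this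
      exact lt_irrefl _ this
    have : ∃ g : E3, g ≠ 0 ∧ dt g (p v) = 0 := by
      by_cases h : p v 0 = 0 ∧ p v 1 = 0
      · refine ⟨![1, 0, 0], fun h => by simpa using congrFun h 0, by simp [dt, h.1]⟩
      · refine ⟨![p v 1, - p v 0, 0], fun h' => h ⟨?_, ?_⟩, by simp [dt]; ring⟩
        · simpa using congrFun h' 1
        · simpa using congrFun h' 0
    obtain ⟨g, g1, g2⟩ := this
    exact g1 (main g fun u hu => by rw [hall u hu, g2])
  refine ⟨(dt f (p v))⁻¹ • f, by rw [dt_smul_l, inv_mul_cancel₀ hpos.ne'], fun u hu hne => ?_⟩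
  rw [dt_smul_l, inv_mul_lt_iff₀ hpos, mul_one]
  exact hf u hu hne

end TriSec


section PolySec
variable {J : Type*} [Fintype J]

structure TriW {E : Type*} [AddCommGroup E] [Module ℝ E] (p : J → E) (G : Finset J)
    (τ : Finset (Finset J)) : Prop where
  sub : ∀ t ∈ τ, t ⊆ G
  card : ∀ t ∈ τ, t.card = 3
  cov : ∀ β : J → ℝ, (∀ x, 0 ≤ β x) → (∀ x, x ∉ G → β x = 0) → ∑ x, β x = 1 →
    ∃ t ∈ τ, ∃ α : J → ℝ, (∀ x, 0 ≤ α x) ∧ (∀ x, x ∉ t → α x = 0) ∧ ∑ x, α x = 1 ∧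
      ∑ x, α x • p x = ∑ x, β x • p x
  inj : ∀ t ∈ τ, ∀ t' ∈ τ, ∀ α β : J → ℝ, (∀ x, 0 ≤ α x) → (∀ x, 0 ≤ β x) →
    (∀ x, x ∉ t → α x = 0) → (∀ x, x ∉ t' → β x = 0) → ∑ x, α x = 1 → ∑ x, β x = 1 →
    ∑ x, α x • p x = ∑ x, β x • p x → α = β

lemma dts (p : J → E3) (k : E3) (α : J → ℝ) :
    dt k (∑ x, α x • p x) = ∑ x, α x * dt k (p x) := by
  rw [dt_sum_r]
  exact Finset.sum_congr rfl fun x _ => dt_smul_r _ _ _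

lemma no_mid {e a z : E3} {rx ry rw : ℝ} (hy : dt e (a + ry • z) = 1) (hx : dt e (a + rx • z) < 1)
    (hw : dt e (a + rw • z) < 1) (h1 : rx ≤ ry) (h2 : ry ≤ rw) : False := by
  rw [dt_add_r, dt_smul_r] at *
  have : 0 < (ry - rx) * dt e z := by linarith
  have h3 : 0 < dt e z := by
    by_contra hc
    push Not at hc
    nlinarith
  nlinarith

lemma line_two (p : J → E3) (F H : Finset J) (hHF : H ⊆ F)
    (hv : ∀ v ∈ F, ∃ e : E3, dt e (p v) = 1 ∧ ∀ u ∈ F, u ≠ v → dt e (p u) < 1)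
    (a z : E3) (hl : ∀ i ∈ H, ∃ r : ℝ, p i = a + r • z)
    {x y w : J} (hx : x ∈ H) (hy : y ∈ H) (hw : w ∈ H) (hxy : x ≠ y) (hxw : x ≠ w) (hyw : y ≠ w) :
    False := by
  have main : ∀ x ∈ H, ∀ y ∈ H, ∀ w ∈ H, y ≠ x → y ≠ w → ∀ rx ry rw : ℝ, p x = a + rx • z →
      p y = a + ry • z → p w = a + rw • z → rx ≤ ry → ry ≤ rw → False := by
    intro x hx y hy w hw n1 n2 rx ry rw ex ey ew l1 l2
    obtain ⟨e, e1, e2⟩ := hv y (hHF hy)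
    have f1 := e2 x (hHF hx) n1.symm
    have f2 := e2 w (hHF hw) n2.symm
    rw [ey] at e1; rw [ex] at f1; rw [ew] at f2
    exact no_mid e1 f1 f2 l1 l2
  obtain ⟨rx, ex⟩ := hl x hx
  obtain ⟨ry, ey⟩ := hl y hy
  obtain ⟨rw, ew⟩ := hl w hw
  rcases le_total rx ry with h1 | h1 <;> rcases le_total ry rw with h2 | h2 <;>
    rcases le_total rx rw with h3 | h3
  · exact main x hx y hy w hw hxy.symm hyw _ _ _ ex ey ew h1 h2
  · exact main x hx y hy w hw hxy.symm hyw _ _ _ ex ey ew h1 h2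
  · exact main x hx w hw y hy hxw.symm hyw.symm _ _ _ ex ew ey h3 h2
  · exact main w hw x hx y hy hxw hxy _ _ _ ew ex ey h3 h1
  · exact main y hy x hx w hw hxy hxw _ _ _ ey ex ew h1 h3
  · exact main y hy w hw x hx hyw.symm hxw.symm _ _ _ ey ew ex h2 h3
  · exact main w hw y hy x hx hyw hxy.symm _ _ _ ew ey ex h2 h1
  · exact main w hw y hy x hx hyw hxy.symm _ _ _ ew ey ex h2 h1

lemma line_uniq (p : J → E3) (F H : Finset J) (hHF : H ⊆ F)
    (hv : ∀ v ∈ F, ∃ e : E3, dt e (p v) = 1 ∧ ∀ u ∈ F, u ≠ v → dt e (p u) < 1)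
    (a z : E3) (hl : ∀ i ∈ H, ∃ r : ℝ, p i = a + r • z)
    (σ : J → ℝ) (hs : ∀ x, x ∉ H → σ x = 0) (h0 : ∑ x, σ x = 0) (h1 : ∑ x, σ x • p x = 0) :
    ∀ x, σ x = 0 := by
  by_contra hc
  push Not at hc
  obtain ⟨x, hx⟩ := hc
  have hxH : x ∈ H := by by_contra h; exact hx (hs x h)
  obtain ⟨y, hyx, hy⟩ : ∃ y, y ≠ x ∧ σ y ≠ 0 := by
    by_contra h
    push Not at h
    rw [Finset.sum_eq_single x (fun b _ hb => h b hb) (by simp)] at h0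
    exact hx h0
  have hyH : y ∈ H := by by_contra h; exact hy (hs y h)
  have rest : ∀ w, w ∉ ({x, y} : Finset J) → σ w = 0 := by
    intro w hw
    simp only [Finset.mem_insert, Finset.mem_singleton, not_or] at hw
    by_contra h
    have hwH : w ∈ H := by by_contra h'; exact h (hs w h')
    exact line_two p F H hHF hv a z hl hxH hyH hwH hyx.symm (Ne.symm hw.1) (Ne.symm hw.2)
  rw [← Finset.sum_subset (Finset.subset_univ ({x, y} : Finset J)) (fun u _ hu => rest u hu),
    Finset.sum_pair hyx.symm] at h0
  rw [← Finset.sum_subset (Finset.subset_univ ({x, y} : Finset J))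
    (fun u _ hu => by rw [rest u hu, zero_smul]), Finset.sum_pair hyx.symm] at h1
  have e : σ y = - σ x := by linarith
  rw [e, neg_smul, ← sub_eq_add_neg, ← smul_sub] at h1
  have h2 := (smul_eq_zero.1 h1).resolve_left hx
  obtain ⟨m, m1, m2⟩ := hv x (hHF hxH)
  have := m2 y (hHF hyH) hyx
  rw [← sub_eq_zero.1 h2, m1] at this
  exact lt_irrefl _ this

lemma cr_cr (d n m : E3) (h1 : dt d n = 0) (h2 : dt d m = 0) : cr d (cr n m) = 0 := by
  simp only [dt] at h1 h2
  apply ext3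
  · simp only [cr_0, cr_1, cr_2, Pi.zero_apply]
    linear_combination n 0 * h2 - m 0 * h1
  · simp only [cr_0, cr_1, cr_2, Pi.zero_apply]
    linear_combination n 1 * h2 - m 1 * h1
  · simp only [cr_0, cr_1, cr_2, Pi.zero_apply]
    linear_combination n 2 * h2 - m 2 * h1

def GoodF (F : Finset J) (p : J → E3) (G : Finset J) (n : E3) : Prop :=
  (∀ i ∈ F, dt n (p i) ≤ 1) ∧ (∀ i ∈ F, dt n (p i) = 1 ↔ i ∈ G) ∧
    Submodule.span ℝ (p '' (G : Set J)) = ⊤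

theorem poly3 (F : Finset J) (p : J → E3)
    (hc : ∀ y : E3, ∃ α : J → ℝ, (∀ j, 0 ≤ α j) ∧ (∀ j, j ∉ F → α j = 0) ∧ ∑ j, α j • p j = y)
    (hv : ∀ v ∈ F, ∃ e : E3, dt e (p v) = 1 ∧ ∀ u ∈ F, u ≠ v → dt e (p u) < 1)
    (τ : Finset J → Finset (Finset J))
    (hτ : ∀ G ⊆ F, ∀ n, GoodF F p G n → TriW p G (τ G)) :
    FanI F p ((F.powerset.filter fun G => ∃ n, GoodF F p G n).biUnion τ) := by
  have mT : ∀ t ∈ (F.powerset.filter fun G => ∃ n, GoodF F p G n).biUnion τ,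
      ∃ G ⊆ F, ∃ n, GoodF F p G n ∧ t ∈ τ G := by
    intro t ht
    obtain ⟨G, hG, ht⟩ := Finset.mem_biUnion.1 ht
    obtain ⟨hG, n, hn⟩ := Finset.mem_filter.1 hG
    exact ⟨G, Finset.mem_powerset.1 hG, n, hn, ht⟩
  have mT' : ∀ t, ∀ G ⊆ F, ∀ n, GoodF F p G n → t ∈ τ G →
      t ∈ (F.powerset.filter fun G => ∃ n, GoodF F p G n).biUnion τ := by
    intro t G hG n hn ht
    exact Finset.mem_biUnion.2 ⟨G, Finset.mem_filter.2 ⟨Finset.mem_powerset.2 hG, n, hn⟩, ht⟩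
  refine ⟨?_, ?_, ?_, ?_, ?_, hv⟩
  · intro t ht
    obtain ⟨G, hG, n, hn, ht⟩ := mT t ht
    exact ((hτ G hG n hn).sub t ht).trans hG
  · intro t ht
    obtain ⟨G, hG, n, hn, ht⟩ := mT t ht
    exact (hτ G hG n hn).card t ht
  · intro t ht t' ht' α β a1 b1 a2 b2 e
    obtain ⟨G, hG, n, hn, ht⟩ := mT t ht
    obtain ⟨G', hG', n', hn', ht'⟩ := mT t' ht'
    have sG := (hτ G hG n hn).sub t ht
    have sG' := (hτ G' hG' n' hn').sub t' ht'
    have half : ∀ G ⊆ F, ∀ n, GoodF F p G n → ∀ α β : J → ℝ, (∀ x, 0 ≤ β x) →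
        (∀ x, x ∉ G → α x = 0) → (∀ x, x ∉ F → β x = 0) →
        ∑ x, α x • p x = ∑ x, β x • p x → ∑ x, α x ≤ ∑ x, β x ∧
        (∑ x, α x = ∑ x, β x → ∀ x, x ∉ G → β x = 0) := by
      intro G hG n hn α β b1 a2 b2 e
      have e1 : ∑ x, α x = ∑ x, β x * dt n (p x) := by
        rw [← dts, ← e, dts]
        refine Finset.sum_congr rfl fun x _ => ?_
        by_cases hx : x ∈ G
        · rw [(hn.2.1 x (hG hx)).2 hx, mul_one]
        · rw [a2 x hx, zero_mul]
      have le : ∀ x ∈ Finset.univ, β x * dt n (p x) ≤ β x := fun x _ => by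
        by_cases hx : x ∈ F
        · have := mul_le_mul_of_nonneg_left (hn.1 x hx) (b1 x)
          rwa [mul_one] at this
        · rw [b2 x hx, zero_mul]
      refine ⟨e1 ▸ Finset.sum_le_sum le, fun h0 x hx => ?_⟩
      rw [e1] at h0
      have := (Finset.sum_eq_sum_iff_of_le le).1 h0 x (Finset.mem_univ x)
      by_cases hxF : x ∈ F
      · by_contra hb
        apply hx
        rw [← hn.2.1 x hxF]
        exact mul_left_cancel₀ hb (by rw [this, mul_one])
      · exact b2 x hxF
    have aG : ∀ x, x ∉ G → α x = 0 := fun x hx => a2 x (fun h => hx (sG h))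
    have bG' : ∀ x, x ∉ G' → β x = 0 := fun x hx => b2 x (fun h => hx (sG' h))
    have i1 := half G hG n hn α β b1 aG (fun x hx => bG' x (fun h => hx (hG' h))) e
    have i2 := half G' hG' n' hn' β α a1 bG' (fun x hx => aG x (fun h => hx (hG h))) e.symm
    have em := le_antisymm i1.1 i2.1
    have bG := i1.2 em
    have aG' := i2.2 em.symm
    by_cases hm : ∑ x, α x = 0
    · have z1 := (Finset.sum_eq_zero_iff_of_nonneg (fun x _ => a1 x)).1 hm
      rw [em] at hm
      have z2 := (Finset.sum_eq_zero_iff_of_nonneg (fun x _ => b1 x)).1 hm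
      ext x
      rw [z1 x (Finset.mem_univ x), z2 x (Finset.mem_univ x)]
    have hm0 : 0 < ∑ x, α x := lt_of_le_of_ne (Finset.sum_nonneg fun x _ => a1 x) (Ne.symm hm)
    by_cases hGG : G = G'
    · subst hGG
      set m := ∑ x, α x with hmdef
      have := (hτ G hG n hn).inj t ht t' ht' (fun x => m⁻¹ * α x) (fun x => m⁻¹ * β x)
        (fun x => mul_nonneg (inv_nonneg.2 hm0.le) (a1 x))
        (fun x => mul_nonneg (inv_nonneg.2 hm0.le) (b1 x))
        (fun x hx => by simp [a2 x hx]) (fun x hx => by simp [b2 x hx])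
        (by rw [← Finset.mul_sum, ← hmdef, inv_mul_cancel₀ hm])
        (by rw [← Finset.mul_sum, ← em, inv_mul_cancel₀ hm])
        (by simp only [mul_smul, ← Finset.smul_sum, e])
      ext x
      exact mul_left_cancel₀ (inv_ne_zero hm) (congrFun this x)
    · obtain ⟨a, ha⟩ : ∃ a, α a ≠ 0 := by
        by_contra h
        push Not at h
        exact hm (Finset.sum_eq_zero fun x _ => h x)
      have haG : a ∈ G := by by_contra h; exact ha (aG a h)
      have haG' : a ∈ G' := by by_contra h; exact ha (aG' a h)
      have na := (hn.2.1 a (hG haG)).2 haG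
      have na' := (hn'.2.1 a (hG haG)).2 haG'
      have hcr : cr n n' ≠ 0 := by
        intro h0
        have hn0 : n' ≠ 0 := by rintro rfl; rw [dt_zero_l] at na'; norm_num at na'
        obtain ⟨r, hr⟩ := Fan3.cr_par hn0 h0
        rw [hr, dt_smul_l, na', mul_one] at na
        rw [na, one_smul] at hr
        apply hGG
        ext i
        constructor
        · intro hi
          rw [← hn'.2.1 i (hG hi), ← hr, hn.2.1 i (hG hi)]; exact hi
        · intro hi
          rw [← hn.2.1 i (hG' hi), hr, hn'.2.1 i (hG' hi)]; exact hi
      have := line_uniq p F (G ∩ G') (Finset.inter_subset_left.trans hG) hv (p a) (cr n n') (by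
        intro i hi
        obtain ⟨hi, hi'⟩ := Finset.mem_inter.1 hi
        have ni := (hn.2.1 i (hG hi)).2 hi
        have ni' := (hn'.2.1 i (hG hi)).2 hi'
        obtain ⟨r, hr⟩ := Fan3.cr_par hcr (cr_cr (p i - p a) n n'
          (by rw [dt_comm, dt_sub_r, ni, na, sub_self])
          (by rw [dt_comm, dt_sub_r, ni', na', sub_self]))
        exact ⟨r, by rw [← hr]; abel⟩) (fun x => α x - β x) (by
        intro x hx
        by_cases hxG : x ∈ G
        · have : x ∉ G' := fun h => hx (Finset.mem_inter.2 ⟨hxG, h⟩)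
          simp [aG' x this, bG' x this]
        · simp [aG x hxG, bG x hxG])
        (by rw [Finset.sum_sub_distrib, em, sub_self])
        (by simp only [sub_smul]; rw [Finset.sum_sub_distrib, e, sub_self])
      ext x
      have := this x
      linarith
  · intro y
    have hcq : ∀ y : E3, ∃ α : J → ℝ, (∀ j, 0 ≤ α j) ∧
        ∑ j, α j • (if j ∈ F then p j else 0) = y := by
      intro y
      obtain ⟨α, a0, a1, a2⟩ := hc y
      refine ⟨α, a0, ?_⟩
      rw [← a2]
      refine Finset.sum_congr rfl fun j _ => ?_
      split_ifs with h
      · rfl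
      · rw [a1 j h]; simp
    obtain ⟨k, k1, k2, α, a0, a1, a2⟩ := ext_lem _ hcq y
    obtain ⟨n, hn⟩ := exists_dtL k
    set G : Finset J := F.filter fun i => dt n (p i) = 1 with hGdef
    have hG : G ⊆ F := Finset.filter_subset _ _
    have tight : ∀ j, k (if j ∈ F then p j else 0) = 1 ↔ j ∈ G := by
      intro j
      rw [hGdef, Finset.mem_filter]
      split_ifs with h
      · rw [hn]; simp [h]
      · simp [h]
    have hgood : GoodF F p G n := by
      refine ⟨fun i hi => ?_, fun i hi => ?_, ?_⟩
      · have := k1 i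
        rwa [if_pos hi, hn] at this
      · rw [hGdef, Finset.mem_filter]; simp [hi]
      · rw [← k2]
        congr 1
        ext z
        constructor
        · rintro ⟨i, hi, rfl⟩
          exact ⟨i, (tight i).2 hi, by dsimp only; rw [if_pos (hG hi)]⟩
        · rintro ⟨i, hi, rfl⟩
          have hi' := (tight i).1 hi
          exact ⟨i, hi', by dsimp only; rw [if_pos (hG hi')]⟩
    have aG : ∀ j, j ∉ G → α j = 0 := fun j hj => a1 j (fun h => hj ((tight j).1 h))
    have sy : ∑ j, α j • p j = y := by
      rw [← a2]
      refine Finset.sum_congr rfl fun j _ => ?_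
      by_cases hj : j ∈ G
      · rw [if_pos (hG hj)]
      · rw [aG j hj]; simp
    have W := hτ G hG n hgood
    by_cases hm : ∑ x, α x = 0
    · have z1 := (Finset.sum_eq_zero_iff_of_nonneg (fun x _ => a0 x)).1 hm
      obtain ⟨_, ⟨i, hi, _⟩, _⟩ := span_dd hgood.2.2
      obtain ⟨t, ht, -⟩ := W.cov (Pi.single i 1) (fun x => by
          rw [Pi.single_apply]; split_ifs <;> norm_num)
        (fun x hx => by
          rw [Pi.single_apply, if_neg]; rintro rfl; exact hx hi) (by simp)
      refine ⟨t, mT' t G hG n hgood ht, fun _ => 0, fun _ => le_rfl, fun _ _ => rfl, ?_⟩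
      rw [← sy]
      exact Finset.sum_congr rfl fun j hj => by rw [z1 j hj]
    · set m := ∑ x, α x with hmdef
      have hm0 : 0 < m := lt_of_le_of_ne (Finset.sum_nonneg fun x _ => a0 x) (Ne.symm hm)
      obtain ⟨t, ht, γ, g1, g2, g3, g4⟩ := W.cov (fun x => m⁻¹ * α x)
        (fun x => mul_nonneg (inv_nonneg.2 hm0.le) (a0 x))
        (fun x hx => by simp [aG x hx])
        (by rw [← Finset.mul_sum, ← hmdef, inv_mul_cancel₀ hm])
      refine ⟨t, mT' t G hG n hgood ht, fun x => m * γ x, fun x => mul_nonneg hm0.le (g1 x),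
        fun x hx => by simp [g2 x hx], ?_⟩
      simp only [mul_smul, ← Finset.smul_sum] at g4 ⊢
      rw [g4, smul_smul, mul_inv_cancel₀ hm, one_smul, sy]
  · intro t ht
    obtain ⟨G, hG, n, hn, ht⟩ := mT t ht
    refine ⟨n, fun x hx => ?_, hn.1⟩
    have := (hτ G hG n hn).sub t ht hx
    exact (hn.2.1 x (hG this)).2 this

end PolySec

set_option linter.unusedSectionVars false

section IndSec
variable {E : Type*} [NormedAddCommGroup E] [NormedSpace ℝ E] [FiniteDimensional ℝ E]
  {J : Type*} [Fintype J]

lemma hull_iff (q : J → E) (F : Finset J) (x : E) :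
    x ∈ convexHull ℝ (q '' (F : Set J)) ↔ ∃ α : J → ℝ, (∀ j, 0 ≤ α j) ∧ (∀ j, j ∉ F → α j = 0) ∧
      ∑ j, α j = 1 ∧ ∑ j, α j • q j = x := by
  constructor
  · intro hx
    have hconv : Convex ℝ {x : E | ∃ α : J → ℝ, (∀ j, 0 ≤ α j) ∧ (∀ j, j ∉ F → α j = 0) ∧
      ∑ j, α j = 1 ∧ ∑ j, α j • q j = x} := by
      rintro x ⟨α, a0, a1, a2, a3⟩ y ⟨β, b0, b1, b2, b3⟩ s t hs ht hst
      refine ⟨fun j => s * α j + t * β j, fun j => add_nonneg (mul_nonneg hs (a0 j))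
        (mul_nonneg ht (b0 j)), fun j hj => by simp [a1 j hj, b1 j hj], ?_, ?_⟩
      · rw [Finset.sum_add_distrib, ← Finset.mul_sum, ← Finset.mul_sum, a2, b2]; linarith
      · simp only [add_smul, mul_smul]
        rw [Finset.sum_add_distrib, ← Finset.smul_sum, ← Finset.smul_sum, a3, b3]
    refine convexHull_min ?_ hconv hx
    rintro _ ⟨i, hi, rfl⟩
    refine ⟨Pi.single i 1, fun j => ?_, fun j hj => ?_, by simp, ?_⟩
    · rw [Pi.single_apply]; split_ifs <;> norm_num
    · rw [Pi.single_apply, if_neg]; rintro rfl; exact hj hi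
    · rw [Finset.sum_eq_single i]
      · simp
      · intro b _ hb; simp [hb]
      · simp
  · rintro ⟨α, a0, a1, a2, rfl⟩
    rw [← Finset.sum_subset (Finset.subset_univ F) (fun u _ hu => by rw [a1 u hu, zero_smul])]
    rw [← Finset.sum_subset (Finset.subset_univ F) (fun u _ hu => a1 u hu)] at a2
    exact (convex_convexHull ℝ _).sum_mem (fun i _ => a0 i) a2
      (fun i hi => subset_convexHull ℝ _ ⟨i, hi, rfl⟩)

lemma ext_sub (q : J → E) (F : Finset J) (W : Submodule ℝ E) (hqW : ∀ i ∈ F, q i ∈ W)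
    (hc : ∀ y ∈ W, ∃ α : J → ℝ, (∀ j, 0 ≤ α j) ∧ (∀ j, j ∉ F → α j = 0) ∧ ∑ j, α j • q j = y)
    (y : E) (hy : y ∈ W) :
    ∃ k : E →ₗ[ℝ] ℝ, (∀ i ∈ F, k (q i) ≤ 1) ∧
      Submodule.span ℝ (q '' ((F.filter fun i => k (q i) = 1 : Finset J) : Set J)) = W ∧
      ∃ α : J → ℝ, (∀ j, 0 ≤ α j) ∧ (∀ j, j ∉ F.filter (fun i => k (q i) = 1) → α j = 0) ∧
        ∑ j, α j • q j = y := by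
  set q' : J → W := fun i => if h : i ∈ F then ⟨q i, hqW i h⟩ else 0 with hq'
  have hsum : ∀ α : J → ℝ, (∀ j, j ∉ F → α j = 0) →
      ((∑ j, α j • q' j : W) : E) = ∑ j, α j • q j := by
    intro α ha
    rw [Submodule.coe_sum]
    refine Finset.sum_congr rfl fun j _ => ?_
    by_cases hj : j ∈ F
    · simp [hq', hj]
    · simp [ha j hj]
  obtain ⟨k, k1, k2, α, a0, a1, a2⟩ := ext_lem q' (by
    rintro ⟨y, hy⟩
    obtain ⟨α, a0, a1, a2⟩ := hc y hy
    exact ⟨α, a0, Subtype.ext (by rw [hsum α a1, a2])⟩) ⟨y, hy⟩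
  obtain ⟨K, hK⟩ := LinearMap.exists_extend k
  have hKk : ∀ z : W, k z = K z := fun z => by rw [← hK]; rfl
  have hF : ∀ i ∈ F, (q' i : E) = q i := fun i hi => by simp [hq', hi]
  have hF' : ∀ i, i ∉ F → q' i = 0 := fun i hi => by simp [hq', hi]
  have tight : ∀ i, k (q' i) = 1 ↔ i ∈ F.filter fun i => K (q i) = 1 := by
    intro i
    rw [Finset.mem_filter]
    by_cases hi : i ∈ F
    · rw [hKk, hF i hi]; simp [hi]
    · rw [hF' i hi]; simp [hi]
  refine ⟨K, ?_, ?_, α, a0, fun j hj => a1 j (fun h => hj ((tight j).1 h)), ?_⟩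
  · intro i hi
    have := k1 i
    rwa [hKk, hF i hi] at this
  · have h1 := congrArg (Submodule.map W.subtype) k2
    rw [Submodule.map_span, Submodule.map_top, Submodule.range_subtype] at h1
    rw [← h1]
    congr 1
    ext z
    constructor
    · rintro ⟨i, hi, rfl⟩
      exact ⟨q' i, ⟨i, (tight i).2 hi, rfl⟩, hF i (Finset.mem_filter.1 hi).1⟩
    · rintro ⟨_, ⟨i, hi, rfl⟩, rfl⟩
      have := (tight i).1 hi
      exact ⟨i, this, (hF i (Finset.mem_filter.1 this).1).symm⟩
  · rw [← hsum, a2]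
    intro j hj
    refine a1 j ?_
    rw [hF' j hj]; simp

lemma cone_of_sum_zero (q : J → E) (F : Finset J) (h0 : ∑ i ∈ F, q i = 0) (y : E)
    (hy : y ∈ Submodule.span ℝ (q '' (F : Set J))) :
    ∃ α : J → ℝ, (∀ j, 0 ≤ α j) ∧ (∀ j, j ∉ F → α j = 0) ∧ ∑ j, α j • q j = y := by
  rw [Submodule.mem_span_image_finset_iff_exists_fun'] at hy
  obtain ⟨a, ha⟩ := hy
  refine ⟨fun j => if h : j ∈ F then a j + ∑ i ∈ F, |a i| else 0, fun j => ?_,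
    fun j hj => by simp [hj], ?_⟩
  · dsimp only
    split_ifs with hj
    · have h1 := Finset.single_le_sum (f := fun i => |a i|) (fun i _ => abs_nonneg _) hj
      have h2 := neg_abs_le (a j)
      linarith
    · exact le_rfl
  · rw [← Finset.sum_subset (Finset.subset_univ F) (fun u _ hu => by simp [hu])]
    rw [← ha]
    have : ∀ i ∈ F, (if h : i ∈ F then a i + ∑ i ∈ F, |a i| else 0) • q i
        = a i • q i + (∑ i ∈ F, |a i|) • q i := by
      intro i hi
      rw [dif_pos hi, add_smul]
    rw [Finset.sum_congr rfl this, Finset.sum_add_distrib, ← Finset.smul_sum, h0, smul_zero,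
      add_zero]

lemma finrank_sup_single (U : Submodule ℝ E) (x : E) (hx : x ∉ U) :
    Module.finrank ℝ (U ⊔ Submodule.span ℝ {x} : Submodule ℝ E) = Module.finrank ℝ U + 1 := by
  have h := Submodule.finrank_sup_add_finrank_inf_eq U (Submodule.span ℝ {x})
  have hx0 : x ≠ 0 := by rintro rfl; exact hx U.zero_mem
  have hi : U ⊓ Submodule.span ℝ {x} = ⊥ := by
    rw [eq_bot_iff]
    rintro z ⟨z1, z2⟩
    obtain ⟨r, rfl⟩ := Submodule.mem_span_singleton.1 z2
    by_cases hr : r = 0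
    · simp [hr]
    · exfalso; apply hx
      have := U.smul_mem r⁻¹ z1
      rwa [smul_smul, inv_mul_cancel₀ hr, one_smul] at this
  rw [hi, finrank_bot, finrank_span_singleton hx0] at h
  exact h

lemma exists_mid (W : Submodule ℝ E) (m : ℕ) (hW : m ≤ Module.finrank ℝ W) :
    ∀ N : ℕ, ∀ U : Submodule ℝ E, U ≤ W → Module.finrank ℝ U + N = m →
    ∃ U' : Submodule ℝ E, U ≤ U' ∧ U' ≤ W ∧ Module.finrank ℝ U' = m := by
  intro N
  induction N with
  | zero => intro U hU h; exact ⟨U, le_rfl, hU, h⟩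
  | succ N ih =>
    intro U hU h
    obtain ⟨x, hxW, hxU⟩ : ∃ x ∈ W, x ∉ U := by
      by_contra hc
      push Not at hc
      have := le_antisymm hU hc
      subst this
      omega
    obtain ⟨U', h1, h2, h3⟩ := ih (U ⊔ Submodule.span ℝ {x})
      (sup_le hU ((Submodule.span_singleton_le_iff_mem x W).2 hxW))
      (by rw [finrank_sup_single U x hxU]; omega)
    exact ⟨U', le_sup_left.trans h1, h2, h3⟩

lemma exists_phi (W : Submodule ℝ E) (hW : 3 ≤ Module.finrank ℝ W) (x y : E) (hx : x ∈ W)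
    (hy : y ∈ W) : ∃ φ : E3 →ₗ[ℝ] E, Function.Injective φ ∧ (∀ z, φ z ∈ W) ∧
      (∃ a, φ a = x) ∧ ∃ b, φ b = y := by
  set U : Submodule ℝ E := Submodule.span ℝ (Set.range ![x, y])
  have hU : U ≤ W := by
    apply Submodule.span_le.2
    rintro _ ⟨i, rfl⟩
    fin_cases i
    · exact hx
    · exact hy
  have hr : Module.finrank ℝ U ≤ 2 := by
    have := finrank_range_le_card (R := ℝ) ![x, y]
    simpa [Set.finrank] using this
  obtain ⟨U', h1, h2, h3⟩ := exists_mid W 3 hW (3 - Module.finrank ℝ U) U hU (by omega)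
  let e : E3 ≃ₗ[ℝ] U' := LinearEquiv.ofFinrankEq E3 U' (by rw [h3]; exact Module.finrank_fin_fun ℝ)
  have hm : ∀ i, ![x, y] i ∈ U' := fun i => h1 (Submodule.subset_span ⟨i, rfl⟩)
  refine ⟨U'.subtype.comp e.toLinearMap, ?_, fun z => h2 (e z).2, ⟨e.symm ⟨x, hm 0⟩, ?_⟩,
    ⟨e.symm ⟨y, hm 1⟩, ?_⟩⟩
  · exact U'.injective_subtype.comp e.injective
  · simp
  · simp

/-- face index sets -/
def FaceSet (p : J → E) (F : Finset J) : Prop :=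
  ∃ (l : E →ₗ[ℝ] ℝ) (c : ℝ), (∀ i, l (p i) ≤ c) ∧ ∀ i, i ∈ F ↔ l (p i) = c

lemma facet_face (p : J → E) (F : Finset J) (hF : FaceSet p F) (k : E →ₗ[ℝ] ℝ) (c : E)
    (hk : ∀ i ∈ F, k (p i - c) ≤ 1) : FaceSet p (F.filter fun i => k (p i - c) = 1) := by
  obtain ⟨l, s, h1, h2⟩ := hF
  have c1 : ∀ a b : ℝ, 0 < a → ∀ᶠ e in nhdsWithin (0:ℝ) (Set.Ioi 0), 0 < a + e * b := by
    intro a b ha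
    have : Filter.Tendsto (fun e : ℝ => a + e * b) (nhdsWithin 0 (Set.Ioi 0)) (nhds (a + 0 * b)) :=
      (Continuous.tendsto (by fun_prop) 0).mono_left nhdsWithin_le_nhds
    exact this.eventually (lt_mem_nhds (by simpa using ha))
  have e1 : ∀ᶠ e in nhdsWithin (0:ℝ) (Set.Ioi 0), ∀ j, j ∉ F →
      0 < (s - l (p j)) + e * (1 + k c - k (p j)) :=
    Filter.eventually_all.2 fun j => by
      by_cases hj : j ∈ F
      · exact Filter.Eventually.of_forall fun e h => absurd hj h
      · have : l (p j) < s := lt_of_le_of_ne (h1 j) (fun h => hj ((h2 j).2 h))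
        filter_upwards [c1 _ (1 + k c - k (p j)) (sub_pos.2 this)] with e he _ using he
  obtain ⟨e, he, hpos⟩ := (e1.and self_mem_nhdsWithin).exists
  have hpos : 0 < e := hpos
  have hle : ∀ i ∈ F, k (p i) ≤ 1 + k c := fun i hi => by
    have := hk i hi
    rw [map_sub] at this; linarith
  refine ⟨l + e • k, s + e * (1 + k c), fun i => ?_, fun i => ?_⟩
  · simp only [LinearMap.add_apply, LinearMap.smul_apply, smul_eq_mul]
    by_cases hi : i ∈ F
    · have := mul_le_mul_of_nonneg_left (hle i hi) hpos.le
      linarith [h1 i]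
    · have := he i hi
      nlinarith
  · simp only [LinearMap.add_apply, LinearMap.smul_apply, smul_eq_mul, Finset.mem_filter]
    by_cases hi : i ∈ F
    · rw [(h2 i).1 hi, map_sub]
      constructor
      · rintro ⟨-, h⟩
        have : k (p i) = 1 + k c := by linarith
        rw [this]
      · intro h
        have h' : e * k (p i) = e * (1 + k c) := by linarith
        have := mul_left_cancel₀ hpos.ne' h'
        exact ⟨hi, by linarith⟩
    · constructor
      · rintro ⟨h, -⟩; exact absurd h hi
      · intro h
        have := he i hi
        exfalso; nlinarith

lemma facet_dim (p : J → E) (G : Finset J) (k : E →ₗ[ℝ] ℝ) (c : E) (W : Submodule ℝ E)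
    (hG : ∀ i ∈ G, k (p i - c) = 1) (hs : Submodule.span ℝ ((fun i => p i - c) '' (G : Set J)) = W)
    (hW : W ≠ ⊥) : Module.finrank ℝ (vectorSpan ℝ (p '' (G : Set J))) + 1 = Module.finrank ℝ W := by
  obtain ⟨j0, hj0⟩ : ∃ j, j ∈ G := by
    by_contra h
    push Not at h
    apply hW
    rw [← hs, Finset.eq_empty_of_forall_notMem h]; simp
  have hker : vectorSpan ℝ (p '' (G : Set J)) ≤ LinearMap.ker k := by
    rw [vectorSpan_def]
    apply Submodule.span_le.2
    rintro _ ⟨_, ⟨i, hi, rfl⟩, _, ⟨j, hj, rfl⟩, rfl⟩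
    have h1 := hG i hi
    have h2 := hG j hj
    simp only [vsub_eq_sub, SetLike.mem_coe, LinearMap.mem_ker]
    rw [map_sub] at *; linarith
  have hn : p j0 - c ∉ vectorSpan ℝ (p '' (G : Set J)) := fun h => by
    have := hker h
    rw [LinearMap.mem_ker, hG j0 hj0] at this
    norm_num at this
  rw [← finrank_sup_single _ _ hn]
  have hmem : ∀ i ∈ G, p i - c ∈ W := fun i hi => hs ▸ Submodule.subset_span ⟨i, hi, rfl⟩
  have heq : vectorSpan ℝ (p '' (G : Set J)) ⊔ Submodule.span ℝ {p j0 - c} = W := by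
    apply le_antisymm
    · apply sup_le
      · rw [vectorSpan_def]
        apply Submodule.span_le.2
        rintro _ ⟨_, ⟨i, hi, rfl⟩, _, ⟨j, hj, rfl⟩, rfl⟩
        have := W.sub_mem (hmem i hi) (hmem j hj)
        simpa using this
      · exact (Submodule.span_singleton_le_iff_mem _ _).2 (hmem j0 hj0)
    · rw [← hs]
      apply Submodule.span_le.2
      rintro _ ⟨i, hi, rfl⟩
      have : p i - c = (p i - p j0) + (p j0 - c) := by abel
      simp only [SetLike.mem_coe]
      rw [this]
      refine Submodule.add_mem _ (Submodule.mem_sup_left ?_)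
        (Submodule.mem_sup_right (Submodule.mem_span_singleton_self _))
      exact vsub_mem_vectorSpan ℝ ⟨i, hi, rfl⟩ ⟨j0, hj0, rfl⟩
  rw [heq]

lemma centroid_facts (p : J → E) (F : Finset J) (hF : F.Nonempty) : ∃ c : E,
    ∑ i ∈ F, (p i - c) = 0 ∧
    Submodule.span ℝ ((fun i => p i - c) '' (F : Set J)) = vectorSpan ℝ (p '' (F : Set J)) := by
  have hcard : (F.card : ℝ) ≠ 0 := by exact_mod_cast hF.card_pos.ne'
  refine ⟨(F.card : ℝ)⁻¹ • ∑ i ∈ F, p i, ?_, ?_⟩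
  · rw [Finset.sum_sub_distrib, Finset.sum_const, ← Nat.cast_smul_eq_nsmul ℝ, smul_smul,
      mul_inv_cancel₀ hcard, one_smul, sub_self]
  · apply le_antisymm
    · apply Submodule.span_le.2
      rintro _ ⟨i, hi, rfl⟩
      have : p i - (F.card : ℝ)⁻¹ • ∑ i ∈ F, p i = (F.card : ℝ)⁻¹ • ∑ j ∈ F, (p i - p j) := by
        rw [Finset.sum_sub_distrib, Finset.sum_const, ← Nat.cast_smul_eq_nsmul ℝ, smul_sub,
          smul_smul, inv_mul_cancel₀ hcard, one_smul]
      simp only [SetLike.mem_coe]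
      rw [this]
      exact Submodule.smul_mem _ _ (Submodule.sum_mem _ fun j hj =>
        vsub_mem_vectorSpan ℝ ⟨i, hi, rfl⟩ ⟨j, hj, rfl⟩)
    · rw [vectorSpan_def]
      apply Submodule.span_le.2
      rintro _ ⟨_, ⟨i, hi, rfl⟩, _, ⟨j, hj, rfl⟩, rfl⟩
      have := Submodule.sub_mem _
        (Submodule.subset_span (R := ℝ) (s := ((fun i => p i - (F.card : ℝ)⁻¹ • ∑ i ∈ F, p i) ''
          (F : Set J))) ⟨i, hi, rfl⟩)
        (Submodule.subset_span ⟨j, hj, rfl⟩)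
      simpa using this

lemma bilin_zero (p : J → E) (w : J → E →ₗ[ℝ] ℝ) (G : Finset J)
    (hg : ∀ i ∈ G, ∀ j ∈ G, (w i - w j) (p i - p j) = 0) (σ : J → ℝ)
    (h0 : ∀ i, i ∉ G → σ i = 0) (h1 : ∑ i, σ i = 0) (c : E) :
    (∑ i, σ i • w i) (∑ i, σ i • (p i - c)) = 0 := by
  have hc : ∑ i, σ i • (p i - c) = ∑ i, σ i • p i := by
    simp only [smul_sub]
    rw [Finset.sum_sub_distrib, ← Finset.sum_smul, h1, zero_smul, sub_zero]
  have z : ∑ i, ∑ j, σ i * σ j * (w i - w j) (p i - p j) = 0 := by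
    refine Finset.sum_eq_zero fun i _ => Finset.sum_eq_zero fun j _ => ?_
    by_cases hi : i ∈ G
    · by_cases hj : j ∈ G
      · rw [hg i hi j hj, mul_zero]
      · rw [h0 j hj]; ring
    · rw [h0 i hi]; ring
  have e : (∑ i, σ i • w i) (∑ i, σ i • p i) = ∑ i, ∑ j, σ i * σ j * (w i) (p j) := by
    rw [LinearMap.sum_apply]
    refine Finset.sum_congr rfl fun i _ => ?_
    rw [LinearMap.smul_apply, map_sum, Finset.smul_sum]
    refine Finset.sum_congr rfl fun j _ => ?_
    rw [map_smul, smul_eq_mul, smul_eq_mul]; ring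
  have e' : ∑ i, ∑ j, σ i * σ j * (w j) (p i) = ∑ i, ∑ j, σ i * σ j * (w i) (p j) := by
    rw [Finset.sum_comm]
    exact Finset.sum_congr rfl fun i _ => Finset.sum_congr rfl fun j _ => by ring
  have f1 : ∑ i, ∑ j, σ i * σ j * (w i) (p i) = 0 := by
    refine Finset.sum_eq_zero fun i _ => ?_
    have : ∀ j ∈ Finset.univ, σ i * σ j * (w i) (p i) = σ j * (σ i * (w i) (p i)) :=
      fun j _ => by ring
    rw [Finset.sum_congr rfl this, ← Finset.sum_mul, h1, zero_mul]
  have f2 : ∑ i, ∑ j, σ i * σ j * (w j) (p j) = 0 := by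
    rw [Finset.sum_comm, ← f1]
    exact Finset.sum_congr rfl fun i _ => Finset.sum_congr rfl fun j _ => by ring
  have s : ∑ i, ∑ j, σ i * σ j * (w i - w j) (p i - p j) =
      ∑ i, ∑ j, σ i * σ j * (w i) (p i) + ∑ i, ∑ j, σ i * σ j * (w j) (p j)
      - ∑ i, ∑ j, σ i * σ j * (w i) (p j) - ∑ i, ∑ j, σ i * σ j * (w j) (p i) := by
    simp only [← Finset.sum_add_distrib, ← Finset.sum_sub_distrib]
    refine Finset.sum_congr rfl fun i _ => Finset.sum_congr rfl fun j _ => ?_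
    rw [LinearMap.sub_apply, map_sub, map_sub]; ring
  rw [hc, e]
  linarith

end IndSec

set_option linter.unusedSectionVars false

section IndSec2
variable {E : Type*} [NormedAddCommGroup E] [NormedSpace ℝ E] [FiniteDimensional ℝ E]
  {J : Type*} [Fintype J]

lemma base3 (p : J → E) (w : J → E →ₗ[ℝ] ℝ) (F : Finset J) (hF : FaceSet p F)
    (hv : ∀ i, ∃ l : E →ₗ[ℝ] ℝ, ∀ j, j ≠ i → l (p j) < l (p i))
    (τ : Finset J → Finset (Finset J))
    (hτ : ∀ G, FaceSet p G → Module.finrank ℝ (vectorSpan ℝ (p '' (G : Set J))) = 2 →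
      TriW p G (τ G) ∧ ∀ t ∈ τ G, ∀ u ∈ t, ∀ v ∈ t, (w u - w v) (p u - p v) = 0)
    (hdim : Module.finrank ℝ (vectorSpan ℝ (p '' (F : Set J))) = 3) :
    ∀ u ∈ F, ∀ v ∈ F, (w u - w v) (p u - p v) = 0 := by
  rcases F.eq_empty_or_nonempty with rfl | hne
  · intro u hu; simp at hu
  obtain ⟨c, c0, c1⟩ := centroid_facts p F hne
  set W := vectorSpan ℝ (p '' (F : Set J)) with hW
  have hW0 : W ≠ ⊥ := by
    intro h; rw [h, finrank_bot] at hdim; norm_num at hdim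
  have hqW : ∀ i ∈ F, p i - c ∈ W := fun i hi => c1 ▸ Submodule.subset_span ⟨i, hi, rfl⟩
  have hcone : ∀ y ∈ W, ∃ α : J → ℝ, (∀ j, 0 ≤ α j) ∧ (∀ j, j ∉ F → α j = 0) ∧
      ∑ j, α j • (p j - c) = y := fun y hy =>
    cone_of_sum_zero (fun i => p i - c) F c0 y (by rw [c1]; exact hy)
  let e : E3 ≃ₗ[ℝ] W := LinearEquiv.ofFinrankEq E3 W (by rw [hdim]; exact Module.finrank_fin_fun ℝ)
  set φ : E3 →ₗ[ℝ] E := W.subtype.comp e.toLinearMap with hφ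
  have hinj : Function.Injective φ := W.injective_subtype.comp e.injective
  have hφW : ∀ z, φ z ∈ W := fun z => (e z).2
  set r : J → E3 := fun i => if h : i ∈ F then e.symm ⟨p i - c, hqW i h⟩ else 0 with hr
  have hre : ∀ i ∈ F, φ (r i) = p i - c := by
    intro i hi
    simp [hr, hφ, hi]
  have hrs : ∀ α : J → ℝ, (∀ j, j ∉ F → α j = 0) →
      φ (∑ j, α j • r j) = ∑ j, α j • (p j - c) := by
    intro α ha
    rw [map_sum]
    refine Finset.sum_congr rfl fun j _ => ?_
    by_cases hj : j ∈ F
    · rw [map_smul, hre j hj]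
    · rw [ha j hj]; simp
  have hc3 : ∀ y : E3, ∃ α : J → ℝ, (∀ j, 0 ≤ α j) ∧ (∀ j, j ∉ F → α j = 0) ∧
      ∑ j, α j • r j = y := by
    intro y
    obtain ⟨α, a0, a1, a2⟩ := hcone (φ y) (hφW y)
    exact ⟨α, a0, a1, hinj (by rw [hrs α a1, a2])⟩
  have hv3 : ∀ v ∈ F, ∃ e : E3, dt e (r v) = 1 ∧ ∀ u ∈ F, u ≠ v → dt e (r u) < 1 := by
    intro v hvF
    obtain ⟨l, hl⟩ := hv v
    obtain ⟨f, hf⟩ : ∃ f : E3, ∀ x, l (φ x) = dt f x := exists_dtL (l.comp φ)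
    refine vtx_norm r F hc3 v f fun u hu hne => ?_
    rw [← hf, ← hf, hre u hu, hre v hvF, map_sub,
      map_sub]
    linarith [hl u hne]
  have hfac : ∀ G ⊆ F, ∀ n, GoodF F r G n → FaceSet p G ∧
      Module.finrank ℝ (vectorSpan ℝ (p '' (G : Set J))) = 2 := by
    intro G hG n hn
    obtain ⟨k, hk⟩ := LinearMap.exists_extend ((dtL n).comp e.symm.toLinearMap)
    have hkr : ∀ i ∈ F, k (p i - c) = dt n (r i) := by
      intro i hi
      have := LinearMap.congr_fun hk ⟨p i - c, hqW i hi⟩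
      simp only [LinearMap.comp_apply, Submodule.subtype_apply, LinearEquiv.coe_coe] at this
      rw [this]
      simp [hr, hi, dtL]
    have hGe : G = F.filter fun i => k (p i - c) = 1 := by
      ext i
      rw [Finset.mem_filter]
      constructor
      · intro hi
        exact ⟨hG hi, by rw [hkr i (hG hi)]; exact (hn.2.1 i (hG hi)).2 hi⟩
      · rintro ⟨hi, h⟩
        rw [hkr i hi] at h
        exact (hn.2.1 i hi).1 h
    refine ⟨hGe ▸ facet_face p F hF k c (fun i hi => by rw [hkr i hi]; exact hn.1 i hi), ?_⟩
    have := facet_dim p G k c W (fun i hi => by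
        rw [hkr i (hG hi)]; exact (hn.2.1 i (hG hi)).2 hi) (by
        have h1 := congrArg (Submodule.map φ) hn.2.2
        rw [Submodule.map_span, Submodule.map_top] at h1
        have h2 : LinearMap.range φ = W := by
          rw [hφ, LinearMap.range_comp, LinearEquiv.range, Submodule.map_top,
            Submodule.range_subtype]
        rw [h2, Set.image_image] at h1
        rw [← h1]
        congr 1
        exact Set.image_congr fun i hi => (hre i (hG hi)).symm) hW0
    omega
  have hfan := poly3 F r hc3 hv3 τ (by
    intro G hG n hn
    obtain ⟨g1, g2⟩ := hfac G hG n hn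
    have T := (hτ G g1 g2).1
    have pr : ∀ α : J → ℝ, (∀ j, j ∉ G → α j = 0) → ∑ j, α j = 1 →
        ∑ j, α j • p j = φ (∑ j, α j • r j) + c := by
      intro α a1 a2
      rw [hrs α (fun j hj => a1 j (fun h => hj (hG h)))]
      simp only [smul_sub]
      rw [Finset.sum_sub_distrib, ← Finset.sum_smul, a2, one_smul, sub_add_cancel]
    refine ⟨T.sub, T.card, ?_, ?_⟩
    · intro β b0 b1 b2
      obtain ⟨t, ht, α, a0, a1, a2, a3⟩ := T.cov β b0 b1 b2
      refine ⟨t, ht, α, a0, a1, a2, hinj ?_⟩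
      rw [pr α (fun j hj => a1 j (fun h => hj (T.sub t ht h))) a2, pr β b1 b2] at a3
      exact add_right_cancel a3
    · intro t ht t' ht' α β a0 b0 a1 b1 a2 b2 h
      refine T.inj t ht t' ht' α β a0 b0 a1 b1 a2 b2 ?_
      rw [pr α (fun j hj => a1 j (fun h => hj (T.sub t ht h))) a2,
        pr β (fun j hj => b1 j (fun h => hj (T.sub t' ht' h))) b2, h])
  have hex : ∀ i, ∃ f : E3, ∀ x, w i (φ x) = dt f x := fun i => exists_dtL ((w i).comp φ)
  choose w3 hw3 using hex
  have conv : ∀ u ∈ F, ∀ v ∈ F, dt (w3 u - w3 v) (r u - r v) = (w u - w v) (p u - p v) := by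
    intro u hu v hv
    rw [dt_sub_l, ← hw3, ← hw3, ← LinearMap.sub_apply,
      map_sub, hre u hu, hre v hv, sub_sub_sub_cancel_right]
  intro u hu v hv
  rw [← conv u hu v hv]
  refine hfan.base w3 ?_ u hu v hv
  intro t ht u hu v hv
  have hsub := hfan.sub t ht
  rw [conv u (hsub hu) v (hsub hv)]
  obtain ⟨G, hG, ht⟩ := Finset.mem_biUnion.1 ht
  obtain ⟨hG, n, hn⟩ := Finset.mem_filter.1 hG
  obtain ⟨g1, g2⟩ := hfac G (Finset.mem_powerset.1 hG) n hn
  exact (hτ G g1 g2).2 t ht u hu v hv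

end IndSec2

set_option linter.unusedSectionVars false

section IndSec3
variable {E : Type*} [NormedAddCommGroup E] [NormedSpace ℝ E] [FiniteDimensional ℝ E]
  {J : Type*} [Fintype J]

lemma rep_vertex (q : J → E) (F : Finset J) (l : E →ₗ[ℝ] ℝ) (u : J)
    (hl : ∀ j, j ≠ u → l (q j) < l (q u)) (α : J → ℝ) (a0 : ∀ j, 0 ≤ α j) (a1 : ∑ j, α j = 1) :
    l (∑ j, α j • q j) ≤ l (q u) ∧ (l (q u) ≤ l (∑ j, α j • q j) → α = Pi.single u 1) := by
  have e : l (∑ j, α j • q j) = ∑ j, α j * l (q j) := by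
    rw [map_sum]; exact Finset.sum_congr rfl fun j _ => by rw [map_smul, smul_eq_mul]
  have e2 : l (q u) = ∑ j, α j * l (q u) := by rw [← Finset.sum_mul, a1, one_mul]
  have le : ∀ j ∈ Finset.univ, α j * l (q j) ≤ α j * l (q u) := fun j _ => by
    by_cases h : j = u
    · rw [h]
    · exact mul_le_mul_of_nonneg_left (hl j h).le (a0 j)
  have hle : l (∑ j, α j • q j) ≤ l (q u) := by
    rw [e, e2]; exact Finset.sum_le_sum le
  refine ⟨hle, fun h => ?_⟩
  have h0 := le_antisymm hle h
  rw [e, e2] at h0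
  have h1 := (Finset.sum_eq_sum_iff_of_le le).1 h0
  have h2 : ∀ j, j ≠ u → α j = 0 := by
    intro j hj
    by_contra hb
    exact absurd (mul_left_cancel₀ hb (h1 j (Finset.mem_univ j))) (ne_of_lt (hl j hj))
  have h3 : α u = 1 := by
    rw [← a1, Finset.sum_eq_single u (fun b _ hb => h2 b hb) (by simp)]
  ext j
  rw [Pi.single_apply]
  split_ifs with h
  · rw [h, h3]
  · exact h2 j h

/-- finiteness of extreme points of a slice -/
lemma slice_finite (q : J → E) (F : Finset J) (φ : E3 →ₗ[ℝ] E) :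
    (Set.extremePoints ℝ (φ ⁻¹' (convexHull ℝ (q '' (F : Set J))))).Finite := by
  set Q := φ ⁻¹' (convexHull ℝ (q '' (F : Set J))) with hQ
  have hrep : ∀ x ∈ Q.extremePoints ℝ, ∃ α : J → ℝ, (∀ j, 0 ≤ α j) ∧ (∀ j, j ∉ F → α j = 0) ∧
      ∑ j, α j = 1 ∧ ∑ j, α j • q j = φ x := fun x hx => (hull_iff q F (φ x)).1 hx.1
  choose! A a0 a1 a2 a3 using hrep
  refine Set.Finite.of_finite_image (f := fun x => Finset.univ.filter fun j => A x j ≠ 0)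
    (Set.toFinite _) ?_
  intro x hx y hy hxy
  by_contra hne
  have c1 : ∀ᶠ e in nhdsWithin (0:ℝ) (Set.Ioi 0), ∀ j, 0 ≤ A x j - e * (A y j - A x j) := by
    refine Filter.eventually_all.2 fun j => ?_
    by_cases hj : A x j = 0
    · have : j ∉ Finset.univ.filter fun j => A y j ≠ 0 := by
        dsimp only at hxy
        rw [← hxy]; simp [hj]
      have : A y j = 0 := by simpa using this
      exact Filter.Eventually.of_forall fun e => by rw [hj, this]; simp
    · have hpos : 0 < A x j := lt_of_le_of_ne (a0 x hx j) (Ne.symm hj)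
      have ht : Filter.Tendsto (fun e : ℝ => A x j - e * (A y j - A x j))
          (nhdsWithin 0 (Set.Ioi 0)) (nhds (A x j - 0 * (A y j - A x j))) :=
        (Continuous.tendsto (by fun_prop) 0).mono_left nhdsWithin_le_nhds
      filter_upwards [ht.eventually (lt_mem_nhds (by simpa using hpos))] with e he using he.le
  obtain ⟨e, he, hpos⟩ := (c1.and self_mem_nhdsWithin).exists
  have hpos : 0 < e := hpos
  have hz : x - e • (y - x) ∈ Q := by
    rw [hQ, Set.mem_preimage, hull_iff]
    refine ⟨fun j => A x j - e * (A y j - A x j), he, fun j hj => ?_, ?_, ?_⟩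
    · dsimp only; rw [a1 x hx j hj, a1 y hy j hj]; simp
    · rw [Finset.sum_sub_distrib, ← Finset.mul_sum, Finset.sum_sub_distrib, a2 x hx, a2 y hy]; simp
    · simp only [sub_smul, mul_smul]
      rw [Finset.sum_sub_distrib, ← Finset.smul_sum, Finset.sum_sub_distrib, a3 x hx, a3 y hy]
      rw [map_sub, map_smul, map_sub]
  have hs : x ∈ openSegment ℝ (x - e • (y - x)) y := by
    refine ⟨1 / (1 + e), e / (1 + e), by positivity, by positivity, by field_simp, ?_⟩
    ext i
    simp only [Pi.add_apply, Pi.smul_apply, Pi.sub_apply, smul_eq_mul]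
    field_simp
    ring
  have := (mem_extremePoints.1 hx).2 _ hz y hy.1 hs
  exact hne this.2.symm

lemma step (p : J → E) (w : J → E →ₗ[ℝ] ℝ) (F : Finset J) (hF : FaceSet p F)
    (hv : ∀ i, ∃ l : E →ₗ[ℝ] ℝ, ∀ j, j ≠ i → l (p j) < l (p i)) (N : ℕ) (hN : 3 ≤ N)
    (hdim : Module.finrank ℝ (vectorSpan ℝ (p '' (F : Set J))) = N + 1)
    (ih : ∀ G, FaceSet p G → Module.finrank ℝ (vectorSpan ℝ (p '' (G : Set J))) = N →
      ∀ u ∈ G, ∀ v ∈ G, (w u - w v) (p u - p v) = 0) :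
    ∀ u ∈ F, ∀ v ∈ F, (w u - w v) (p u - p v) = 0 := by
  rcases F.eq_empty_or_nonempty with rfl | hne
  · intro u hu; simp at hu
  obtain ⟨c, c0, c1⟩ := centroid_facts p F hne
  set W := vectorSpan ℝ (p '' (F : Set J)) with hW
  have hW0 : W ≠ ⊥ := by
    intro h; rw [h, finrank_bot] at hdim; norm_num at hdim
  have hqW : ∀ i ∈ F, p i - c ∈ W := fun i hi => c1 ▸ Submodule.subset_span ⟨i, hi, rfl⟩
  have hcone : ∀ y ∈ W, ∃ α : J → ℝ, (∀ j, 0 ≤ α j) ∧ (∀ j, j ∉ F → α j = 0) ∧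
      ∑ j, α j • (p j - c) = y := fun y hy =>
    cone_of_sum_zero (fun i => p i - c) F c0 y (by rw [c1]; exact hy)
  intro u hu v hvF
  obtain ⟨φ, hinj, hφW, ⟨a, ha⟩, ⟨b, hb⟩⟩ := exists_phi W (by omega) _ _ (hqW u hu) (hqW v hvF)
  set q : J → E := fun i => p i - c with hq
  set Q := φ ⁻¹' (convexHull ℝ (q '' (F : Set J))) with hQ
  set X := Q.extremePoints ℝ with hX
  have hXf : X.Finite := slice_finite q F φ
  have hφc : Continuous φ := LinearMap.continuous_of_finiteDimensional φ
  have hQc : IsCompact Q :=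
    (LinearMap.isClosedEmbedding_of_injective (LinearMap.ker_eq_bot.2 hinj)).isCompact_preimage
      (((Finset.finite_toSet F).image q).isCompact_convexHull ℝ)
  have hQconv : Convex ℝ Q := (convex_convexHull ℝ _).linear_preimage φ
  have hQX : convexHull ℝ X = Q := by
    rw [← closure_convexHull_extremePoints hQc hQconv]
    exact ((hXf.isClosed_convexHull ℝ).closure_eq).symm
  -- mass lemma
  have hmass : ∀ (y : E3) (β : J → ℝ), (∀ j, 0 ≤ β j) → (∀ j, j ∉ F → β j = 0) →
      ∑ j, β j • q j = φ y → 0 < ∑ j, β j → (∑ j, β j)⁻¹ • y ∈ Q := by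
    intro y β b0 b1 b2 hpos
    rw [hQ, Set.mem_preimage, hull_iff]
    refine ⟨fun j => (∑ j, β j)⁻¹ * β j, fun j => mul_nonneg (inv_nonneg.2 hpos.le) (b0 j),
      fun j hj => by dsimp only; rw [b1 j hj, mul_zero], ?_, ?_⟩
    · rw [← Finset.mul_sum, inv_mul_cancel₀ hpos.ne']
    · simp only [mul_smul]
      rw [← Finset.smul_sum, b2, map_smul]
  have : Fintype X := hXf.fintype
  have himg : ((fun x : X => (x : E3)) '' ((Finset.univ : Finset X) : Set X)) = X := by
    rw [Finset.coe_univ, Set.image_univ, Subtype.range_coe]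
  have hcX : ∀ y : E3, ∃ α : X → ℝ, (∀ j, 0 ≤ α j) ∧ ∑ j, α j • (j : E3) = y := by
    intro y
    obtain ⟨β, b0, b1, b2⟩ := hcone (φ y) (hφW y)
    rcases (Finset.sum_nonneg fun j (_ : j ∈ Finset.univ) => b0 j).eq_or_lt with h | h
    · have z := (Finset.sum_eq_zero_iff_of_nonneg (fun x _ => b0 x)).1 h.symm
      refine ⟨fun _ => 0, fun _ => le_rfl, ?_⟩
      apply hinj
      rw [← b2]
      simp only [zero_smul, Finset.sum_const_zero, map_zero]
      exact (Finset.sum_eq_zero fun j hj => by rw [z j hj, zero_smul]).symm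
    · have := hmass y β b0 b1 b2 h
      rw [← hQX, ← himg, hull_iff] at this
      obtain ⟨γ, g0, g1, g2, g3⟩ := this
      refine ⟨fun x => (∑ j, β j) * γ x, fun x => mul_nonneg h.le (g0 x), ?_⟩
      simp only [mul_smul]
      rw [← Finset.smul_sum, g3, smul_smul, mul_inv_cancel₀ h.ne', one_smul]
  have hvX : ∀ x : X, ∃ e : E3, dt e (x : E3) = 1 ∧ ∀ y : X, y ≠ x → dt e (y : E3) < 1 := by
    intro x
    have hnot : (x : E3) ∉ convexHull ℝ (X \ {(x : E3)}) := by
      intro h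
      have h2 := (hQconv.mem_extremePoints_iff_convex_sdiff.1 x.2).2
      have : convexHull ℝ (X \ {(x : E3)}) ⊆ Q \ {(x : E3)} :=
        convexHull_min (fun z hz => ⟨hz.1.1, hz.2⟩) h2
      exact (this h).2 rfl
    obtain ⟨f, s, hf1, hf2⟩ := geometric_hahn_banach_closed_point (convex_convexHull ℝ _)
      ((hXf.subset Set.sdiff_subset).isClosed_convexHull ℝ) hnot
    obtain ⟨g, hg⟩ := exists_dtL (f : E3 →ₗ[ℝ] ℝ)
    obtain ⟨e, e1, e2⟩ := vtx_norm (fun y : X => (y : E3)) Finset.univ (fun y => by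
        obtain ⟨α, a0, a1⟩ := hcX y
        exact ⟨α, a0, fun j hj => absurd (Finset.mem_univ j) hj, a1⟩) x g (fun y _ hy => by
        rw [← hg, ← hg]
        exact (hf1 y (subset_convexHull ℝ _ ⟨y.2, fun h => hy (Subtype.ext h)⟩)).trans hf2)
    exact ⟨e, e1, fun y hy => e2 y (Finset.mem_univ y) hy⟩
  obtain ⟨T, hT⟩ := tri_lem (fun y : X => (y : E3)) hcX hvX
  have hrep : ∀ x : X, ∃ α : J → ℝ, (∀ j, 0 ≤ α j) ∧ (∀ j, j ∉ F → α j = 0) ∧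
      ∑ j, α j = 1 ∧ ∑ j, α j • q j = φ x := fun x => (hull_iff q F (φ x)).1 x.2.1
  choose A a0 a1 a2 a3 using hrep
  have hex : ∀ x : X, ∃ f : E3, ∀ z, (∑ i, A x i • w i) (φ z) = dt f z :=
    fun x => exists_dtL ((∑ i, A x i • w i).comp φ)
  choose w3 hw3 using hex
  have hbase := hT.base w3 (by
    intro t ht x hx y hy
    obtain ⟨n, n1, n2⟩ := hT.nrm t ht
    have nQ : ∀ z ∈ Q, dt n z ≤ 1 := by
      have hcv : Convex ℝ {z : E3 | dt n z ≤ 1} := by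
        have := convex_halfSpace_le (𝕜 := ℝ) (f := dtL n) (dtL n).isLinear 1
        exact this
      rw [← hQX]
      exact fun z hz => convexHull_min (fun z hz => n2 ⟨z, hz⟩ (Finset.mem_univ _)) hcv hz
    obtain ⟨k, k1, k2, β, b0, b1, b2⟩ := ext_sub q F W hqW hcone (φ (x + y)) (hφW _)
    set G := F.filter (fun i => k (q i) = 1) with hG
    have hGF : G ⊆ F := Finset.filter_subset _ _
    have b1F : ∀ j, j ∉ F → β j = 0 := fun j hj => b1 j (fun h => hj (hGF h))
    have nxy : dt n ((x : E3) + y) = 2 := by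
      rw [dt_add_r, n1 x hx, n1 y hy]; norm_num
    have hpos : 0 < ∑ j, β j := by
      rcases (Finset.sum_nonneg fun j (_ : j ∈ Finset.univ) => b0 j).eq_or_lt with h | h
      · exfalso
        have z := (Finset.sum_eq_zero_iff_of_nonneg (fun x _ => b0 x)).1 h.symm
        have : φ ((x : E3) + y) = φ 0 := by
          rw [← b2, map_zero]
          exact Finset.sum_eq_zero fun j hj => by rw [z j hj, zero_smul]
        rw [hinj this, dt_zero_r] at nxy
        norm_num at nxy
      · exact h
    have hge : 2 ≤ ∑ j, β j := by
      have := nQ _ (hmass _ β b0 b1F b2 hpos)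
      rw [dt_smul_r, nxy, inv_mul_le_iff₀ hpos, mul_one] at this
      exact this
    have ksum : ∀ α : J → ℝ, k (∑ j, α j • q j) = ∑ j, α j * k (q j) := by
      intro α
      rw [map_sum]; exact Finset.sum_congr rfl fun j _ => by rw [map_smul, smul_eq_mul]
    have kβ : k (φ (x + y)) = ∑ j, β j := by
      rw [← b2, ksum]
      refine Finset.sum_congr rfl fun j _ => ?_
      by_cases hj : j ∈ G
      · rw [(Finset.mem_filter.1 hj).2, mul_one]
      · rw [b1 j hj, zero_mul]
    have le : ∀ z : X, ∀ j ∈ Finset.univ, A z j * k (q j) ≤ A z j := by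
      intro z j _
      by_cases hj : j ∈ F
      · have := mul_le_mul_of_nonneg_left (k1 j hj) (a0 z j)
        rwa [mul_one] at this
      · rw [a1 z j hj, zero_mul]
    have kle : ∀ z : X, k (φ z) ≤ 1 := by
      intro z
      rw [← a3 z, ksum, ← a2 z]
      exact Finset.sum_le_sum (le z)
    have ksupp : ∀ z : X, k (φ z) = 1 → ∀ j, j ∉ G → A z j = 0 := by
      intro z hz j hj
      rw [← a3 z, ksum, ← a2 z] at hz
      have := (Finset.sum_eq_sum_iff_of_le (le z)).1 hz j (Finset.mem_univ j)
      by_cases hjF : j ∈ F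
      · by_contra hb
        exact hj (Finset.mem_filter.2 ⟨hjF, mul_left_cancel₀ hb (by rw [this, mul_one])⟩)
      · exact a1 z j hjF
    rw [map_add, map_add] at kβ
    have kx : k (φ x) = 1 := by linarith [kle x, kle y]
    have ky : k (φ y) = 1 := by linarith [kle x, kle y]
    have hGface : FaceSet p G := facet_face p F hF k c k1
    have hGdim := facet_dim p G k c W (fun i hi => (Finset.mem_filter.1 hi).2) k2 hW0
    have hGgood := ih G hGface (by omega)
    have := bilin_zero p w G hGgood (fun i => A x i - A y i)
      (fun i hi => by rw [ksupp x kx i hi, ksupp y ky i hi, sub_zero])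
      (by rw [Finset.sum_sub_distrib, a2, a2, sub_self]) c
    have hww : ∑ i, (A x i - A y i) • w i = ∑ i, A x i • w i - ∑ i, A y i • w i := by
      rw [← Finset.sum_sub_distrib]; exact Finset.sum_congr rfl fun i _ => by ext z; simp [sub_mul]
    have hqq : ∑ i, (A x i - A y i) • (p i - c)
        = ∑ i, A x i • (p i - c) - ∑ i, A y i • (p i - c) := by
      rw [← Finset.sum_sub_distrib]; exact Finset.sum_congr rfl fun i _ => sub_smul _ _ _
    rw [hww, hqq] at this
    have e1 := a3 x
    have e2 := a3 y
    simp only [hq] at e1 e2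
    rw [e1, e2, ← map_sub, LinearMap.sub_apply, hw3, hw3, ← dt_sub_l] at this
    exact this)
  have hvert : ∀ (u : J) (a : E3), u ∈ F → φ a = q u → ∃ h : a ∈ X, A ⟨a, h⟩ = Pi.single u 1 := by
    intro u a hu ha
    obtain ⟨l, hl⟩ := hv u
    have hl' : ∀ j, j ≠ u → l (q j) < l (q u) := by
      intro j hj
      simp only [hq, map_sub]
      linarith [hl j hj]
    have hQl : ∀ z ∈ Q, l (φ z) ≤ l (q u) ∧ (l (q u) ≤ l (φ z) → z = a) := by
      intro z hz
      obtain ⟨α, α0, α1, α2, α3⟩ := (hull_iff q F (φ z)).1 hz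
      have := rep_vertex q F l u hl' α α0 α2
      rw [α3] at this
      refine ⟨this.1, fun h => ?_⟩
      have hα := this.2 h
      apply hinj
      rw [ha, ← α3, hα, Finset.sum_eq_single u]
      · simp
      · intro b _ hb; simp [hb]
      · simp
    have haX : a ∈ X := by
      rw [hX, mem_extremePoints]
      refine ⟨?_, ?_⟩
      · rw [hQ, Set.mem_preimage, ha]; exact subset_convexHull ℝ _ ⟨u, hu, rfl⟩
      · rintro x hx y hy ⟨s, t, hs, ht, hst, e⟩
        have e1 : l (q u) = s * l (φ x) + t * l (φ y) := by
          rw [← ha, ← e]; simp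
        have hx1 := hQl x hx
        have hy1 := hQl y hy
        constructor
        · apply hx1.2
          by_contra h; push Not at h
          have g1 := mul_lt_mul_of_pos_left h hs
          have g2 := mul_le_mul_of_nonneg_left hy1.1 ht.le
          have : l (q u) = s * l (q u) + t * l (q u) := by rw [← add_mul, hst, one_mul]
          linarith
        · apply hy1.2
          by_contra h; push Not at h
          have g1 := mul_lt_mul_of_pos_left h ht
          have g2 := mul_le_mul_of_nonneg_left hx1.1 hs.le
          have : l (q u) = s * l (q u) + t * l (q u) := by rw [← add_mul, hst, one_mul]
          linarith
    refine ⟨haX, ?_⟩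
    have := rep_vertex q F l u hl' (A ⟨a, haX⟩) (a0 _) (a2 _)
    apply this.2
    rw [a3, ha]
  obtain ⟨hau, Au⟩ := hvert u a hu ha
  obtain ⟨hbv, Av⟩ := hvert v b hvF hb
  have fin := hbase ⟨a, hau⟩ (Finset.mem_univ _) ⟨b, hbv⟩ (Finset.mem_univ _)
  have sing : ∀ u : J, ∑ i, (Pi.single u 1 : J → ℝ) i • w i = w u := by
    intro u
    rw [Finset.sum_eq_single u]
    · simp
    · intro b _ hb; simp [hb]
    · simp
  rw [dt_sub_l, ← hw3, ← hw3, Au, Av, sing, sing, ← LinearMap.sub_apply] at fin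
  simp only [map_sub, ha, hb] at fin ⊢
  simp only [LinearMap.sub_apply, map_sub] at fin ⊢
  linarith

theorem ind (p : J → E) (w : J → E →ₗ[ℝ] ℝ)
    (hv : ∀ i, ∃ l : E →ₗ[ℝ] ℝ, ∀ j, j ≠ i → l (p j) < l (p i))
    (τ : Finset J → Finset (Finset J))
    (hτ : ∀ G, FaceSet p G → Module.finrank ℝ (vectorSpan ℝ (p '' (G : Set J))) = 2 →
      TriW p G (τ G) ∧ ∀ t ∈ τ G, ∀ u ∈ t, ∀ v ∈ t, (w u - w v) (p u - p v) = 0)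
    (N : ℕ) (hN : 3 ≤ N) : ∀ F, FaceSet p F →
    Module.finrank ℝ (vectorSpan ℝ (p '' (F : Set J))) = N →
    ∀ u ∈ F, ∀ v ∈ F, (w u - w v) (p u - p v) = 0 := by
  induction N, hN using Nat.le_induction with
  | base => intro F hF h; exact base3 p w F hF hv τ hτ h
  | succ N hN ih => intro F hF h; exact step p w F hF hv N hN h ih

end IndSec3

set_option linter.unusedSectionVars false

lemma skew_ext {d : ℕ} {J : Type*} (e z : J → Fin d → ℝ) (hs : Submodule.span ℝ (Set.range e) = ⊤)
    (h : ∀ u v, z u ⬝ᵥ e v = - (e u ⬝ᵥ z v)) :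
    ∃ S : (Fin d → ℝ) →ₗ[ℝ] (Fin d → ℝ), (∀ x y, S x ⬝ᵥ y = - (x ⬝ᵥ S y)) ∧ ∀ u, S (e u) = z u := by
  let b := Module.Basis.ofSpan hs.ge
  have hb : ∀ i, ∃ k, e k = b i := fun i => Module.Basis.ofSpan_subset hs.ge ⟨i, rfl⟩
  choose k hk using hb
  let S := b.constr ℝ (fun i => z (k i))
  have hS : ∀ i, S (b i) = z (k i) := fun i => b.constr_basis ℝ _ i
  have ind1 : ∀ (C : (Fin d → ℝ) → Prop), C 0 → (∀ i, C (b i)) → (∀ x y, C x → C y → C (x + y)) →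
      (∀ (a : ℝ) x, C x → C (a • x)) → ∀ x, C x := by
    intro C h0 h1 h2 h3 x
    have hx : x ∈ Submodule.span ℝ (Set.range b) := by rw [b.span_eq]; trivial
    induction hx using Submodule.span_induction with
    | mem x hx => obtain ⟨i, rfl⟩ := hx; exact h1 i
    | zero => exact h0
    | add x y _ _ hx hy => exact h2 x y hx hy
    | smul a x _ hx => exact h3 a x hx
  have s1 : ∀ u x, S x ⬝ᵥ e u = - (x ⬝ᵥ z u) := by
    intro u
    apply ind1
    · simp
    · intro i; rw [hS, h, hk]
    · intro x y hx hy; rw [map_add, add_dotProduct, add_dotProduct, hx, hy]; ring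
    · intro a x hx; rw [map_smul, smul_dotProduct, smul_dotProduct, hx, smul_neg]
  have s2 : ∀ x y, S x ⬝ᵥ y = - (x ⬝ᵥ S y) := by
    intro x
    apply ind1
    · simp
    · intro i; rw [hS, ← hk, s1]
    · intro y y' hx hy; rw [map_add, dotProduct_add, dotProduct_add, hx, hy]; ring
    · intro a y hx; rw [map_smul, dotProduct_smul, dotProduct_smul, hx, smul_neg]
  refine ⟨S, s2, fun u => ?_⟩
  have : ∀ y, (S (e u) - z u) ⬝ᵥ y = 0 := by
    apply ind1
    · simp
    · intro i; rw [← hk, sub_dotProduct, s1, h]; ring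
    · intro x y hx hy; rw [dotProduct_add, hx, hy]; ring
    · intro a x hx; rw [dotProduct_smul, hx, smul_zero]
  exact sub_eq_zero.1 (dotProduct_self_eq_zero.1 (this _))

section Trans
variable {E : Type*} [NormedAddCommGroup E] [NormedSpace ℝ E] [FiniteDimensional ℝ E]

lemma exists_vertices (S : Finset E) : ∃ V : Finset E, convexHull ℝ (V : Set E) = convexHull ℝ (S : Set E) ∧
    ∀ v ∈ V, v ∉ convexHull ℝ ((V.erase v : Finset E) : Set E) := by
  induction S using Finset.strongInduction with
  | H S ih =>
    by_cases h : ∃ v ∈ S, v ∈ convexHull ℝ ((S.erase v : Finset E) : Set E)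
    · obtain ⟨v, hv, hc⟩ := h
      obtain ⟨V, h1, h2⟩ := ih (S.erase v) (Finset.erase_ssubset hv)
      refine ⟨V, h1.trans ?_, h2⟩
      apply Set.Subset.antisymm
      · exact convexHull_mono (by exact_mod_cast Finset.erase_subset v S)
      · apply convexHull_min _ (convex_convexHull ℝ _)
        intro x hx
        by_cases e : x = v
        · rw [e]; exact hc
        · exact subset_convexHull ℝ _ (by exact_mod_cast Finset.mem_erase.2 ⟨e, hx⟩)
    · push Not at h
      exact ⟨S, rfl, h⟩

lemma vertex_exposed (V : Finset E) (h : ∀ v ∈ V, v ∉ convexHull ℝ ((V.erase v : Finset E) : Set E))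
    (i : V) : ∃ l : E →ₗ[ℝ] ℝ, ∀ j : V, j ≠ i → l (j : E) < l (i : E) := by
  obtain ⟨f, s, hf1, hf2⟩ := geometric_hahn_banach_closed_point (convex_convexHull ℝ _)
    ((Finset.finite_toSet (V.erase i)).isClosed_convexHull ℝ) (h i i.2)
  refine ⟨f, fun j hj => (hf1 j (subset_convexHull ℝ _ ?_)).trans hf2⟩
  exact_mod_cast Finset.mem_erase.2 ⟨fun e => hj (Subtype.ext e), j.2⟩

lemma face_l {P F : Set E} (h : IsFace P F) (hne : F.Nonempty) :
    ∃ l : E →ₗ[ℝ] ℝ, F = {x | x ∈ P ∧ ∀ y ∈ P, l y ≤ l x} := by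
  rcases h with rfl | rfl | h
  · exact ⟨0, by ext; simp⟩
  · exact absurd hne Set.not_nonempty_empty
  · exact h

lemma vertex_mem {A : Set E} {v : E} (h : IsFace (convexHull ℝ A) {v}) : v ∈ A := by
  obtain ⟨l, hl⟩ := face_l h (Set.singleton_nonempty v)
  by_contra hv
  have hvm : v ∈ {x | x ∈ convexHull ℝ A ∧ ∀ y ∈ convexHull ℝ A, l y ≤ l x} := hl ▸ rfl
  have hlt : ∀ x ∈ A, l x < l v := by
    intro x hx
    by_contra hb
    push Not at hb
    have : x ∈ ({v} : Set E) := by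
      rw [hl]
      exact ⟨subset_convexHull ℝ _ hx, fun y hy => (hvm.2 y hy).trans hb⟩
    exact hv ((Set.mem_singleton_iff.1 this) ▸ hx)
  have hc : Convex ℝ {x | l x < l v} := convex_halfSpace_lt l.isLinear _
  have hsub : A ⊆ {x | l x < l v} := hlt
  have hfin : v ∈ {x | l x < l v} := convexHull_min hsub hc hvm.1
  exact lt_irrefl (l v) hfin

variable {J : Type*} [Fintype J]

lemma faceSet_face (p : J → E) (F : Finset J) (hF : FaceSet p F) (hne : F.Nonempty) :
    IsFace (convexHull ℝ (Set.range p)) (convexHull ℝ (p '' (F : Set J))) := by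
  obtain ⟨l, c, h1, h2⟩ := hF
  have hle : ∀ y ∈ convexHull ℝ (Set.range p), l y ≤ c := by
    intro y hy
    exact convexHull_min (t := {x | l x ≤ c}) (by rintro _ ⟨i, rfl⟩; exact h1 i)
      (convex_halfSpace_le l.isLinear _) hy
  right; right
  refine ⟨l, Set.Subset.antisymm ?_ ?_⟩
  · intro x hx
    refine ⟨convexHull_mono (Set.image_subset_range _ _) hx, ?_⟩
    have : l x = c := convexHull_min (t := {x | l x = c})
      (by rintro _ ⟨i, hi, rfl⟩; exact (h2 i).1 hi) (convex_hyperplane l.isLinear _) hx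
    rw [this]; exact hle
  · rintro x ⟨hx, hm⟩
    obtain ⟨i, hi⟩ := hne
    have hxc : l x = c := le_antisymm (hle x hx)
      ((h2 i).1 hi ▸ hm _ (subset_convexHull ℝ _ ⟨i, rfl⟩))
    rw [← Set.image_univ, ← Finset.coe_univ, hull_iff] at hx
    obtain ⟨α, a0, -, a2, a3⟩ := hx
    rw [hull_iff]
    refine ⟨α, a0, ?_, a2, a3⟩
    have e : ∑ j, α j * l (p j) = ∑ j, α j * c := by
      rw [← Finset.sum_mul, a2, one_mul, ← hxc, ← a3, map_sum]
      exact Finset.sum_congr rfl fun j _ => by rw [map_smul, smul_eq_mul]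
    have := (Finset.sum_eq_sum_iff_of_le
      (fun j _ => mul_le_mul_of_nonneg_left (h1 j) (a0 j))).1 e
    intro j hj
    by_contra hb
    exact hj ((h2 j).2 (mul_left_cancel₀ hb (this j (Finset.mem_univ j))))

lemma aff_uniq (p : J → E) (hp : Function.Injective p) (t : Finset E)
    (hA : AffineIndependent ℝ (fun x : (t : Set E) => (x : E))) (t1 : Finset J)
    (ht1 : ∀ j ∈ t1, p j ∈ t) (α β : J → ℝ) (ha : ∀ j, j ∉ t1 → α j = 0)
    (hb : ∀ j, j ∉ t1 → β j = 0) (sa : ∑ j, α j = 1) (sb : ∑ j, β j = 1)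
    (h : ∑ j, α j • p j = ∑ j, β j • p j) : α = β := by
  let f : t1 ↪ (t : Set E) := ⟨fun j : t1 => ⟨p j, ht1 j j.2⟩, fun a b hab => by
      apply Subtype.ext; apply hp; exact congrArg Subtype.val hab⟩
  have hA2 : AffineIndependent ℝ (fun j : t1 => p j) := hA.comp_embedding f
  rw [affineIndependent_iff] at hA2
  have key := hA2 Finset.univ (fun j => α j - β j) ?_ ?_
  · ext j
    by_cases hj : j ∈ t1
    · exact sub_eq_zero.1 (key ⟨j, hj⟩ (Finset.mem_univ _))
    · rw [ha j hj, hb j hj]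
  · have : ∑ j : t1, (α j - β j) = ∑ j ∈ t1, (α j - β j) := Finset.sum_coe_sort t1 (fun j => α j - β j)
    rw [this, Finset.sum_subset (Finset.subset_univ t1) (fun j _ hj => by rw [ha j hj, hb j hj, sub_zero]),
      Finset.sum_sub_distrib, sa, sb, sub_self]
  · have : ∑ j : t1, (α j - β j) • p j = ∑ j ∈ t1, (α j - β j) • p j :=
      Finset.sum_coe_sort t1 (fun j => (α j - β j) • p j)
    rw [this, Finset.sum_subset (Finset.subset_univ t1)
      (fun j _ hj => by rw [ha j hj, hb j hj, sub_zero, zero_smul])]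
    simp only [sub_smul]
    rw [Finset.sum_sub_distrib, h, sub_self]

end Trans

/-- pull back a set of triangles to index sets -/
noncomputable def pullT {d : ℕ} {J : Type*} [Fintype J] (p : J → Fin d → ℝ)
    (T : Finset (Finset (Fin d → ℝ))) : Finset (Finset J) :=
  T.image fun t => Finset.univ.filter fun j => p j ∈ t

lemma mem_pullT {d : ℕ} {J : Type*} [Fintype J] {p : J → Fin d → ℝ}
    {T : Finset (Finset (Fin d → ℝ))} {s : Finset J} (h : s ∈ pullT p T) :
    ∃ t ∈ T, ∀ j, j ∈ s ↔ p j ∈ t := by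
  obtain ⟨t, ht, rfl⟩ := Finset.mem_image.1 h
  exact ⟨t, ht, fun j => by simp⟩

lemma tri_trans {d : ℕ} {J : Type*} [Fintype J] (p : J → Fin d → ℝ) (hp : Function.Injective p)
    (G : Finset J) (T : Finset (Finset (Fin d → ℝ)))
    (hT : IsTriangulation (convexHull ℝ (p '' (G : Set J))) T) :
    TriW p G (pullT p T) := by
  unfold pullT
  obtain ⟨h1, h2, h3⟩ := hT
  have hmem : ∀ t ∈ T, ∀ v ∈ t, ∃ j ∈ G, p j = v := fun t ht v hv => by
    have := vertex_mem ((h1 t ht).2.1 v hv)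
    obtain ⟨j, hj, e⟩ := this
    exact ⟨j, hj, e⟩
  have himg : ∀ t ∈ T, p '' ((Finset.univ.filter fun j => p j ∈ t : Finset J) : Set J) = t := by
    intro t ht
    ext v
    constructor
    · rintro ⟨j, hj, rfl⟩; simpa using hj
    · intro hv
      obtain ⟨j, _, rfl⟩ := hmem t ht v hv
      exact ⟨j, by simpa using hv, rfl⟩
  refine ⟨?_, ?_, ?_, ?_⟩
  · intro s hs
    obtain ⟨t, ht, rfl⟩ := Finset.mem_image.1 hs
    intro j hj
    obtain ⟨i, hi, e⟩ := hmem t ht (p j) (by simpa using hj)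
    exact hp e ▸ hi
  · intro s hs
    obtain ⟨t, ht, rfl⟩ := Finset.mem_image.1 hs
    rw [← (h1 t ht).1, ← Finset.card_image_of_injective _ hp]
    congr 1
    apply Finset.coe_injective
    rw [Finset.coe_image, himg t ht]
  · intro β b0 b1 b2
    have hx : ∑ x, β x • p x ∈ convexHull ℝ (p '' (G : Set J)) :=
      (hull_iff p G _).2 ⟨β, b0, b1, b2, rfl⟩
    rw [← h2] at hx
    obtain ⟨t, ht, hx⟩ := Set.mem_iUnion₂.1 hx
    rw [← himg t ht, hull_iff] at hx
    exact ⟨_, Finset.mem_image_of_mem _ ht, hx⟩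
  · intro s hs s' hs' α β a0 b0 a1 b1 a2 b2 e
    obtain ⟨t, ht, rfl⟩ := Finset.mem_image.1 hs
    obtain ⟨t', ht', rfl⟩ := Finset.mem_image.1 hs'
    have hx : ∑ x, α x • p x ∈ convexHull ℝ (t : Set (Fin d → ℝ)) ∩ convexHull ℝ (t' : Set (Fin d → ℝ)) := by
      constructor
      · rw [← himg t ht, hull_iff]; exact ⟨α, a0, a1, a2, rfl⟩
      · rw [e, ← himg t' ht', hull_iff]; exact ⟨β, b0, b1, b2, rfl⟩
    have himg2 : p '' ((Finset.univ.filter fun j => p j ∈ t ∩ t' : Finset J) : Set J)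
        = ((t ∩ t' : Finset (Fin d → ℝ)) : Set (Fin d → ℝ)) := by
      ext v
      constructor
      · rintro ⟨j, hj, rfl⟩; simpa using hj
      · intro hv
        obtain ⟨j, _, rfl⟩ := hmem t ht v (Finset.mem_of_mem_inter_left (by exact_mod_cast hv))
        exact ⟨j, by simpa using hv, rfl⟩
    rw [h3 t ht t' ht', ← himg2, hull_iff] at hx
    obtain ⟨γ, g0, g1, g2, g3⟩ := hx
    have ea : γ = α := aff_uniq p hp t (h1 t ht).2.2 _ (fun j hj => by simpa using hj) γ α
      (fun j hj => g1 j (by simp at hj ⊢; tauto)) a1 g2 a2 g3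
    have eb : γ = β := aff_uniq p hp t' (h1 t' ht').2.2 _ (fun j hj => by simpa using hj) γ β
      (fun j hj => g1 j (by simp at hj ⊢; tauto)) b1 g2 b2 (g3.trans e)
    rw [← ea, eb]

lemma pdim_hull {d : ℕ} (A : Set (Fin d → ℝ)) (hA : A.Nonempty) :
    pdim (convexHull ℝ A) = (Module.finrank ℝ (vectorSpan ℝ A) : ℤ) := by
  unfold pdim
  rw [if_neg (by simpa using hA.ne_empty), affineSpan_convexHull, direction_affineSpan]


/-- Infinitesimal rigidity of polytope frameworks (Alexandrov, Whiteley): if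
`P` is a `d`-polytope in `ℝ^d` (`d ≥ 3`), `E` consists of the edges of `P`
together with the diagonals of chosen triangulations of its 2-faces, and
`w : V(P) → ℝ^d` satisfies `⟨w(u) - w(v), u - v⟩ = 0` for all `{u,v} ∈ E`,
then `w` is the restriction of an infinitesimal rigid motion
`x ↦ S x + b` with `S` skew-symmetric. -/
theorem infinitesimal_rigidity (d : ℕ) (hd : 3 ≤ d) (P : Set (Fin d → ℝ))
    (hP : IsPolytope P) (hdim : pdim P = (d : ℤ))
    (T : Set (Fin d → ℝ) → Finset (Finset (Fin d → ℝ)))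
    (hT : ∀ G : Set (Fin d → ℝ), IsFace P G → pdim G = 2 → IsTriangulation G (T G))
    (w : (Fin d → ℝ) → (Fin d → ℝ))
    (hw : ∀ u v : Fin d → ℝ, FrameEdge P T u v →
      ∑ j, (w u j - w v j) * (u j - v j) = 0) :
    ∃ (S : (Fin d → ℝ) →ₗ[ℝ] (Fin d → ℝ)) (b : Fin d → ℝ),
      (∀ x y : Fin d → ℝ, ∑ j, S x j * y j = - ∑ j, x j * S y j) ∧
      ∀ v : Fin d → ℝ, IsFace P {v} → w v = S v + b := by
  obtain ⟨S₀, hS₀⟩ := hP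
  obtain ⟨V, hV, hVx⟩ := exists_vertices S₀
  have hPV : P = convexHull ℝ (V : Set (Fin d → ℝ)) := hS₀.trans hV.symm
  let p : V → Fin d → ℝ := Subtype.val
  have hrange : Set.range p = (V : Set (Fin d → ℝ)) := Subtype.range_coe
  have hPr : P = convexHull ℝ (Set.range p) := by rw [hrange]; exact hPV
  have hpi : Function.Injective p := Subtype.val_injective
  have hv := vertex_exposed V hVx
  let L : (Fin d → ℝ) → (Fin d → ℝ) →ₗ[ℝ] ℝ := fun a =>
    { toFun := fun x => a ⬝ᵥ x
      map_add' := fun x y => dotProduct_add _ _ _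
      map_smul' := fun c x => dotProduct_smul _ _ _ }
  have hL : ∀ a x, L a x = a ⬝ᵥ x := fun a x => rfl
  have hVne : (V : Set (Fin d → ℝ)).Nonempty := by
    rw [Set.nonempty_iff_ne_empty]
    intro h
    rw [hPV, h, convexHull_empty, pdim, if_pos rfl] at hdim
    omega
  have hvs : Module.finrank ℝ (vectorSpan ℝ (V : Set (Fin d → ℝ))) = d := by
    rw [hPV, pdim_hull _ hVne] at hdim
    exact_mod_cast hdim
  have hall := ind p (fun i => L (w (p i))) hv
    (fun G => pullT p (T (convexHull ℝ (p '' (G : Set V)))))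
    (by
      intro G hG hG2
      have hne : G.Nonempty := by
        rw [Finset.nonempty_iff_ne_empty]
        rintro rfl
        rw [Finset.coe_empty, Set.image_empty, vectorSpan_empty, finrank_bot] at hG2
        omega
      have hf : IsFace P (convexHull ℝ (p '' (G : Set V))) := by
        rw [hPr]; exact faceSet_face p G hG hne
      have hd2 : pdim (convexHull ℝ (p '' (G : Set V))) = 2 := by
        rw [pdim_hull _ (by simpa using hne), hG2]; rfl
      refine ⟨tri_trans p hpi G _ (hT _ hf hd2), ?_⟩
      intro s hs u hu v hv
      obtain ⟨t, ht, hst⟩ := mem_pullT hs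
      rw [hst] at hu hv
      by_cases huv : u = v
      · rw [huv, sub_self, LinearMap.zero_apply]
      · have := hw (p u) (p v) ⟨fun h => huv (hpi h), Or.inr ⟨_, hf, hd2, t, ht,
          hu, hv⟩⟩
        rw [LinearMap.sub_apply, hL, hL, ← sub_dotProduct]
        exact this) d hd Finset.univ ⟨0, 0, fun _ => le_rfl, fun _ => by simp⟩
    (by rw [Finset.coe_univ, Set.image_univ, hrange]; exact hvs)
  obtain ⟨v0, hv0⟩ := hVne
  let o : V := ⟨v0, hv0⟩
  have good : ∀ u v : V, (w (p u) - w (p v)) ⬝ᵥ (p u - p v) = 0 := by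
    intro u v
    have := hall u (Finset.mem_univ _) v (Finset.mem_univ _)
    rw [LinearMap.sub_apply, hL, hL, ← sub_dotProduct] at this
    exact this
  have hspan : Submodule.span ℝ (Set.range fun u : V => p u - p o) = ⊤ := by
    apply Submodule.eq_top_of_finrank_eq
    rw [Module.finrank_fin_fun]
    rw [vectorSpan_eq_span_vsub_set_right ℝ (show p o ∈ (V : Set (Fin d → ℝ)) from hv0)] at hvs
    rw [← hrange, ← Set.range_comp] at hvs
    exact hvs
  obtain ⟨S, s1, s2⟩ := skew_ext (fun u : V => p u - p o) (fun u : V => w (p u) - w (p o)) hspan (by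
    intro u v
    have g1 := good u o
    have g2 := good v o
    have g3 := good u v
    simp only [sub_dotProduct, dotProduct_sub] at g1 g2 g3 ⊢
    rw [dotProduct_comm (p u) (w (p v)), dotProduct_comm (p o) (w (p v)),
      dotProduct_comm (p u) (w (p o)), dotProduct_comm (p o) (w (p o))]
    linarith)
  refine ⟨S, w v0 - S v0, s1, fun v hvf => ?_⟩
  rw [hPV] at hvf
  have := s2 ⟨v, vertex_mem hvf⟩
  rw [map_sub] at this
  have e : S v - S v0 = w v - w v0 := this
  rw [add_sub_left_comm, e]
  abel
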